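/- Assume λ₁(0), λ₂(0) are real and nonzero with λ₁(0) ≠ λ₂(0), and that for all ζ in a neighborhood of 0 in ℝ^l there are no resonances of first or second type of any order, i.e., p₁λ₁(ζ) + p₂λ₂(ζ) ≠ 0 for all nonnegative integers p₁, p₂ with p₁ + p₂ ≥ 1, and p₁λ₁(ζ) + p₂λ₂(ζ) ∉ {λ₁(ζ), λ₂(ζ)} for all nonnegative integers p₁, p₂ with p₁ + p₂ ≥ 2. Then there exists a C^∞ function μ defined on a neighborhood of 0 in ℝ^l with μ(0) = λ₁(0)/λ₂(0) such that the germ of V at 0 is C^∞-smoothly orbitally equivalent to the germ at 0 of the vector field ξ̇ = μ(ζ)·ξ, η̇ = η, ζ̇_i = 0 (i = 1, …, l). -/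

import Mathlib

open Filter Topology

/-- Two vector fields `V`, `N` with marked points `x₀`, `y₀` are `C^∞`-smoothly orbitally
equivalent (as germs) if there are open neighborhoods `U ∋ x₀`, `U' ∋ y₀` with `U`
contained in the domain `Dom`, a `C^∞` diffeomorphism `Φ : U → U'` with `Φ x₀ = y₀`, and
a `C^∞` nowhere-vanishing function `h : U → ℝ` with `DΦ(x)·V(x) = h(x)·N(Φ(x))` on `U`. -/
def OrbEquiv {E : Type*} [NormedAddCommGroup E] [NormedSpace ℝ E]
    (Dom : Set E) (V N : E → E) (x₀ y₀ : E) : Prop :=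
  ∃ (U U' : Set E) (Φ Ψ : E → E) (h : E → ℝ),
    IsOpen U ∧ IsOpen U' ∧ x₀ ∈ U ∧ y₀ ∈ U' ∧ U ⊆ Dom ∧
    ContDiffOn ℝ (⊤ : ℕ∞) Φ U ∧ ContDiffOn ℝ (⊤ : ℕ∞) Ψ U' ∧
    Φ x₀ = y₀ ∧ Set.MapsTo Φ U U' ∧ Set.MapsTo Ψ U' U ∧
    (∀ x ∈ U, Ψ (Φ x) = x) ∧ (∀ y ∈ U', Φ (Ψ y) = y) ∧
    ContDiffOn ℝ (⊤ : ℕ∞) h U ∧ (∀ x ∈ U, h x ≠ 0) ∧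
    ∀ x ∈ U, fderiv ℝ Φ x (V x) = h x • N (Φ x)

namespace OrbitalLinearization

open scoped ContDiff

set_option linter.unusedSectionVars false

section Superposition

variable {K : Type} [TopologicalSpace K] [CompactSpace K]
  {A E F : Type} [NormedAddCommGroup A] [NormedSpace ℝ A]
  [NormedAddCommGroup E] [NormedSpace ℝ E] [NormedAddCommGroup F] [NormedSpace ℝ F]

/-- Pointwise application of a bilinear map to two continuous curves. -/
noncomputable def pointwiseApply (L : A →L[ℝ] E →L[ℝ] F) :
    C(K, A) →L[ℝ] C(K, E) →L[ℝ] C(K, F) :=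
  LinearMap.mkContinuous₂
    (LinearMap.mk₂ ℝ (fun (a : C(K, A)) (h : C(K, E)) =>
        (⟨fun t => L (a t) (h t), by fun_prop⟩ : C(K, F)))
      (fun _ _ _ => by ext; simp) (fun _ _ _ => by ext; simp)
      (fun _ _ _ => by ext; simp) (fun _ _ _ => by ext; simp)) ‖L‖ (by
    intro a h
    rw [ContinuousMap.norm_le _ (by positivity)]
    intro t
    exact L.le_of_opNorm₂_le_of_le le_rfl (a.norm_coe_le_norm t) (h.norm_coe_le_norm t))

@[simp] lemma pointwiseApply_apply (L : A →L[ℝ] E →L[ℝ] F) (a : C(K, A)) (h : C(K, E)) (t : K) :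
    pointwiseApply L a h t = L (a t) (h t) := rfl

lemma norm_pointwiseApply_le (L : A →L[ℝ] E →L[ℝ] F) :
    ‖(pointwiseApply L : C(K, A) →L[ℝ] C(K, E) →L[ℝ] C(K, F))‖ ≤ ‖L‖ := by
  refine ContinuousLinearMap.opNorm_le_bound₂ _ (norm_nonneg L) fun a h => ?_
  rw [ContinuousMap.norm_le _ (by positivity)]
  intro t
  exact L.le_of_opNorm₂_le_of_le le_rfl (a.norm_coe_le_norm t) (h.norm_coe_le_norm t)

/-- The superposition operator `γ ↦ V ∘ γ` on continuous curves. -/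
def superpose {K E F : Type} [TopologicalSpace K] [TopologicalSpace E] [TopologicalSpace F]
    (V : C(E, F)) (γ : C(K, E)) : C(K, F) := V.comp γ

@[simp] lemma superpose_apply {K E F : Type} [TopologicalSpace K] [TopologicalSpace E]
    [TopologicalSpace F] (V : C(E, F)) (γ : C(K, E)) (t : K) :
    superpose V γ t = V (γ t) := rfl

lemma hasFDerivAt_superpose (L : A →L[ℝ] E →L[ℝ] F) (V : C(E, F)) (V' : C(E, A))
    (hV : ∀ x, HasFDerivAt V (L (V' x)) x) (γ : C(K, E)) :
    HasFDerivAt (superpose V : C(K, E) → C(K, F)) (pointwiseApply L (superpose V' γ)) γ := by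
  rw [hasFDerivAt_iff_isLittleO_nhds_zero, Asymptotics.isLittleO_iff]
  intro ε hε
  set ε' : ℝ := ε / (‖L‖ + 1) with hε'
  have hε'0 : 0 < ε' := by positivity
  have hc : Continuous (superpose V' : C(K, E) → C(K, A)) :=
    ContinuousMap.continuous_postcomp _
  obtain ⟨δ, hδ, hδ'⟩ := Metric.continuousAt_iff.1 (hc.continuousAt (x := γ)) ε' hε'0
  filter_upwards [Metric.ball_mem_nhds (0 : C(K, E)) hδ] with h hh
  rw [ContinuousMap.norm_le _ (by positivity)]
  intro t
  have key : ∀ y ∈ segment ℝ (γ t) (γ t + h t), ‖L (V' y) - L (V' (γ t))‖ ≤ ε := by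
    rw [segment_eq_image']
    rintro _ ⟨s, hs, rfl⟩
    have h1 : dist (γ + s • h) γ < δ := by
      rw [dist_eq_norm, add_sub_cancel_left, norm_smul]
      rw [mem_ball_zero_iff] at hh
      refine lt_of_le_of_lt ?_ hh
      rw [Real.norm_of_nonneg hs.1]
      exact mul_le_of_le_one_left (norm_nonneg _) hs.2
    have h2 := (ContinuousMap.dist_lt_iff hε'0).1 (hδ' h1) t
    rw [dist_eq_norm] at h2
    simp only [superpose_apply, ContinuousMap.add_apply, ContinuousMap.smul_apply] at h2
    rw [← map_sub, add_sub_cancel_left]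
    refine (L.le_opNorm _).trans ?_
    calc ‖L‖ * _ ≤ (‖L‖ + 1) * ε' := by gcongr; linarith
      _ = ε := by rw [hε']; field_simp
  have := (convex_segment (γ t) (γ t + h t)).norm_image_sub_le_of_norm_hasFDerivWithin_le'
    (f := V) (f' := fun y => L (V' y)) (φ := L (V' (γ t))) (C := ε)
    (fun y _ => (hV y).hasFDerivWithinAt) key
    (left_mem_segment ℝ _ _) (right_mem_segment ℝ _ _)
  simp only [add_sub_cancel_left] at this
  exact this.trans (by gcongr; exact h.norm_coe_le_norm t)

lemma fderiv_superpose (L : A →L[ℝ] E →L[ℝ] F) (V : C(E, F)) (V' : C(E, A))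
    (hV : ∀ x, HasFDerivAt V (L (V' x)) x) :
    fderiv ℝ (superpose V : C(K, E) → C(K, F)) = pointwiseApply L ∘ superpose V' :=
  funext fun γ => (hasFDerivAt_superpose L V V' hV γ).fderiv

lemma contDiff_fderiv_superpose {n : ℕ∞ω} (L : A →L[ℝ] E →L[ℝ] F) (V : C(E, F)) (V' : C(E, A))
    (hV : ∀ x, HasFDerivAt V (L (V' x)) x)
    (h : ContDiff ℝ n (superpose V' : C(K, E) → C(K, A))) :
    ContDiff ℝ n (fderiv ℝ (superpose V : C(K, E) → C(K, F))) := by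
  rw [fderiv_superpose L V V' hV]
  exact (pointwiseApply L).contDiff.comp h

lemma norm_iteratedFDeriv_fderiv_superpose_le (n : ℕ) (L : A →L[ℝ] E →L[ℝ] F) (V : C(E, F))
    (V' : C(E, A)) (hV : ∀ x, HasFDerivAt V (L (V' x)) x)
    (h : ContDiff ℝ n (superpose V' : C(K, E) → C(K, A))) (γ : C(K, E)) :
    ‖iteratedFDeriv ℝ n (fderiv ℝ (superpose V : C(K, E) → C(K, F))) γ‖ ≤
      ‖L‖ * ‖iteratedFDeriv ℝ n (superpose V' : C(K, E) → C(K, A)) γ‖ := by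
  rw [fderiv_superpose L V V' hV]
  have h1 := ContinuousLinearMap.norm_iteratedFDeriv_comp_left
    (pointwiseApply (K := K) L) (f := superpose V') (x := γ) (n := n) h.contDiffAt le_rfl
  exact h1.trans (mul_le_mul_of_nonneg_right (norm_pointwiseApply_le L) (norm_nonneg _))

lemma contDiff_superpose_nat (n : ℕ) : ∀ {F : Type} [NormedAddCommGroup F] [NormedSpace ℝ F]
    (V : C(E, F)), ContDiff ℝ n V → ContDiff ℝ n (superpose V : C(K, E) → C(K, F)) := by
  induction n with
  | zero =>
    intro F _ _ V _
    exact contDiff_zero.2 (ContinuousMap.continuous_postcomp _)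
  | succ n ih =>
    intro F _ _ V hV
    have hV1 : ContDiff ℝ 1 V := hV.of_le (by exact_mod_cast Nat.le_add_left 1 n)
    have hd : ∀ x, HasFDerivAt V (ContinuousLinearMap.id ℝ (E →L[ℝ] F) (fderiv ℝ V x)) x :=
      fun x => (hV1.differentiable one_ne_zero x).hasFDerivAt
    push_cast at hV ⊢
    rw [contDiff_succ_iff_fderiv] at hV ⊢
    let V' : C(E, E →L[ℝ] F) := ⟨fderiv ℝ V, hV1.continuous_fderiv one_ne_zero⟩
    refine ⟨fun γ => (hasFDerivAt_superpose _ V V' hd γ).differentiableAt, by simp, ?_⟩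
    exact contDiff_fderiv_superpose _ V V' hd (ih V' hV.2.2)

lemma contDiff_superpose (V : C(E, F)) (hV : ContDiff ℝ ∞ V) :
    ContDiff ℝ ∞ (superpose V : C(K, E) → C(K, F)) :=
  contDiff_infty.2 fun n => contDiff_superpose_nat n V (contDiff_infty.1 hV n)

lemma norm_iteratedFDeriv_superpose_le (n : ℕ) :
    ∀ {F : Type} [NormedAddCommGroup F] [NormedSpace ℝ F]
    (V : C(E, F)) (_ : ContDiff ℝ ∞ V) (γ : C(K, E)) {C : ℝ} (_ : 0 ≤ C)
    (_ : ∀ t, ‖iteratedFDeriv ℝ n V (γ t)‖ ≤ C),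
    ‖iteratedFDeriv ℝ n (superpose V : C(K, E) → C(K, F)) γ‖ ≤ C := by
  induction n with
  | zero =>
    intro F _ _ V hV γ C hC h
    simpa [ContinuousMap.norm_le _ hC] using h
  | succ n ih =>
    intro F _ _ V hV γ C hC h
    have hV1 : ContDiff ℝ 1 V := hV.of_le (by exact_mod_cast le_top)
    have hd : ∀ x, HasFDerivAt V (ContinuousLinearMap.id ℝ (E →L[ℝ] F) (fderiv ℝ V x)) x :=
      fun x => (hV1.differentiable one_ne_zero x).hasFDerivAt
    let V' : C(E, E →L[ℝ] F) := ⟨fderiv ℝ V, hV1.continuous_fderiv one_ne_zero⟩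
    have hV' : ContDiff ℝ ∞ V' := hV.fderiv_right (m := ∞) (by simp)
    rw [← norm_iteratedFDeriv_fderiv]
    refine (norm_iteratedFDeriv_fderiv_superpose_le n _ V V' hd
      (contDiff_superpose_nat n V' (contDiff_infty.1 hV' n)) γ).trans ?_
    have h2 := ih V' hV' γ hC (fun t => by
      have := h t
      rw [← norm_iteratedFDeriv_fderiv] at this
      exact this)
    calc _ ≤ 1 * C := mul_le_mul ContinuousLinearMap.norm_id_le h2 (norm_nonneg _) zero_le_one
      _ = C := one_mul C

end Superposition

section Flow

open unitInterval MeasureTheory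

variable {E F : Type} [NormedAddCommGroup E] [NormedSpace ℝ E] [CompleteSpace E]
  [NormedAddCommGroup F] [NormedSpace ℝ F]

/-- The constant extension to `ℝ` of a curve on the unit interval. -/
noncomputable def extend (γ : C(I, F)) : ℝ → F := Set.IccExtend zero_le_one γ

@[fun_prop] lemma continuous_extend (γ : C(I, F)) : Continuous (extend γ) :=
  γ.continuous.Icc_extend'

lemma extend_coe (γ : C(I, F)) (t : I) : extend γ t = γ t := Set.IccExtend_val _ _ t

lemma extend_of_mem (γ : C(I, F)) {t : ℝ} (ht : t ∈ I) : extend γ t = γ ⟨t, ht⟩ :=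
  Set.IccExtend_of_mem _ _ ht

lemma extend_superpose (V : C(E, F)) (γ : C(I, E)) (t : ℝ) :
    extend (superpose V γ) t = V (extend γ t) := rfl

lemma norm_extend_le (γ : C(I, F)) (t : ℝ) : ‖extend γ t‖ ≤ ‖γ‖ :=
  γ.norm_coe_le_norm _

/-- The primitive vanishing at `0` of a curve on the unit interval. -/
noncomputable def primitive : C(I, E) →L[ℝ] C(I, E) :=
  LinearMap.mkContinuous
    { toFun := fun γ => ⟨fun t => ∫ s in (0 : ℝ)..t, extend γ s,
        (intervalIntegral.continuous_primitive
          (fun a b => (continuous_extend γ).intervalIntegrable a b) 0).comp continuous_subtype_val⟩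
      map_add' := fun γ γ' => by
        ext t
        exact intervalIntegral.integral_add ((continuous_extend γ).intervalIntegrable _ _)
          ((continuous_extend γ').intervalIntegrable _ _)
      map_smul' := fun c γ => by
        ext t
        exact intervalIntegral.integral_smul c (extend γ) } 1 (by
    intro γ
    rw [ContinuousMap.norm_le _ (by positivity)]
    intro t
    refine (intervalIntegral.norm_integral_le_of_norm_le_const
      (fun s _ => norm_extend_le γ s)).trans ?_
    rw [sub_zero, abs_of_nonneg t.2.1, mul_comm]
    exact mul_le_mul_of_nonneg_right t.2.2 (norm_nonneg _))

lemma primitive_apply (γ : C(I, E)) (t : I) :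
    primitive γ t = ∫ s in (0 : ℝ)..t, extend γ s := rfl

lemma norm_primitive_le (γ : C(I, E)) : ‖primitive γ‖ ≤ ‖γ‖ := by
  rw [ContinuousMap.norm_le _ (norm_nonneg _)]
  intro t
  refine (intervalIntegral.norm_integral_le_of_norm_le_const
      (fun s _ => norm_extend_le γ s)).trans ?_
  rw [sub_zero, abs_of_nonneg t.2.1]
  exact mul_le_of_le_one_right (norm_nonneg _) t.2.2

lemma exists_hasFDerivAt_superpose (V : C(E, F)) (hV : ContDiff ℝ ∞ V) (γ : C(I, E)) :
    ∃ T : C(I, E) →L[ℝ] C(I, F), HasFDerivAt (superpose V) T γ ∧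
      ∀ h t, T h t = fderiv ℝ V (γ t) (h t) := by
  have hV1 : ContDiff ℝ 1 V := hV.of_le (by exact_mod_cast le_top)
  have hd : ∀ x, HasFDerivAt V (ContinuousLinearMap.id ℝ (E →L[ℝ] F) (fderiv ℝ V x)) x :=
    fun x => (hV1.differentiable one_ne_zero x).hasFDerivAt
  let V' : C(E, E →L[ℝ] F) := ⟨fderiv ℝ V, hV1.continuous_fderiv one_ne_zero⟩
  exact ⟨_, hasFDerivAt_superpose _ V V' hd γ, fun _ _ => rfl⟩

lemma hasDerivAt_const_add_integral (δ : C(I, E)) (x : E) (t : ℝ) :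
    HasDerivAt (fun t => x + ∫ s in (0 : ℝ)..t, extend δ s) (extend δ t) t :=
  (intervalIntegral.integral_hasDerivAt_right ((continuous_extend δ).intervalIntegrable _ _)
    ((continuous_extend δ).stronglyMeasurableAtFilter _ _) (continuous_extend δ).continuousAt).const_add x

/-- Integral curves on the unit interval of a vector field with small Lipschitz constant, depending
smoothly on the initial point. -/
theorem exists_integralCurves (X : C(E, E)) (hX : ContDiff ℝ ∞ X) (hL : LipschitzWith (1 / 2) X) :
    ∃ P : E → C(I, E), ContDiff ℝ ∞ P ∧
      (∀ x, P x = ContinuousMap.const I x + primitive (superpose X (P x))) ∧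
      (∀ x, fderiv ℝ P x (X x) = superpose X (P x)) ∧
      (∀ x γ, γ = ContinuousMap.const I x + primitive (superpose X γ) → γ = P x) := by
  set Γ : C(I, E) → C(I, E) := fun γ => γ - primitive (superpose X γ) with hΓ
  have happ : ApproximatesLinearOn Γ
      ((ContinuousLinearEquiv.refl ℝ C(I, E) : C(I, E) ≃L[ℝ] C(I, E)) : C(I, E) →L[ℝ] C(I, E))
      Set.univ (1 / 2) := by
    intro γ _ γ' _
    have : Γ γ - Γ γ' - (γ - γ') = - primitive (superpose X γ - superpose X γ') := by
      simp only [hΓ, map_sub]; abel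
    simp only [ContinuousLinearEquiv.coe_refl, ContinuousLinearMap.coe_id', id_eq]
    rw [this, norm_neg]
    refine (norm_primitive_le _).trans ?_
    rw [ContinuousMap.norm_le _ (by positivity)]
    intro t
    rw [ContinuousMap.sub_apply]
    refine (hL.norm_sub_le _ _).trans ?_
    gcongr
    exact (γ - γ').norm_coe_le_norm t
  have hcontr : Subsingleton C(I, E) ∨
      (1 / 2 : NNReal) < ‖((ContinuousLinearEquiv.refl ℝ C(I, E)).symm :
        C(I, E) →L[ℝ] C(I, E))‖₊⁻¹ := by
    rcases subsingleton_or_nontrivial C(I, E) with h | h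
    · exact Or.inl h
    · right
      have : ‖((ContinuousLinearEquiv.refl ℝ C(I, E)).symm : C(I, E) →L[ℝ] C(I, E))‖₊ = 1 := by
        ext
        exact ContinuousLinearMap.norm_id
      rw [this, inv_one]
      exact NNReal.half_lt_self one_ne_zero
  let e : C(I, E) ≃ₜ C(I, E) := happ.toHomeomorph Γ hcontr
  have he : ∀ γ, e γ = Γ γ := fun γ => rfl
  have hder : ∀ γ, ∃ D : C(I, E) ≃L[ℝ] C(I, E), HasFDerivAt Γ (D : C(I, E) →L[ℝ] C(I, E)) γ ∧
      ∀ h k, (∀ t, k t = fderiv ℝ X (γ t) (h t)) → D h = h - primitive k := by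
    intro γ
    obtain ⟨T, hT, hT'⟩ := exists_hasFDerivAt_superpose X hX γ
    have hnorm : ‖primitive.comp T‖ < 1 := by
      refine lt_of_le_of_lt (ContinuousLinearMap.opNorm_le_bound _ (M := 1 / 2) (by norm_num) ?_)
        (by norm_num)
      intro h
      refine (norm_primitive_le _).trans ?_
      rw [ContinuousMap.norm_le _ (by positivity), ]
      intro t
      change ‖T h t‖ ≤ _
      rw [hT']
      refine ContinuousLinearMap.le_of_opNorm_le_of_le _ ?_ (h.norm_coe_le_norm t)
      simpa using norm_fderiv_le_of_lipschitz ℝ hL (x₀ := γ t)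
    let D := ContinuousLinearEquiv.ofUnit (Units.oneSub (primitive.comp T) hnorm)
    have hD : (D : C(I, E) →L[ℝ] C(I, E)) = ContinuousLinearMap.id ℝ _ - primitive.comp T := rfl
    refine ⟨D, ?_, ?_⟩
    · rw [hD]
      have hp : HasFDerivAt (fun γ => primitive (superpose X γ)) (primitive.comp T) γ :=
        ((primitive (E := E)).hasFDerivAt (x := superpose X γ)).comp γ hT
      exact (hasFDerivAt_id γ).sub hp
    · intro h k hk
      have : T h = k := by ext t; rw [hT', hk]
      rw [← this]
      rfl
  choose D hD hD' using hder
  have hΓc : ContDiff ℝ ∞ Γ := contDiff_id.sub (primitive.contDiff.comp (contDiff_superpose X hX))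
  have hsymm : ContDiff ℝ ∞ e.symm := e.contDiff_symm hD hΓc
  let c : E →L[ℝ] C(I, E) := ContinuousLinearMap.const ℝ I
  have hc : ∀ x, c x = ContinuousMap.const I x := fun x => rfl
  have hP : ContDiff ℝ ∞ (fun x => e.symm (c x)) := hsymm.comp c.contDiff
  have hΓP : ∀ x, Γ (e.symm (c x)) = c x := fun x => e.apply_symm_apply _
  have heq : ∀ x, e.symm (c x) =
      ContinuousMap.const I x + primitive (superpose X (e.symm (c x))) := fun x => by
    have := hΓP x
    rw [hΓ, sub_eq_iff_eq_add] at this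
    rwa [← hc]
  refine ⟨fun x => e.symm (c x), hP, heq, fun x => ?_, fun x γ hγ => ?_⟩
  · set γ := e.symm (c x) with hγ
    apply (D γ).injective
    have h1 : (D γ) (fderiv ℝ (fun x => e.symm (c x)) x (X x)) = c (X x) := by
      have h2 : HasFDerivAt (fun x => Γ (e.symm (c x)))
          ((D γ : C(I, E) →L[ℝ] C(I, E)).comp (fderiv ℝ (fun x => e.symm (c x)) x)) x :=
        (hD γ).comp x (hP.differentiable (by simp) x).hasFDerivAt
      have h3 : HasFDerivAt (fun x => Γ (e.symm (c x))) c x := by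
        simp only [hΓP]; exact c.hasFDerivAt
      exact congrArg (fun T : E →L[ℝ] C(I, E) => T (X x)) (h2.unique h3)
    rw [h1]
    have hcont : Continuous fun t : I => fderiv ℝ X (γ t) (X (γ t)) :=
      ((hX.continuous_fderiv (by simp)).comp γ.continuous).clm_apply (by fun_prop)
    rw [hD' γ (superpose X γ) ⟨fun t : I => fderiv ℝ X (γ t) (X (γ t)), hcont⟩ (fun t => rfl),
      eq_sub_iff_add_eq, hc]
    symm
    set δ := superpose X γ with hδ
    have hγu : ∀ t : ℝ, t ∈ I → x + ∫ s in (0 : ℝ)..t, extend δ s = extend γ t := by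
      intro t ht
      have := congrArg (fun f : C(I, E) => f ⟨t, ht⟩) (heq x)
      simp only [ContinuousMap.add_apply, primitive_apply, ContinuousMap.const_apply] at this
      rw [extend_of_mem γ ht]
      exact this.symm
    ext t
    rw [ContinuousMap.add_apply, primitive_apply]
    have hprim := intervalIntegral.integral_eq_sub_of_hasDerivAt (a := 0) (b := (t : ℝ))
      (f := fun t => X (x + ∫ s in (0 : ℝ)..t, extend δ s))
      (f' := extend ⟨fun t : I => fderiv ℝ X (γ t) (X (γ t)), hcont⟩) (fun s hs => by
        rw [Set.uIcc_of_le t.2.1] at hs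
        have hs' : s ∈ I := ⟨hs.1, hs.2.trans t.2.2⟩
        have h4 := ((hX.differentiable (by simp) (x + ∫ s in (0 : ℝ)..s,
          extend δ s)).hasFDerivAt).comp_hasDerivAt s (hasDerivAt_const_add_integral δ x s)
        rw [hγu s hs'] at h4
        rw [extend_of_mem _ hs'] at h4 ⊢
        rw [extend_of_mem _ hs'] at h4
        exact h4) ((continuous_extend _).intervalIntegrable _ _)
    rw [hprim, hγu t t.2]
    simp [extend_coe, hδ]
  · apply e.injective
    rw [Homeomorph.apply_symm_apply, he, hΓ, hc]
    exact sub_eq_iff_eq_add.2 hγ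

end Flow

section DerivativeBounds

variable {E F G : Type} [NormedAddCommGroup E] [NormedSpace ℝ E]
  [NormedAddCommGroup F] [NormedSpace ℝ F] [NormedAddCommGroup G] [NormedSpace ℝ G]

/-- All derivatives of positive order are bounded. -/
def BoundedDerivs (f : E → F) : Prop :=
  ∀ i, 1 ≤ i → ∃ C, ∀ x, ‖iteratedFDeriv ℝ i f x‖ ≤ C

lemma exists_bound_iteratedFDeriv {f : E → F} (hf : ContDiff ℝ ∞ f) (hc : HasCompactSupport f)
    (i : ℕ) : ∃ C, ∀ x, ‖iteratedFDeriv ℝ i f x‖ ≤ C :=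
  (hf.continuous_iteratedFDeriv (by exact_mod_cast le_top)).bounded_above_of_compact_support
    (hc.iteratedFDeriv i)

lemma exists_bound_iteratedFDeriv_le {f : E → F} (hf : ContDiff ℝ ∞ f) (hc : HasCompactSupport f)
    (n : ℕ) : ∃ C, 0 ≤ C ∧ ∀ i ≤ n, ∀ x, ‖iteratedFDeriv ℝ i f x‖ ≤ C := by
  choose C hC using exists_bound_iteratedFDeriv hf hc
  refine ⟨∑ i ∈ Finset.range (n + 1), |C i|, by positivity, fun i hi x => ?_⟩
  refine ((hC i x).trans (le_abs_self _)).trans ?_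
  exact Finset.single_le_sum (f := fun i => |C i|) (fun _ _ => abs_nonneg _)
    (Finset.mem_range.2 (by omega))

lemma boundedDerivs_of_hasCompactSupport_sub {f : E → F} (hf : ContDiff ℝ ∞ f) (A : E →L[ℝ] F)
    (hc : HasCompactSupport (fun x => f x - A x)) : BoundedDerivs f := by
  rintro (_ | k) hk
  · omega
  have hg : ContDiff ℝ ∞ (fun x => f x - A x) := hf.sub A.contDiff
  obtain ⟨C, hC⟩ := exists_bound_iteratedFDeriv hg hc (k + 1)
  have hA : ∃ C', ∀ x, ‖iteratedFDeriv ℝ (k + 1) A x‖ ≤ C' := by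
    have h : fderiv ℝ A = fun _ => A := by ext1 x; exact A.fderiv
    simp_rw [← norm_iteratedFDeriv_fderiv, h]
    rcases k with _ | k
    · exact ⟨‖A‖, fun x => by simp⟩
    · exact ⟨0, fun x => by simp [iteratedFDeriv_succ_const]⟩
  obtain ⟨C', hC'⟩ := hA
  refine ⟨C + C', fun x => ?_⟩
  have : f = (fun x => f x - A x) + A := by ext x; simp
  rw [this, iteratedFDeriv_add (hg.of_le (by exact_mod_cast le_top)) A.contDiff]
  exact (norm_add_le _ _).trans (add_le_add (hC x) (hC' x))

lemma BoundedDerivs.exists_pow_bound {f : E → F} (hf : BoundedDerivs f) (n : ℕ) :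
    ∃ D : ℝ, 1 ≤ D ∧ ∀ i, 1 ≤ i → i ≤ n → ∀ x, ‖iteratedFDeriv ℝ i f x‖ ≤ D ^ i := by
  choose! C hC using hf
  refine ⟨1 + ∑ i ∈ Finset.range (n + 1), |C i|, ?_, fun i hi hin x => ?_⟩
  · have : 0 ≤ ∑ i ∈ Finset.range (n + 1), |C i| := by positivity
    linarith
  · have h0 : 0 ≤ ∑ i ∈ Finset.range (n + 1), |C i| := by positivity
    have h1 : |C i| ≤ ∑ i ∈ Finset.range (n + 1), |C i| :=
      Finset.single_le_sum (f := fun i => |C i|) (fun _ _ => abs_nonneg _)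
        (Finset.mem_range.2 (by omega))
    refine ((hC i hi x).trans (le_abs_self _)).trans ?_
    refine le_trans ?_ (le_self_pow₀ (by linarith) (by omega))
    linarith

lemma BoundedDerivs.exists_comp_bound {f : E → F} (hf : BoundedDerivs f) (hs : ContDiff ℝ ∞ f)
    (n : ℕ) : ∃ K : ℝ, 1 ≤ K ∧ ∀ (g : F → G), ContDiff ℝ ∞ g → ∀ (x : E) (C : ℝ),
      (∀ i ≤ n, ‖iteratedFDeriv ℝ i g (f x)‖ ≤ C) →
      ∀ i ≤ n, ‖iteratedFDeriv ℝ i (g ∘ f) x‖ ≤ K * C := by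
  obtain ⟨D, hD1, hD⟩ := hf.exists_pow_bound n
  have hfac : (1 : ℝ) ≤ n.factorial := by exact_mod_cast n.factorial_pos
  refine ⟨n.factorial * D ^ n, one_le_mul_of_one_le_of_one_le hfac (one_le_pow₀ hD1),
    fun g hg x C hC i hi => ?_⟩
  have hC0 : 0 ≤ C := (norm_nonneg _).trans (hC 0 (Nat.zero_le _))
  refine (norm_iteratedFDeriv_comp_le (N := ∞) hg hs (by exact_mod_cast le_top) x
    (fun j hj => hC j (hj.trans hi)) (fun j hj hji => hD j hj (hji.trans hi) x)).trans ?_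
  have h1 : (i.factorial : ℝ) ≤ n.factorial := by exact_mod_cast Nat.factorial_le hi
  have h2 : D ^ i ≤ D ^ n := pow_le_pow_right₀ hD1 hi
  calc (i.factorial : ℝ) * C * D ^ i ≤ n.factorial * C * D ^ n := by gcongr
    _ = _ := by ring

lemma contDiff_iterate {f : E → E} (hf : ContDiff ℝ ∞ f) (m : ℕ) : ContDiff ℝ ∞ f^[m] := by
  induction m with
  | zero => exact contDiff_id
  | succ m ih => exact ih.comp hf

lemma BoundedDerivs.exists_iterate_bound {f : E → E} (hf : BoundedDerivs f)
    (hs : ContDiff ℝ ∞ f) (n : ℕ) : ∃ K : ℝ, 1 ≤ K ∧ ∀ (m : ℕ) (g : E → G), ContDiff ℝ ∞ g →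
      ∀ (x : E) (C : ℝ), (∀ i ≤ n, ‖iteratedFDeriv ℝ i g (f^[m] x)‖ ≤ C) →
      ∀ i ≤ n, ‖iteratedFDeriv ℝ i (g ∘ f^[m]) x‖ ≤ K ^ m * C := by
  obtain ⟨K, hK1, hK⟩ := hf.exists_comp_bound (G := G) hs n
  refine ⟨K, hK1, fun m => ?_⟩
  induction m with
  | zero => intro g _ x C hC; simpa using hC
  | succ m ih =>
    intro g hg x C hC
    rw [Function.iterate_succ, ← Function.comp_assoc, pow_succ', mul_assoc]
    exact hK _ (hg.comp (contDiff_iterate hs m)) x _ (ih g hg (f x) C hC)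

lemma norm_iteratedFDeriv_mul_le_of_le {f g : E → ℝ} (hf : ContDiff ℝ ∞ f) (hg : ContDiff ℝ ∞ g)
    {n : ℕ} {x : E} {A B : ℝ} (hA : ∀ i ≤ n, ‖iteratedFDeriv ℝ i f x‖ ≤ A)
    (hB : ∀ i ≤ n, ‖iteratedFDeriv ℝ i g x‖ ≤ B) :
    ‖iteratedFDeriv ℝ n (fun y => f y * g y) x‖ ≤ 2 ^ n * (A * B) := by
  have hA0 : 0 ≤ A := (norm_nonneg _).trans (hA 0 (Nat.zero_le _))
  refine (norm_iteratedFDeriv_mul_le (N := ∞) hf hg x (by exact_mod_cast le_top)).trans ?_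
  calc _ ≤ ∑ i ∈ Finset.range (n + 1), (n.choose i : ℝ) * (A * B) := by
        refine Finset.sum_le_sum fun i hi => ?_
        rw [mul_assoc]
        gcongr
        · exact hA i (by simpa [Nat.lt_succ_iff] using hi)
        · exact hB _ (Nat.sub_le _ _)
    _ = _ := by
        rw [← Finset.sum_mul]
        congr 1
        exact_mod_cast Nat.sum_range_choose n

end DerivativeBounds

section Cutoff

variable {E : Type} [NormedAddCommGroup E] [NormedSpace ℝ E] [FiniteDimensional ℝ E]

lemma exists_cutoff {s : Set E} (hs : s ∈ 𝓝 (0 : E)) :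
    ∃ ψ : E → ℝ, ContDiff ℝ ∞ ψ ∧ HasCompactSupport ψ ∧ tsupport ψ ⊆ s ∧ (∀ᶠ x in 𝓝 0, ψ x = 1) ∧
      ∀ x, ψ x ∈ Set.Icc (0 : ℝ) 1 := by
  obtain ⟨r, hr, hrs⟩ := Metric.nhds_basis_closedBall.mem_iff.1 hs
  let b : ContDiffBump (0 : E) := ⟨r / 2, r, by positivity, by linarith⟩
  exact ⟨b, b.contDiff, b.hasCompactSupport, by rw [b.tsupport_eq]; exact hrs,
    b.eventuallyEq_one, fun x => ⟨b.nonneg, b.le_one⟩⟩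

end Cutoff

section FlatSolve

open unitInterval MeasureTheory

variable {E : Type} [NormedAddCommGroup E] [NormedSpace ℝ E] [FiniteDimensional ℝ E]

/-- Integral curves of a vector field that is linear away from a ball have bounded derivatives
with respect to the initial condition. -/
lemma exists_integralCurves_boundedDerivs (X : C(E, E)) (hX : ContDiff ℝ ∞ X)
    (hL : LipschitzWith (1 / 2) X) (A : E →L[ℝ] E) (hA : ‖A‖ ≤ 1 / 4) (R : ℝ)
    (hR : ∀ x, R ≤ ‖x‖ → X x = A x) :
    ∃ P : E → C(I, E), ContDiff ℝ ∞ P ∧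
      (∀ x, P x = ContinuousMap.const I x + primitive (superpose X (P x))) ∧
      (∀ x, fderiv ℝ P x (X x) = superpose X (P x)) ∧ BoundedDerivs P := by
  have : CompleteSpace E := FiniteDimensional.complete ℝ E
  obtain ⟨P, hP, hPeq, hPd, hPu⟩ := exists_integralCurves X hX hL
  let A' : C(E, E) := ⟨A, A.continuous⟩
  have hA' : LipschitzWith (1 / 2) A' := A.lipschitz.weaken (by
    rw [← NNReal.coe_le_coe]; push_cast; exact hA.trans (by norm_num))
  obtain ⟨Q, hQ, hQeq, -, hQu⟩ := exists_integralCurves A' A.contDiff hA'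
  have hsadd : ∀ γ γ' : C(I, E), superpose A' (γ + γ') = superpose A' γ + superpose A' γ' :=
    fun γ γ' => by ext t; exact A.map_add _ _
  have hssmul : ∀ (c : ℝ) (γ : C(I, E)), superpose A' (c • γ) = c • superpose A' γ :=
    fun γ γ' => by ext t; exact A.map_smul _ _
  let QL : E →L[ℝ] C(I, E) :=
    { toFun := Q
      map_add' := fun x y => by
        symm
        apply hQu
        rw [hsadd, map_add]
        conv_lhs => rw [hQeq x, hQeq y]
        ext t
        simp only [ContinuousMap.add_apply, ContinuousMap.const_apply]
        abel
      map_smul' := fun c x => by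
        symm
        apply hQu
        rw [RingHom.id_apply, hssmul, map_smul]
        conv_lhs => rw [hQeq x]
        ext t
        simp only [ContinuousMap.add_apply, ContinuousMap.const_apply, ContinuousMap.smul_apply,
          smul_add]
      cont := hQ.continuous }
  refine ⟨P, hP, hPeq, hPd, boundedDerivs_of_hasCompactSupport_sub hP QL ?_⟩
  refine HasCompactSupport.of_support_subset_isCompact (isCompact_closedBall (0 : E) (2 * |R|)) ?_
  intro x hx
  by_contra hxR
  rw [mem_closedBall_zero_iff, not_le] at hxR
  apply hx
  have hsup : ‖superpose A' (Q x)‖ ≤ 1 / 4 * ‖Q x‖ := by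
    rw [ContinuousMap.norm_le _ (by positivity)]
    intro t
    refine (A.le_opNorm _).trans ?_
    gcongr
    exact (Q x).norm_coe_le_norm t
  have hprim := (norm_primitive_le (superpose A' (Q x))).trans hsup
  have hQn : ‖Q x‖ ≤ ‖x‖ + 1 / 4 * ‖Q x‖ := by
    conv_lhs => rw [hQeq x]
    refine (norm_add_le _ _).trans (add_le_add ?_ hprim)
    rw [ContinuousMap.norm_le _ (by positivity)]
    intro t; simp
  have hQt : ∀ t, R ≤ ‖Q x t‖ := by
    intro t
    have h1 : ‖x‖ ≤ ‖Q x t‖ + 1 / 4 * ‖Q x‖ := by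
      have : x = Q x t - primitive (superpose A' (Q x)) t := by
        have h := DFunLike.congr_fun (hQeq x) t
        rw [ContinuousMap.add_apply, ContinuousMap.const_apply] at h
        rw [h]; abel
      calc ‖x‖ = ‖Q x t - primitive (superpose A' (Q x)) t‖ := by rw [← this]
        _ ≤ _ := (norm_sub_le _ _).trans
          (add_le_add le_rfl (((primitive _).norm_coe_le_norm t).trans hprim))
    have := le_abs_self R
    have := abs_nonneg R
    linarith
  show P x - Q x = 0
  rw [sub_eq_zero]
  symm
  apply hPu
  have : superpose X (Q x) = superpose A' (Q x) := by
    ext t; exact hR _ (hQt t)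
  rw [this]
  exact hQeq x

/-- The functional `γ ↦ ∫₀¹ exp (-c s) γ(s) ds`. -/
noncomputable def weightedIntegral (c : ℝ) : C(I, ℝ) →L[ℝ] ℝ :=
  (ContinuousMap.evalCLM ℝ (1 : I)) ∘L primitive ∘L
    (pointwiseApply (ContinuousLinearMap.mul ℝ ℝ)
      (⟨fun s : I => Real.exp (-c * s), by fun_prop⟩ : C(I, ℝ)))

lemma weightedIntegral_sub {c : ℝ} {g : ℝ → ℝ} {γ δ : C(I, ℝ)} (hg : ∀ t : I, g t = γ t)
    (hd : ∀ t ∈ I, HasDerivAt g (extend δ t) t) :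
    weightedIntegral c δ - c * weightedIntegral c γ = Real.exp (-c) * γ 1 - γ 0 := by
  have hcont : ContinuousOn g I := fun t ht => (hd t ht).continuousAt.continuousWithinAt
  have key : ∀ ε : C(I, ℝ), weightedIntegral c ε =
      ∫ s in (0 : ℝ)..1, Real.exp (-c * s) * extend ε s := by
    intro ε
    show (∫ s in (0 : ℝ)..((1 : I) : ℝ), extend _ s) = _
    refine intervalIntegral.integral_congr fun s hs => ?_
    rw [Set.uIcc_of_le (by simp)] at hs
    rw [extend_of_mem _ hs, extend_of_mem _ hs]
    rfl
  rw [key, key, ← intervalIntegral.integral_const_mul, ← intervalIntegral.integral_sub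
    (by apply Continuous.intervalIntegrable; fun_prop)
    (by apply Continuous.intervalIntegrable; fun_prop)]
  have h1 : ∀ t ∈ Set.uIcc (0 : ℝ) 1, HasDerivAt (fun s => Real.exp (-c * s) * g s)
      (Real.exp (-c * t) * extend δ t - c * (Real.exp (-c * t) * extend γ t)) t := by
    intro t ht
    rw [Set.uIcc_of_le (by simp)] at ht
    have h2 : HasDerivAt (fun s => Real.exp (-c * s)) (Real.exp (-c * t) * (-c * 1)) t :=
      ((hasDerivAt_id t).const_mul (-c)).exp
    refine (h2.mul (hd t ht)).congr_deriv ?_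
    rw [extend_of_mem γ ht, ← hg ⟨t, ht⟩]
    ring
  rw [intervalIntegral.integral_eq_sub_of_hasDerivAt h1
    (by apply Continuous.intervalIntegrable; fun_prop)]
  have e1 := hg 1
  have e0 := hg 0
  simp only [Set.Icc.coe_one, Set.Icc.coe_zero] at e1 e0
  simp [e1, e0]

end FlatSolve

section FlatSolve

open unitInterval MeasureTheory

variable {E : Type} [NormedAddCommGroup E] [NormedSpace ℝ E] [FiniteDimensional ℝ E]

/-- Exponential decay of a Lyapunov function along an integral curve. -/
lemma lyapunov_decay {W : E → ℝ} (hW : ContDiff ℝ 1 W) {X : C(E, E)} {lam : ℝ}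
    (hWX : ∀ x, fderiv ℝ W x (X x) ≤ -lam * W x) {γ : C(I, E)} {x : E}
    (hγ : γ = ContinuousMap.const I x + primitive (superpose X γ)) (t : I) :
    Real.exp (lam * t) * W (γ t) ≤ W x := by
  have : CompleteSpace E := FiniteDimensional.complete ℝ E
  set u : ℝ → E := fun t => x + ∫ s in (0 : ℝ)..t, extend (superpose X γ) s with hu
  have hud : ∀ t, HasDerivAt u (extend (superpose X γ) t) t :=
    fun t => hasDerivAt_const_add_integral _ x t
  have huγ : ∀ t : I, u t = γ t := fun t => by
    conv_rhs => rw [hγ]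
    rfl
  have hφ : ∀ t, HasDerivAt (fun t => Real.exp (lam * t) * W (u t))
      (Real.exp (lam * t) * (lam * 1) * W (u t) +
        Real.exp (lam * t) * fderiv ℝ W (u t) (extend (superpose X γ) t)) t := fun t =>
    (((hasDerivAt_id t).const_mul lam).exp).mul
      (((hW.differentiable one_ne_zero (u t)).hasFDerivAt).comp_hasDerivAt t (hud t))
  have hanti : AntitoneOn (fun t => Real.exp (lam * t) * W (u t)) (Set.Icc 0 1) := by
    refine antitoneOn_of_deriv_nonpos (convex_Icc 0 1)
      (fun t _ => (hφ t).continuousAt.continuousWithinAt)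
      (fun t _ => (hφ t).differentiableAt.differentiableWithinAt) ?_
    intro t ht
    rw [interior_Icc] at ht
    have htI : t ∈ I := ⟨ht.1.le, ht.2.le⟩
    rw [(hφ t).deriv, extend_superpose, extend_of_mem γ htI, ← huγ ⟨t, htI⟩]
    have h1 := hWX (u t)
    have h2 := Real.exp_pos (lam * t)
    have : Real.exp (lam * t) * (fderiv ℝ W (u t) (X (u t)) + lam * W (u t)) ≤ 0 :=
      mul_nonpos_of_nonneg_of_nonpos h2.le (by linarith)
    simp only
    linarith
  have := hanti (Set.left_mem_Icc.2 zero_le_one) t.2 t.2.1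
  have hu0 : u 0 = x := by simp [hu]
  simpa only [huγ, hu0, mul_zero, Real.exp_zero, one_mul] using this

/-- Derivatives of all orders are dominated by all powers of the positive part of `W`. -/
def Dominated (W : E → ℝ) (G : E → ℝ) : Prop :=
  ∀ j M : ℕ, ∃ C, 0 ≤ C ∧ ∀ i ≤ j, ∀ y, ‖iteratedFDeriv ℝ i G y‖ ≤ C * (max (W y) 0) ^ M

lemma dominated_weightedIntegral {W G : E → ℝ} (hG : ContDiff ℝ ∞ G) (hGW : Dominated W G)
    {P : E → C(I, E)} (hP : ContDiff ℝ ∞ P) (hPb : BoundedDerivs P)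
    (hPW : ∀ x t, max (W (P x t)) 0 ≤ max (W x) 0) (c : ℝ) :
    Dominated W (fun x => weightedIntegral c (superpose ⟨G, hG.continuous⟩ (P x))) := by
  have : CompleteSpace E := FiniteDimensional.complete ℝ E
  intro j M
  obtain ⟨C, hC0, hC⟩ := hGW j M
  obtain ⟨K, hK1, hK⟩ := hPb.exists_comp_bound (G := C(I, ℝ)) hP j
  let G' : C(E, ℝ) := ⟨G, hG.continuous⟩
  have hG' : ContDiff ℝ ∞ (superpose (K := I) G') := contDiff_superpose G' hG
  refine ⟨‖weightedIntegral c‖ * (K * C), by positivity, fun i hi y => ?_⟩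
  have h1 : ‖iteratedFDeriv ℝ i (superpose G' ∘ P) y‖ ≤ K * (C * (max (W y) 0) ^ M) := by
    refine hK _ hG' y _ (fun k hk => ?_) i hi
    refine norm_iteratedFDeriv_superpose_le k G' hG (P y) (by positivity) fun t => ?_
    refine (hC k hk _).trans ?_
    gcongr C * ?_ ^ M
    exact hPW y t
  refine ((weightedIntegral c).norm_iteratedFDeriv_comp_left (f := superpose G' ∘ P) (N := ∞)
    (hG'.comp hP).contDiffAt (by exact_mod_cast le_top)).trans ?_
  calc _ ≤ ‖weightedIntegral c‖ * (K * (C * (max (W y) 0) ^ M)) := by gcongr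
    _ = _ := by ring

lemma fderiv_weightedIntegral {X : C(E, E)} {G : E → ℝ} (hG : ContDiff ℝ ∞ G) {P : E → C(I, E)}
    (hP : ContDiff ℝ ∞ P)
    (hPeq : ∀ x, P x = ContinuousMap.const I x + primitive (superpose X (P x)))
    (hPd : ∀ x, fderiv ℝ P x (X x) = superpose X (P x)) (c : ℝ) (x : E) :
    fderiv ℝ (fun x => weightedIntegral c (superpose ⟨G, hG.continuous⟩ (P x))) x (X x) -
      c * weightedIntegral c (superpose ⟨G, hG.continuous⟩ (P x)) =
      Real.exp (-c) * G (P x 1) - G x := by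
  have : CompleteSpace E := FiniteDimensional.complete ℝ E
  let G' : C(E, ℝ) := ⟨G, hG.continuous⟩
  obtain ⟨T, hT, hTapp⟩ := exists_hasFDerivAt_superpose G' hG (P x)
  have hPx : HasFDerivAt P (fderiv ℝ P x) x :=
    (hP.differentiable (by simp) x).hasFDerivAt
  have hd : HasFDerivAt (fun x => weightedIntegral c (superpose G' (P x)))
      ((weightedIntegral c) ∘L T ∘L fderiv ℝ P x) x :=
    ((weightedIntegral c).hasFDerivAt (x := superpose G' (P x))).comp x (hT.comp x hPx)
  rw [hd.fderiv]
  simp only [ContinuousLinearMap.comp_apply, hPd]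
  set u : ℝ → E := fun t => x + ∫ s in (0 : ℝ)..t, extend (superpose X (P x)) s with hu
  have hud : ∀ t, HasDerivAt u (extend (superpose X (P x)) t) t :=
    fun t => hasDerivAt_const_add_integral _ x t
  have huγ : ∀ t : I, u t = P x t := fun t => by
    conv_rhs => rw [hPeq]
    rfl
  have h0 : P x 0 = x := by rw [← huγ]; simp [hu]
  have := weightedIntegral_sub (c := c) (g := fun t => G (u t)) (γ := superpose G' (P x))
    (δ := T (superpose X (P x))) (fun t => by rw [huγ]; rfl) (fun t ht => ?_)
  · rw [this]
    simp only [superpose_apply, h0]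
    rfl
  · rw [extend_of_mem _ ht, hTapp, superpose_apply]
    have h1 := ((hG.differentiable (by simp) (u t)).hasFDerivAt).comp_hasDerivAt t (hud t)
    rw [extend_superpose, extend_of_mem _ ht] at h1
    rw [← huγ ⟨t, ht⟩] at h1 ⊢
    exact h1

lemma Dominated.exists_iterate_bound {W g : E → ℝ} (hg : ContDiff ℝ ∞ g) (hgW : Dominated W g)
    {F : E → E} (hF : ContDiff ℝ ∞ F) (hFb : BoundedDerivs F) {lam : ℝ} (hlam : 0 < lam)
    (hFW : ∀ x, max (W (F x)) 0 ≤ Real.exp (-lam) * max (W x) 0) (c : ℝ) (k : ℕ) :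
    ∃ (B : ℝ) (M : ℕ), 0 ≤ B ∧ 1 ≤ M ∧ ∀ n, ∀ i ≤ k, ∀ x,
      ‖iteratedFDeriv ℝ i (fun y => Real.exp (-c) ^ n * g (F^[n] y)) x‖ ≤
        B * (1 / 2) ^ n * (max (W x) 0) ^ M := by
  obtain ⟨K, hK1, hK⟩ := hFb.exists_iterate_bound (G := ℝ) hF k
  obtain ⟨M, hM, hM1⟩ : ∃ M : ℕ, Real.exp (-c) * K * Real.exp (-lam) ^ M ≤ 1 / 2 ∧ 1 ≤ M := by
    have h1 : Tendsto (fun M : ℕ => Real.exp (-c) * K * Real.exp (-lam) ^ M) atTop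
        (𝓝 (Real.exp (-c) * K * 0)) :=
      (tendsto_pow_atTop_nhds_zero_of_lt_one (Real.exp_pos _).le
        (by rw [Real.exp_lt_one_iff]; linarith)).const_mul _
    rw [mul_zero] at h1
    exact ((h1.eventually_le_const (by norm_num : (0 : ℝ) < 1 / 2)).and
      (eventually_ge_atTop 1)).exists
  obtain ⟨C, hC0, hC⟩ := hgW k M
  refine ⟨C, M, hC0, hM1, fun n i hi x => ?_⟩
  have hWn : ∀ n, max (W (F^[n] x)) 0 ≤ Real.exp (-lam) ^ n * max (W x) 0 := by
    intro n
    induction n with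
    | zero => simp
    | succ n ih =>
      rw [Function.iterate_succ_apply', pow_succ', mul_assoc]
      exact (hFW _).trans (by gcongr)
  have h1 : ‖iteratedFDeriv ℝ i (g ∘ F^[n]) x‖ ≤
      K ^ n * (C * (Real.exp (-lam) ^ n * max (W x) 0) ^ M) := by
    refine hK n g hg x _ (fun j hj => (hC j hj _).trans ?_) i hi
    gcongr C * ?_ ^ M
    exact hWn n
  have h2 : (fun y => Real.exp (-c) ^ n * g (F^[n] y)) = Real.exp (-c) ^ n • (g ∘ F^[n]) := rfl
  have hs : ContDiff ℝ i (g ∘ F^[n]) :=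
    (hg.comp (contDiff_iterate hF n)).of_le (by exact_mod_cast le_top)
  rw [h2, iteratedFDeriv_const_smul_apply hs.contDiffAt, norm_smul, Real.norm_of_nonneg (by positivity)]
  calc _ ≤ Real.exp (-c) ^ n * (K ^ n * (C * (Real.exp (-lam) ^ n * max (W x) 0) ^ M)) := by gcongr
    _ = C * (Real.exp (-c) * K * Real.exp (-lam) ^ M) ^ n * (max (W x) 0) ^ M := by
      rw [mul_pow, mul_pow, mul_pow, ← pow_mul, ← pow_mul, mul_comm n M]; ring
    _ ≤ _ := by gcongr

/-- Solvability of `X f - c f = G` when `G` is dominated by powers of a Lyapunov function. -/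
theorem exists_solution_of_dominated (X : C(E, E)) (hX : ContDiff ℝ ∞ X)
    (hL : LipschitzWith (1 / 2) X) (A : E →L[ℝ] E) (hA : ‖A‖ ≤ 1 / 4) (R : ℝ)
    (hR : ∀ x, R ≤ ‖x‖ → X x = A x) {W : E → ℝ} (hW : ContDiff ℝ 1 W) {lam : ℝ} (hlam : 0 < lam)
    (hWX : ∀ x, fderiv ℝ W x (X x) ≤ -lam * W x) (c : ℝ) {G : E → ℝ} (hG : ContDiff ℝ ∞ G)
    (hGW : Dominated W G) :
    ∃ f : E → ℝ, ContDiff ℝ ∞ f ∧ (∀ x, W x ≤ 0 → ∀ j, iteratedFDeriv ℝ j f x = 0) ∧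
      ∀ᶠ x in 𝓝 0, fderiv ℝ f x (X x) - c * f x = G x := by
  have : CompleteSpace E := FiniteDimensional.complete ℝ E
  obtain ⟨P, hP, hPeq, hPd, hPb⟩ := exists_integralCurves_boundedDerivs X hX hL A hA R hR
  let F : E → E := fun x => P x 1
  have hev : F = (ContinuousMap.evalCLM ℝ (1 : I)) ∘ P := rfl
  have hF : ContDiff ℝ ∞ F :=
    (ContinuousMap.evalCLM ℝ (1 : I) : C(I, E) →L[ℝ] E).contDiff.comp hP
  have hFb : BoundedDerivs F := by
    intro i hi
    obtain ⟨C, hC⟩ := hPb i hi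
    refine ⟨‖(ContinuousMap.evalCLM ℝ (1 : I) : C(I, E) →L[ℝ] E)‖ * C, fun x => ?_⟩
    rw [hev]
    refine ((ContinuousMap.evalCLM ℝ (1 : I) : C(I, E) →L[ℝ] E).norm_iteratedFDeriv_comp_left
      (N := ∞) hP.contDiffAt (by exact_mod_cast le_top)).trans ?_
    gcongr
    exact hC x
  have hFX : ∀ x, fderiv ℝ F x (X x) = X (F x) := by
    intro x
    have h := ((ContinuousMap.evalCLM ℝ (1 : I) : C(I, E) →L[ℝ] E).hasFDerivAt (x := P x)).comp x
      (hP.differentiable (by simp) x).hasFDerivAt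
    have h' : fderiv ℝ F x = _ := h.fderiv
    rw [h', ContinuousLinearMap.comp_apply, hPd]
    rfl
  have hdecay : ∀ x (t : I), max (W (P x t)) 0 ≤ Real.exp (-(lam * t)) * max (W x) 0 := by
    intro x t
    have h := lyapunov_decay hW hWX (hPeq x) t
    refine max_le ?_ (by positivity)
    rw [Real.exp_neg, inv_mul_eq_div, le_div_iff₀ (Real.exp_pos _), mul_comm]
    exact h.trans (le_max_left _ _)
  have hPW : ∀ x t, max (W (P x t)) 0 ≤ max (W x) 0 := by
    intro x t
    refine (hdecay x t).trans (mul_le_of_le_one_left (le_max_right _ _) ?_)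
    rw [Real.exp_le_one_iff]
    have := mul_nonneg hlam.le t.2.1
    linarith
  have hFW : ∀ x, max (W (F x)) 0 ≤ Real.exp (-lam) * max (W x) 0 := fun x => by
    simpa using hdecay x 1
  set g : E → ℝ := fun x => weightedIntegral c (superpose ⟨G, hG.continuous⟩ (P x)) with hgdef
  have hg : ContDiff ℝ ∞ g := (weightedIntegral c).contDiff.comp
    ((contDiff_superpose ⟨G, hG.continuous⟩ hG).comp hP)
  have hgW : Dominated W g := dominated_weightedIntegral hG hGW hP hPb hPW c
  have hgX : ∀ x, fderiv ℝ g x (X x) - c * g x = Real.exp (-c) * G (F x) - G x :=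
    fun x => fderiv_weightedIntegral hG hP hPeq hPd c x
  let H : ℕ → E → ℝ := fun n y => Real.exp (-c) ^ n * g (F^[n] y)
  have hH : ∀ n, ContDiff ℝ ∞ (H n) := fun n =>
    contDiff_const.mul (hg.comp (contDiff_iterate hF n))
  have hFnX : ∀ n x, fderiv ℝ F^[n] x (X x) = X (F^[n] x) := by
    intro n
    induction n with
    | zero => intro x; simp
    | succ n ih =>
      intro x
      rw [Function.iterate_succ, fderiv_comp x
        ((contDiff_iterate hF n).differentiable (by simp) _) (hF.differentiable (by simp) _),
        ContinuousLinearMap.comp_apply, hFX, ih]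
      rfl
  let a : ℕ → E → ℝ := fun n x => Real.exp (-c) ^ n * G (F^[n] x)
  have hHX : ∀ n x, fderiv ℝ (H n) x (X x) - c * H n x = a (n + 1) x - a n x := by
    intro n x
    have h1 : fderiv ℝ (H n) x (X x) = Real.exp (-c) ^ n * fderiv ℝ g (F^[n] x) (X (F^[n] x)) := by
      have h2 : HasFDerivAt (H n) (Real.exp (-c) ^ n •
          (fderiv ℝ g (F^[n] x) ∘L fderiv ℝ F^[n] x)) x :=
        (((hg.differentiable (by simp) _).hasFDerivAt).comp x
          ((contDiff_iterate hF n).differentiable (by simp) x).hasFDerivAt).const_mul _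
      rw [h2.fderiv, smul_apply, ContinuousLinearMap.comp_apply, hFnX,
        smul_eq_mul]
    have h3 := hgX (F^[n] x)
    simp only [a, H, h1, Function.iterate_succ_apply']
    rw [pow_succ]
    linear_combination Real.exp (-c) ^ n * h3
  obtain ⟨ψ, hψ, hψc, -, hψ1, -⟩ := exists_cutoff (E := E) univ_mem
  obtain ⟨m0, hm0⟩ := (hψc.isCompact.image
    ((hW.continuous.max continuous_const) : Continuous fun x => max (W x) 0)).bddAbove
  have hm : ∀ x ∈ tsupport ψ, max (W x) 0 ≤ m0 := fun x hx => hm0 ⟨x, hx, rfl⟩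
  have hbound : ∀ k, ∃ B, 0 ≤ B ∧ ∀ n x,
      ‖iteratedFDeriv ℝ k (fun y => ψ y * H n y) x‖ ≤ B * (1 / 2) ^ n := by
    intro k
    obtain ⟨B, M, hB0, hM1, hB⟩ := hgW.exists_iterate_bound hg hF hFb hlam hFW c k
    obtain ⟨C, hC0, hC⟩ := exists_bound_iteratedFDeriv_le hψ hψc k
    refine ⟨2 ^ k * (C * (B * |m0| ^ M)), by positivity, fun n x => ?_⟩
    by_cases hx : x ∈ tsupport ψ
    · refine (norm_iteratedFDeriv_mul_le_of_le hψ (hH n) (A := C)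
        (B := B * (1 / 2) ^ n * |m0| ^ M) (fun i hi => hC i hi x) (fun i hi => ?_)).trans_eq
        (by ring)
      refine (hB n i hi x).trans ?_
      gcongr
      exact (hm x hx).trans (le_abs_self _)
    · have h0 : iteratedFDeriv ℝ k (fun y => ψ y * H n y) x = 0 := by
        by_contra hne
        exact hx (tsupport_mul_subset_left (support_iteratedFDeriv_subset k hne))
      rw [h0, norm_zero]
      positivity
  choose B hB0 hB using hbound
  have hsumm : ∀ k, Summable fun n : ℕ => B k * (1 / 2 : ℝ) ^ n := fun k =>
    (summable_geometric_of_lt_one (by norm_num) (by norm_num)).mul_left _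
  have hψH : ∀ n, ContDiff ℝ ∞ fun y => ψ y * H n y := fun n => hψ.mul (hH n)
  have hf : ContDiff ℝ ∞ fun x => ∑' n, ψ x * H n x :=
    contDiff_tsum (N := ⊤) hψH (fun k _ => hsumm k) (fun k n x _ => hB k n x)
  have hflat : ∀ x, W x ≤ 0 → ∀ j, iteratedFDeriv ℝ j (fun x => -∑' n, ψ x * H n x) x = 0 := by
    intro x hx j
    have h1 : ∀ n, iteratedFDeriv ℝ j (fun y => ψ y * H n y) x = 0 := by
      intro n
      obtain ⟨B, M, hB0, hM1, hB⟩ := hgW.exists_iterate_bound hg hF hFb hlam hFW c j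
      obtain ⟨C, hC0, hC⟩ := exists_bound_iteratedFDeriv_le hψ hψc j
      rw [← norm_le_zero_iff]
      refine (norm_iteratedFDeriv_mul_le_of_le hψ (hH n) (A := C) (B := 0)
        (fun i hi => hC i hi x) (fun i hi => ?_)).trans_eq (by ring)
      refine (hB n i hi x).trans_eq ?_
      rw [max_eq_right hx, zero_pow (by omega), mul_zero]
    have h2 : (fun x => -∑' n, ψ x * H n x) = -fun x => ∑' n, ψ x * H n x := rfl
    rw [h2, iteratedFDeriv_neg, Pi.neg_apply,
      iteratedFDeriv_tsum (N := ⊤) hψH (fun k _ => hsumm k) (fun k n x _ => hB k n x) le_top]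
    simp [h1]
  refine ⟨fun x => -∑' n, ψ x * H n x, hf.neg, hflat, ?_⟩
  filter_upwards [hψ1.eventually_nhds] with x hx
  have hx1 : ψ x = 1 := hx.self_of_nhds
  have hfd1 : ∀ n y, ‖fderiv ℝ (fun y => ψ y * H n y) y‖ ≤ B 1 * (1 / 2) ^ n := by
    intro n y
    rw [← norm_iteratedFDeriv_one]
    exact hB 1 n y
  have hs0 : ∀ y, Summable fun n => ψ y * H n y := fun y =>
    Summable.of_norm_bounded (hsumm 0) fun n => by simpa using hB 0 n y
  have hfd := fderiv_tsum_apply (hsumm 1) (fun n => (hψH n).differentiable (by simp)) hfd1 (hs0 x) x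
  have hcong : ∀ n, fderiv ℝ (fun y => ψ y * H n y) x = fderiv ℝ (H n) x := fun n =>
    Filter.EventuallyEq.fderiv_eq (by filter_upwards [hx] with y hy; rw [hy, one_mul])
  have hS1 : HasSum (fun n => fderiv ℝ (fun y => ψ y * H n y) x)
      (fderiv ℝ (fun x => ∑' n, ψ x * H n x) x) := by
    rw [hfd]
    exact (Summable.of_norm_bounded (hsumm 1) fun n => hfd1 n x).hasSum
  have hS2 : HasSum (fun n => fderiv ℝ (H n) x (X x))
      (fderiv ℝ (fun x => ∑' n, ψ x * H n x) x (X x)) := by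
    simp_rw [← hcong]
    exact hS1.mapL (ContinuousLinearMap.apply ℝ ℝ (X x))
  have hS3 : HasSum (fun n => H n x) (∑' n, ψ x * H n x) := by
    have := (hs0 x).hasSum
    simpa [hx1] using this
  have hS4 := (hS2.sub (hS3.mul_left c)).tendsto_sum_nat
  simp only [hHX, Finset.sum_range_sub (fun n => a n x)] at hS4
  have ha : Tendsto (fun n => a n x) atTop (𝓝 0) := by
    obtain ⟨B', M, hB'0, -, hB'⟩ := hGW.exists_iterate_bound hG hF hFb hlam hFW c 0
    refine squeeze_zero_norm (fun n => (?_ : ‖a n x‖ ≤ B' * (1 / 2) ^ n * (max (W x) 0) ^ M)) ?_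
    · have := hB' n 0 le_rfl x
      rwa [norm_iteratedFDeriv_zero] at this
    have h1 := (tendsto_pow_atTop_nhds_zero_of_lt_one (r := (1 / 2 : ℝ)) (by norm_num)
      (by norm_num)).const_mul (B' * (max (W x) 0) ^ M)
    rw [mul_zero] at h1
    exact h1.congr fun n => by ring
  have := tendsto_nhds_unique hS4 (ha.sub_const (a 0 x))
  have ha0 : a 0 x = G x := by simp [a]
  have hneg : fderiv ℝ (fun x => -∑' n, ψ x * H n x) x (X x) =
      -fderiv ℝ (fun x => ∑' n, ψ x * H n x) x (X x) := by
    rw [fderiv_fun_neg]; rfl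
  rw [hneg]
  linarith

/-- Solvability of `X f - c f = G` for a field that is linear away from a ball, when `G` is
dominated by powers of a Lyapunov function. -/
theorem exists_solution_of_lyapunov {X : E → E} (hX : ContDiff ℝ ∞ X) (A : E →L[ℝ] E) (R : ℝ)
    (hR : ∀ x, R ≤ ‖x‖ → X x = A x) {W : E → ℝ} (hW : ContDiff ℝ 1 W) {lam : ℝ} (hlam : 0 < lam)
    (hWX : ∀ x, fderiv ℝ W x (X x) ≤ -lam * W x) (c : ℝ) {G : E → ℝ} (hG : ContDiff ℝ ∞ G)
    (hGW : Dominated W G) :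
    ∃ f : E → ℝ, ContDiff ℝ ∞ f ∧ (∀ x, W x ≤ 0 → ∀ j, iteratedFDeriv ℝ j f x = 0) ∧
      ∀ᶠ x in 𝓝 0, fderiv ℝ f x (X x) - c * f x = G x := by
  have hcs : HasCompactSupport (fun x => X x - A x) := by
    refine HasCompactSupport.of_support_subset_isCompact (isCompact_closedBall (0 : E) R) ?_
    intro x hx
    by_contra h
    rw [mem_closedBall_zero_iff, not_le] at h
    exact hx (sub_eq_zero.2 (hR x h.le))
  obtain ⟨C, hC⟩ := boundedDerivs_of_hasCompactSupport_sub hX A hcs 1 le_rfl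
  have hC0 : 0 ≤ C := (norm_nonneg _).trans (hC 0)
  set τ : ℝ := (4 * (1 + C + ‖A‖))⁻¹ with hτ
  have hpos : 0 < 4 * (1 + C + ‖A‖) := by positivity
  have hτ0 : 0 < τ := inv_pos.2 hpos
  have hbd : ∀ r, 0 ≤ r → r ≤ 1 + C + ‖A‖ → τ * r ≤ 1 / 4 := by
    intro r _ hr
    rw [hτ, inv_mul_le_iff₀ hpos]
    linarith
  let Y : C(E, E) := ⟨fun x => τ • X x, hX.continuous.const_smul τ⟩
  have hY : ContDiff ℝ ∞ Y := contDiff_const.smul hX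
  have hYL : LipschitzWith (1 / 2) Y := by
    refine lipschitzWith_of_nnnorm_fderiv_le (hY.differentiable (by simp)) fun x => ?_
    have h1 : fderiv ℝ Y x = τ • fderiv ℝ X x :=
      ((hX.differentiable (by simp) x).hasFDerivAt.const_smul τ).fderiv
    rw [← NNReal.coe_le_coe, coe_nnnorm, h1, norm_smul, Real.norm_of_nonneg hτ0.le]
    have h2 := hC x
    rw [norm_iteratedFDeriv_one] at h2
    refine (hbd _ (norm_nonneg _) (h2.trans (by have := norm_nonneg A; linarith))).trans ?_
    push_cast; norm_num
  obtain ⟨f, hf, hfl, hfe⟩ := exists_solution_of_dominated Y hY hYL (τ • A)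
    (by rw [norm_smul, Real.norm_of_nonneg hτ0.le]; exact hbd _ (norm_nonneg _) (by linarith)) R
    (fun x hx => by show τ • X x = _; rw [hR x hx]; rfl) hW (lam := τ * lam) (by positivity)
    (fun x => by
      show fderiv ℝ W x (τ • X x) ≤ _
      rw [map_smul, smul_eq_mul]
      have := mul_le_mul_of_nonneg_left (hWX x) hτ0.le
      linarith) (τ * c) (G := fun x => τ * G x) (contDiff_const.mul hG) (by
      intro j M
      obtain ⟨C', hC'0, hC'⟩ := hGW j M
      refine ⟨τ * C', by positivity, fun i hi y => ?_⟩
      have h2 : (fun y => τ * G y) = τ • G := rfl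
      rw [h2, iteratedFDeriv_const_smul_apply (hG.of_le (by exact_mod_cast le_top)).contDiffAt,
        norm_smul, Real.norm_of_nonneg hτ0.le, mul_assoc]
      gcongr
      exact hC' i hi y)
  refine ⟨f, hf, hfl, hfe.mono fun x hx => ?_⟩
  have h1 : fderiv ℝ f x (Y x) = τ * fderiv ℝ f x (X x) := by
    show fderiv ℝ f x (τ • X x) = _
    rw [map_smul, smul_eq_mul]
  rw [h1] at hx
  have : τ * (fderiv ℝ f x (X x) - c * f x - G x) = 0 := by linarith
  rcases mul_eq_zero.1 this with h | h
  · exact absurd h hτ0.ne'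
  · linarith

end FlatSolve

section Hadamard

open unitInterval

variable {Z : Type} [NormedAddCommGroup Z] [NormedSpace ℝ Z] [FiniteDimensional ℝ Z]

/-- The projection `(ξ, η, ζ) ↦ (0, 0, ζ)`. -/
def axisProj (Z : Type) [NormedAddCommGroup Z] [NormedSpace ℝ Z] : (ℝ × ℝ × Z) →L[ℝ] (ℝ × ℝ × Z) :=
  (0 : (ℝ × ℝ × Z) →L[ℝ] ℝ).prod ((0 : (ℝ × ℝ × Z) →L[ℝ] ℝ).prod
    ((ContinuousLinearMap.snd ℝ ℝ Z) ∘L (ContinuousLinearMap.snd ℝ ℝ (ℝ × Z))))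

@[simp] lemma axisProj_apply (x : ℝ × ℝ × Z) : axisProj Z x = (0, 0, x.2.2) := rfl

lemma sub_axisProj (x : ℝ × ℝ × Z) :
    x - axisProj Z x = x.1 • ((1, 0, 0) : ℝ × ℝ × Z) + x.2.1 • ((0, 1, 0) : ℝ × ℝ × Z) := by
  ext <;> simp

lemma norm_sub_axisProj (x : ℝ × ℝ × Z) : ‖x - axisProj Z x‖ = max |x.1| |x.2.1| := by
  simp [Prod.norm_def]

/-- The segment from `axisProj Z x` to `x`, as a linear function of `x`. -/
noncomputable def axisSegment (Z : Type) [NormedAddCommGroup Z] [NormedSpace ℝ Z]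
    [FiniteDimensional ℝ Z] : (ℝ × ℝ × Z) →L[ℝ] C(I, ℝ × ℝ × Z) :=
  LinearMap.toContinuousLinearMap
    { toFun := fun x => ⟨fun s => axisProj Z x + (s : ℝ) • (x - axisProj Z x), by fun_prop⟩
      map_add' := fun x y => by
        ext s : 1
        simp only [ContinuousMap.coe_mk, ContinuousMap.add_apply, map_add]
        module
      map_smul' := fun c x => by
        ext s : 1
        simp only [ContinuousMap.coe_mk, ContinuousMap.smul_apply, map_smul, RingHom.id_apply]
        module }

lemma axisSegment_apply (x : ℝ × ℝ × Z) (s : I) :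
    axisSegment Z x s = axisProj Z x + (s : ℝ) • (x - axisProj Z x) := rfl

/-- Hadamard's lemma along the subspace `ξ = η = 0`. -/
theorem exists_eq_mul_add_mul {f : ℝ × ℝ × Z → ℝ} (hf : ContDiff ℝ ∞ f)
    (h0 : ∀ ζ : Z, f (0, 0, ζ) = 0) :
    ∃ g h : ℝ × ℝ × Z → ℝ, ContDiff ℝ ∞ g ∧ ContDiff ℝ ∞ h ∧
      ∀ x, f x = g x * x.1 + h x * x.2.1 := by
  have hd : ∀ e : ℝ × ℝ × Z, ContDiff ℝ ∞ fun x => fderiv ℝ f x e := fun e =>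
    (hf.fderiv_right (by simp)).clm_apply contDiff_const
  let d : ℝ × ℝ × Z → C(ℝ × ℝ × Z, ℝ) := fun e => ⟨fun x => fderiv ℝ f x e, (hd e).continuous⟩
  let k : ℝ × ℝ × Z → ℝ × ℝ × Z → ℝ := fun e x => weightedIntegral 0 (superpose (d e) (axisSegment Z x))
  have hk : ∀ e, ContDiff ℝ ∞ (k e) := fun e => (weightedIntegral 0).contDiff.comp
    ((contDiff_superpose (d e) (hd e)).comp (axisSegment Z).contDiff)
  refine ⟨k (1, 0, 0), k (0, 1, 0), hk _, hk _, fun x => ?_⟩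
  have key := weightedIntegral_sub (c := 0)
    (g := fun s => f (axisProj Z x + s • (x - axisProj Z x)))
    (γ := superpose ⟨f, hf.continuous⟩ (axisSegment Z x))
    (δ := x.1 • superpose (d (1, 0, 0)) (axisSegment Z x) +
      x.2.1 • superpose (d (0, 1, 0)) (axisSegment Z x)) (fun s => rfl) (fun s hs => ?_)
  · rw [map_add, map_smul, map_smul, zero_mul, sub_zero, neg_zero, Real.exp_zero, one_mul,
      superpose_apply, superpose_apply, axisSegment_apply, axisSegment_apply] at key
    simp only [Set.Icc.coe_one, Set.Icc.coe_zero, one_smul, zero_smul, add_zero,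
      add_sub_cancel, ContinuousMap.coe_mk, axisProj_apply, h0, sub_zero, smul_eq_mul] at key
    rw [← key]
    ring
  · have h1 : HasDerivAt (fun s : ℝ => axisProj Z x + s • (x - axisProj Z x))
        ((1 : ℝ) • (x - axisProj Z x)) s := ((hasDerivAt_id s).smul_const _).const_add _
    have h2 := ((hf.differentiable (by simp) _).hasFDerivAt).comp_hasDerivAt s h1
    refine h2.congr_deriv ?_
    rw [extend_of_mem _ hs]
    simp only [ContinuousMap.add_apply, ContinuousMap.smul_apply, superpose_apply, d,
      ContinuousMap.coe_mk, axisSegment_apply]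
    rw [one_smul]
    conv_lhs => rw [sub_axisProj x]
    rw [map_add, map_smul, map_smul]
    rw [← sub_axisProj x]

end Hadamard

section Jets

variable {E : Type} [NormedAddCommGroup E] [NormedSpace ℝ E]

/-- The derivatives of `f` of order less than `n` vanish at `x`. -/
def JetAt (n : ℕ) (f : E → ℝ) (x : E) : Prop := ∀ j < n, iteratedFDeriv ℝ j f x = 0

lemma JetAt.mono {n m : ℕ} {f : E → ℝ} {x : E} (h : JetAt n f x) (hmn : m ≤ n) : JetAt m f x :=
  fun j hj => h j (hj.trans_le hmn)

lemma JetAt.congr {n : ℕ} {f g : E → ℝ} {x : E} (h : JetAt n f x) (hfg : f =ᶠ[𝓝 x] g) :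
    JetAt n g x := fun j hj => by
  rw [← (hfg.iteratedFDeriv ℝ j).self_of_nhds]
  exact h j hj

lemma JetAt.add {n : ℕ} {f g : E → ℝ} {x : E} (hf : ContDiff ℝ ∞ f) (hg : ContDiff ℝ ∞ g)
    (h : JetAt n f x) (h' : JetAt n g x) : JetAt n (fun y => f y + g y) x := fun j hj => by
  have := congr_fun (iteratedFDeriv_add (i := j) (hf.of_le (by exact_mod_cast le_top))
    (hg.of_le (by exact_mod_cast le_top) : ContDiff ℝ j g)) x
  rw [show (fun y => f y + g y) = f + g from rfl, this, Pi.add_apply, h j hj, h' j hj, add_zero]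

lemma JetAt.mul {a b : ℕ} {f g : E → ℝ} {x : E} (hf : ContDiff ℝ ∞ f) (hg : ContDiff ℝ ∞ g)
    (h : JetAt a f x) (h' : JetAt b g x) : JetAt (a + b) (fun y => f y * g y) x := by
  intro j hj
  rw [← norm_le_zero_iff]
  refine (norm_iteratedFDeriv_mul_le (N := ∞) hf hg x (by exact_mod_cast le_top)).trans ?_
  refine (Finset.sum_eq_zero fun i hi => ?_).le
  rcases lt_or_ge i a with hi' | hi'
  · rw [h i hi']; simp
  · rw [h' (j - i) (by have := Finset.mem_range.1 hi; omega)]; simp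

lemma jetAt_zero (f : E → ℝ) (x : E) : JetAt 0 f x := fun j hj => by omega

lemma jetAt_one {f : E → ℝ} {x : E} (h : f x = 0) : JetAt 1 f x := by
  intro j hj
  obtain rfl : j = 0 := by omega
  rw [← norm_eq_zero, norm_iteratedFDeriv_zero, h, norm_zero]

lemma JetAt.fderiv_apply {n : ℕ} {f : E → ℝ} {x : E} (hf : ContDiff ℝ ∞ f) {V : E → E}
    (hV : ContDiff ℝ ∞ V) (h : JetAt (n + 1) f x) : JetAt n (fun y => fderiv ℝ f y (V y)) x := by
  intro j hj
  rw [← norm_le_zero_iff]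
  refine (norm_iteratedFDeriv_clm_apply (N := ∞) (hf.fderiv_right (by simp)) hV x
    (by exact_mod_cast le_top)).trans ?_
  refine (Finset.sum_eq_zero fun i hi => ?_).le
  rw [norm_iteratedFDeriv_fderiv, h (i + 1) (by have := Finset.mem_range.1 hi; omega)]
  simp

variable [FiniteDimensional ℝ E]

/-- A compactly supported function whose jets vanish on the range of a projection is small near
that range. -/
lemma exists_norm_iteratedFDeriv_le {p : E →L[ℝ] E} (hp : ∀ x, p (p x) = p x) {f : E → ℝ}
    (hf : ContDiff ℝ ∞ f) (hc : HasCompactSupport f) (k : ℕ) : ∀ j,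
    (∀ x, JetAt (j + k) f (p x)) →
      ∃ C, 0 ≤ C ∧ ∀ x, ‖iteratedFDeriv ℝ j f x‖ ≤ C * ‖x - p x‖ ^ k := by
  induction k with
  | zero =>
    intro j _
    obtain ⟨C, hC0, hC⟩ := exists_bound_iteratedFDeriv_le hf hc j
    exact ⟨C, hC0, fun x => by simpa using hC j le_rfl x⟩
  | succ k ih =>
    intro j hj
    obtain ⟨C, hC0, hC⟩ := ih (j + 1) (fun x => by simpa [add_assoc, add_comm 1 k] using hj x)
    refine ⟨C, hC0, fun x => ?_⟩
    have hdiff : Differentiable ℝ (iteratedFDeriv ℝ j f) :=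
      hf.differentiable_iteratedFDeriv (by exact_mod_cast WithTop.coe_lt_top _)
    have hseg : ∀ y ∈ segment ℝ (p x) x,
        ‖fderiv ℝ (iteratedFDeriv ℝ j f) y‖ ≤ C * ‖x - p x‖ ^ k := by
      intro y hy
      rw [segment_eq_image'] at hy
      obtain ⟨s, hs, rfl⟩ := hy
      rw [norm_fderiv_iteratedFDeriv]
      refine (hC _).trans ?_
      gcongr
      have : p x + s • (x - p x) - p (p x + s • (x - p x)) = s • (x - p x) := by
        simp [hp]
      rw [this, norm_smul, Real.norm_of_nonneg hs.1]
      exact mul_le_of_le_one_left (norm_nonneg _) hs.2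
    have h1 := (convex_segment (p x) x).norm_image_sub_le_of_norm_fderiv_le (𝕜 := ℝ)
      (fun y _ => hdiff y) hseg (left_mem_segment ℝ _ _) (right_mem_segment ℝ _ _)
    rw [hj x j (by omega), sub_zero] at h1
    rwa [pow_succ, ← mul_assoc]

end Jets

section Borel

variable {E : Type} [NormedAddCommGroup E] [NormedSpace ℝ E] [FiniteDimensional ℝ E]

/-- A function flat to order `n` along the range of a projection can be localized near that range
so that its derivatives of order less than `n` become small. -/
lemma exists_localization {p : E →L[ℝ] E} (hp : ∀ x, p (p x) = p x) {f : E → ℝ}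
    (hf : ContDiff ℝ ∞ f) (hc : HasCompactSupport f) {n : ℕ} (hJ : ∀ x, JetAt n f (p x))
    {ε : ℝ} (hε : 0 < ε) :
    ∃ g : E → ℝ, ContDiff ℝ ∞ g ∧ (∀ x, g =ᶠ[𝓝 (p x)] f) ∧
      ∀ j < n, ∀ x, ‖iteratedFDeriv ℝ j g x‖ ≤ ε := by
  obtain ⟨χ, hχ, hχc, hχs, hχ1, -⟩ := exists_cutoff (Metric.closedBall_mem_nhds (0 : E) one_pos)
  obtain ⟨Cχ, hCχ0, hCχ⟩ := exists_bound_iteratedFDeriv_le hχ hχc n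
  let q : E →L[ℝ] E := ContinuousLinearMap.id ℝ E - p
  have hq : ∀ x, q x = x - p x := fun x => rfl
  have hf' : ∀ j, ∃ C, 0 ≤ C ∧ (j ≤ n → ∀ x, ‖iteratedFDeriv ℝ j f x‖ ≤ C * ‖q x‖ ^ (n - j)) := by
    intro j
    by_cases hj : j ≤ n
    · obtain ⟨C, hC0, hC⟩ := exists_norm_iteratedFDeriv_le hp hf hc (n - j) j
        (fun x => by rw [Nat.add_sub_cancel' hj]; exact hJ x)
      exact ⟨C, hC0, fun _ => hC⟩
    · exact ⟨0, le_rfl, fun h => absurd h hj⟩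
  choose Cf hCf0 hCf using hf'
  set S : ℝ := ∑ i ∈ Finset.range (n + 1), Cf i with hS
  have hSf : ∀ i ≤ n, Cf i ≤ S := fun i hi =>
    Finset.single_le_sum (fun i _ => hCf0 i) (Finset.mem_range.2 (by omega))
  have hS0 : 0 ≤ S := Finset.sum_nonneg fun i _ => hCf0 i
  set D : ℝ := 1 + ‖q‖ with hD
  have hD1 : 1 ≤ D := by have := norm_nonneg q; linarith
  set B : ℝ := 2 ^ n * (S * (Cχ * D ^ n)) with hB
  have hB0 : 0 ≤ B := by positivity
  obtain ⟨T, hT1, hT⟩ : ∃ T : ℝ, 1 ≤ T ∧ B / T ≤ ε := by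
    refine ⟨1 + B / ε, by have := div_nonneg hB0 hε.le; linarith, ?_⟩
    rw [div_le_iff₀ (by positivity)]
    have : ε * (1 + B / ε) = ε + B := by field_simp
    linarith
  have hT0 : 0 < T := by linarith
  let L : E →L[ℝ] E := T • q
  have hL : ∀ y, L y = T • q y := fun y => rfl
  let χT : E → ℝ := χ ∘ L
  have hχT : ContDiff ℝ ∞ χT := hχ.comp L.contDiff
  refine ⟨fun x => f x * χT x, hf.mul hχT, fun x => ?_, fun j hj x => ?_⟩
  · have h0 : Tendsto L (𝓝 (p x)) (𝓝 0) := by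
      have := L.continuous.tendsto (p x)
      have h2 : L (p x) = 0 := by
        show T • (p x - p (p x)) = 0
        rw [hp, sub_self, smul_zero]
      rwa [h2] at this
    filter_upwards [h0.eventually hχ1] with y hy
    show f y * χ _ = f y
    rw [hy, mul_one]
  · by_cases hx : T * ‖q x‖ ≤ 1
    · refine (norm_iteratedFDeriv_mul_le (N := ∞) hf hχT x (by exact_mod_cast le_top)).trans ?_
      have hterm : ∀ i ∈ Finset.range (j + 1),
          (j.choose i : ℝ) * ‖iteratedFDeriv ℝ i f x‖ * ‖iteratedFDeriv ℝ (j - i) χT x‖ ≤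
            (j.choose i : ℝ) * (S * (Cχ * D ^ n) / T) := by
        intro i hi
        have hij : i ≤ j := by have := Finset.mem_range.1 hi; omega
        rw [mul_assoc]
        gcongr
        have h1 : ‖iteratedFDeriv ℝ i f x‖ ≤ S * (1 / T) ^ (n - i) := by
          refine (hCf i (by omega) x).trans ?_
          gcongr
          · exact hSf i (by omega)
          · rw [le_div_iff₀ hT0]; linarith
        have h2 : ‖iteratedFDeriv ℝ (j - i) χT x‖ ≤ Cχ * (T ^ (j - i) * D ^ n) := by
          rw [ContinuousLinearMap.iteratedFDeriv_comp_right (n := ∞) L hχ x (i := j - i)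
            (by generalize j - i = m; exact_mod_cast le_top)]
          refine (ContinuousMultilinearMap.norm_compContinuousLinearMap_le _ _).trans ?_
          rw [Finset.prod_const, Finset.card_univ, Fintype.card_fin,
            show ‖L‖ = ‖T‖ * ‖q‖ from norm_smul T q,
            Real.norm_of_nonneg hT0.le, mul_pow]
          gcongr
          · exact hCχ _ (by omega) _
          · calc ‖q‖ ^ (j - i) ≤ D ^ (j - i) := by gcongr; linarith
              _ ≤ D ^ n := pow_le_pow_right₀ hD1 (by omega)
        have h3 : (1 / T) ^ (n - i) * T ^ (j - i) ≤ 1 / T := by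
          have h4 : n - i = (j - i) + (n - j - 1) + 1 := by omega
          rw [h4, pow_succ, pow_add]
          have h5 : (1 / T) ^ (j - i) * T ^ (j - i) = 1 := by
            rw [← mul_pow, one_div_mul_cancel hT0.ne', one_pow]
          have h6 : (1 / T) ^ (n - j - 1) ≤ 1 :=
            pow_le_one₀ (by positivity) (by rw [div_le_one hT0]; exact hT1)
          calc _ = ((1 / T) ^ (j - i) * T ^ (j - i)) * (1 / T) ^ (n - j - 1) * (1 / T) := by ring
            _ ≤ 1 * 1 * (1 / T) := by rw [h5]; gcongr
            _ = 1 / T := by ring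
        calc _ ≤ (S * (1 / T) ^ (n - i)) * (Cχ * (T ^ (j - i) * D ^ n)) := by gcongr
          _ = S * (Cχ * D ^ n) * ((1 / T) ^ (n - i) * T ^ (j - i)) := by ring
          _ ≤ S * (Cχ * D ^ n) * (1 / T) := by gcongr
          _ = _ := by ring
      refine (Finset.sum_le_sum hterm).trans ?_
      rw [← Finset.sum_mul]
      have h7 : ∑ i ∈ Finset.range (j + 1), (j.choose i : ℝ) = 2 ^ j := by
        exact_mod_cast Nat.sum_range_choose j
      rw [h7]
      refine le_trans ?_ hT
      rw [hB, mul_div_assoc (2 ^ n)]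
      have h8 : (2 : ℝ) ^ j ≤ 2 ^ n := pow_le_pow_right₀ (by norm_num) hj.le
      exact mul_le_mul_of_nonneg_right h8 (by positivity)
    · have h0 : χT =ᶠ[𝓝 x] fun _ => 0 := by
        have hcont : Continuous fun y => T * ‖q y‖ := by fun_prop
        filter_upwards [hcont.continuousAt.eventually (lt_mem_nhds (not_le.1 hx))] with y hy
        by_contra hne
        have h1 := hχs (subset_tsupport χ hne)
        rw [mem_closedBall_zero_iff] at h1
        have h2 : ‖L y‖ = T * ‖q y‖ := by
          rw [hL, norm_smul, Real.norm_of_nonneg hT0.le]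
        linarith
      have h1 : (fun y => f y * χT y) =ᶠ[𝓝 x] 0 := by
        filter_upwards [h0] with y hy
        simp [hy]
      rw [(h1.iteratedFDeriv ℝ j).self_of_nhds]
      simp [hε.le]

/-- Borel's theorem along the range of a projection. -/
theorem exists_borel_sum {p : E →L[ℝ] E} (hp : ∀ x, p (p x) = p x) (Q : ℕ → E → ℝ)
    (hQ : ∀ k, ContDiff ℝ ∞ (Q k)) (hc : ∀ k, HasCompactSupport (Q k))
    (hJ : ∀ k x, JetAt k (Q k) (p x)) :
    ∃ f : E → ℝ, ContDiff ℝ ∞ f ∧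
      ∀ n x, JetAt n (fun y => f y - ∑ k ∈ Finset.range n, Q k y) (p x) := by
  have hloc := fun k => exists_localization hp (hQ k) (hc k) (hJ k)
    (ε := (1 / 2) ^ k) (by positivity)
  choose g hg hgQ hgb using hloc
  have hsum : Summable fun k : ℕ => (1 / 2 : ℝ) ^ k := summable_geometric_two
  have hf : ContDiff ℝ ∞ fun x => ∑' k, g k x := by
    refine contDiff_tsum_of_eventually (N := ⊤) (v := fun _ k => (1 / 2 : ℝ) ^ k) hg
      (fun _ _ => hsum) fun j _ => ?_
    rw [Nat.cofinite_eq_atTop]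
    filter_upwards [eventually_gt_atTop j] with k hk x
    exact hgb k j hk x
  refine ⟨_, hf, fun n x => ?_⟩
  have hs0 : ∀ y, Summable fun k => g k y := by
    intro y
    rw [← summable_nat_add_iff 1]
    refine Summable.of_norm_bounded ((summable_nat_add_iff 1).2 hsum) fun k => ?_
    have := hgb (k + 1) 0 (by omega) y
    rwa [norm_iteratedFDeriv_zero] at this
  have htail : JetAt n (fun y => ∑' k, g (k + n) y) (p x) := by
    intro j hj
    have h1 := congr_fun (iteratedFDeriv_tsum (𝕜 := ℝ) (N := (j : ℕ∞))
      (f := fun k => g (k + n)) (v := fun _ k => (1 / 2 : ℝ) ^ (k + n))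
      (fun k => (hg _).of_le (by exact_mod_cast le_top))
      (fun _ _ => (summable_nat_add_iff n).2 hsum)
      (fun i k y hi => hgb (k + n) i (by have : i ≤ j := by exact_mod_cast hi
                                         omega) y) (k := j) le_rfl) (p x)
    rw [h1]
    have h2 : ∀ k, iteratedFDeriv ℝ j (g (k + n)) (p x) = 0 := fun k => by
      rw [((hgQ (k + n) x).iteratedFDeriv ℝ j).self_of_nhds]
      exact hJ (k + n) x j (by omega)
    simp [h2]
  refine htail.congr ?_
  have hev : ∀ᶠ y in 𝓝 (p x), ∀ k ∈ Finset.range n, g k y = Q k y :=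
    (Finset.eventually_all _).2 fun k _ => hgQ k x
  filter_upwards [hev] with y hy
  rw [← Finset.sum_congr rfl hy, ← (hs0 y).sum_add_tsum_nat_add n]
  ring

end Borel

section Formal

variable {R : Type} [CommRing R] [Algebra ℝ R]

lemma span_pair_pow_le (x y : R) (n : ℕ) :
    Ideal.span {x, y} ^ n ≤ Ideal.span {m | ∃ p q, p + q = n ∧ m = x ^ p * y ^ q} := by
  induction n with
  | zero =>
    rw [pow_zero, Ideal.one_eq_top, top_le_iff, Ideal.eq_top_iff_one]
    exact Ideal.subset_span ⟨0, 0, rfl, by simp⟩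
  | succ n ih =>
    rw [pow_succ]
    refine (Ideal.mul_mono_left ih).trans ?_
    rw [Ideal.span_mul_span', Ideal.span_le]
    rintro _ ⟨_, ⟨p, q, rfl, rfl⟩, z, hz, rfl⟩
    rcases hz with rfl | rfl
    · exact Ideal.subset_span ⟨p + 1, q, by ring, by simp only; ring⟩
    · exact Ideal.subset_span ⟨p, q + 1, by ring, by simp only; ring⟩

lemma derivation_mul_sub_mem (D : Derivation ℝ R R) {I : Ideal R} {m m' κ κ' : R} {a b : ℕ}
    (hm : m ∈ I ^ a) (hm' : m' ∈ I ^ b) (hD : D m - κ * m ∈ I ^ (a + 1))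
    (hD' : D m' - κ' * m' ∈ I ^ (b + 1)) :
    D (m * m') - (κ + κ') * (m * m') ∈ I ^ (a + b + 1) := by
  have h : D (m * m') - (κ + κ') * (m * m') = m * (D m' - κ' * m') + m' * (D m - κ * m) := by
    rw [Derivation.leibniz, smul_eq_mul, smul_eq_mul]; ring
  rw [h]
  refine add_mem ?_ ?_
  · rw [add_assoc, pow_add]; exact Ideal.mul_mem_mul hm hD'
  · rw [show a + b + 1 = b + (a + 1) by ring, pow_add]; exact Ideal.mul_mem_mul hm' hD

lemma derivation_pow_sub_mem (D : Derivation ℝ R R) {I : Ideal R} {x κ : R} (hx : x ∈ I)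
    (hD : D x - κ * x ∈ I ^ 2) (n : ℕ) : D (x ^ n) - (n : R) * κ * x ^ n ∈ I ^ (n + 1) := by
  induction n with
  | zero => simp
  | succ n ih =>
    have := derivation_mul_sub_mem D (a := n) (b := 1) (Ideal.pow_mem_pow hx n)
      (by simpa using hx) ih hD
    convert this using 1
    rw [pow_succ]
    push_cast; ring

/-- Solving the homological equation modulo terms of higher order. -/
lemma exists_sub_mem_pow_succ (D : Derivation ℝ R R) {x y κ₁ κ₂ c : R}
    (hI : ∀ r, D r ∈ Ideal.span {x, y}) (hx : D x - κ₁ * x ∈ Ideal.span {x, y} ^ 2)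
    (hy : D y - κ₂ * y ∈ Ideal.span {x, y} ^ 2) {n : ℕ}
    (hu : ∀ p q : ℕ, p + q = n → IsUnit ((p : R) * κ₁ + q * κ₂ - c)) {r : R}
    (hr : r ∈ Ideal.span {x, y} ^ n) :
    ∃ P ∈ Ideal.span {x, y} ^ n, D P - c * P - r ∈ Ideal.span {x, y} ^ (n + 1) := by
  have hxI : x ∈ Ideal.span {x, y} := Ideal.subset_span (by simp)
  have hyI : y ∈ Ideal.span {x, y} := Ideal.subset_span (by simp)
  have hmem : ∀ p q : ℕ, x ^ p * y ^ q ∈ Ideal.span {x, y} ^ (p + q) := fun p q => by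
    rw [pow_add]; exact Ideal.mul_mem_mul (Ideal.pow_mem_pow hxI p) (Ideal.pow_mem_pow hyI q)
  refine Submodule.span_induction (p := fun r _ => ∃ P ∈ Ideal.span {x, y} ^ n,
    D P - c * P - r ∈ Ideal.span {x, y} ^ (n + 1)) ?_ ?_ ?_ ?_ (span_pair_pow_le x y n hr)
  · rintro _ ⟨p, q, rfl, rfl⟩
    obtain ⟨e, he⟩ := (hu p q rfl).exists_left_inv
    refine ⟨e * (x ^ p * y ^ q), Ideal.mul_mem_left _ _ (hmem p q), ?_⟩
    have h1 := derivation_mul_sub_mem D (Ideal.pow_mem_pow hxI p) (Ideal.pow_mem_pow hyI q)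
      (derivation_pow_sub_mem D hxI hx p) (derivation_pow_sub_mem D hyI hy q)
    have h2 : D (e * (x ^ p * y ^ q)) - c * (e * (x ^ p * y ^ q)) - x ^ p * y ^ q =
        e * (D (x ^ p * y ^ q) - ((p : R) * κ₁ + q * κ₂) * (x ^ p * y ^ q))
          + x ^ p * y ^ q * D e := by
      rw [Derivation.leibniz D e, smul_eq_mul, smul_eq_mul]
      linear_combination (x ^ p * y ^ q) * he
    rw [h2]
    refine add_mem (Ideal.mul_mem_left _ _ h1) ?_
    rw [pow_succ]
    exact Ideal.mul_mem_mul (hmem p q) (hI e)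
  · exact ⟨0, zero_mem _, by simp⟩
  · rintro r s - - ⟨P, hP, hPr⟩ ⟨Q, hQ, hQs⟩
    refine ⟨P + Q, add_mem hP hQ, ?_⟩
    have : D (P + Q) - c * (P + Q) - (r + s) = (D P - c * P - r) + (D Q - c * Q - s) := by
      rw [map_add]; ring
    rw [this]
    exact add_mem hPr hQs
  · rintro h r - ⟨P, hP, hPr⟩
    refine ⟨h * P, Ideal.mul_mem_left _ _ hP, ?_⟩
    have : D (h * P) - c * (h * P) - h • r = h * (D P - c * P - r) + P * D h := by
      rw [Derivation.leibniz, smul_eq_mul, smul_eq_mul, smul_eq_mul]; ring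
    rw [this]
    refine add_mem (Ideal.mul_mem_left _ _ hPr) ?_
    rw [pow_succ]
    exact Ideal.mul_mem_mul hP (hI h)

/-- A formal power series solution of the homological equation. -/
lemma exists_formal_solution (D : Derivation ℝ R R) {x y κ₁ κ₂ c : R}
    (hI : ∀ r, D r ∈ Ideal.span {x, y}) (hx : D x - κ₁ * x ∈ Ideal.span {x, y} ^ 2)
    (hy : D y - κ₂ * y ∈ Ideal.span {x, y} ^ 2) {n₀ : ℕ}
    (hu : ∀ p q : ℕ, n₀ ≤ p + q → IsUnit ((p : R) * κ₁ + q * κ₂ - c)) {g : R}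
    (hg : g ∈ Ideal.span {x, y} ^ n₀) :
    ∃ P : ℕ → R, (∀ k, P k ∈ Ideal.span {x, y} ^ k) ∧ (∀ k < n₀, P k = 0) ∧
      ∀ n, D (∑ k ∈ Finset.range n, P k) - c * (∑ k ∈ Finset.range n, P k) - g ∈
        Ideal.span {x, y} ^ n := by
  set I := Ideal.span {x, y} with hIdef
  have step : ∀ (n : ℕ) (r : R), ∃ P : R, (n₀ ≤ n → r ∈ I ^ n → P ∈ I ^ n ∧
      D P - c * P - r ∈ I ^ (n + 1)) ∧ (n < n₀ → P = 0) := by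
    intro n r
    by_cases hn : n₀ ≤ n ∧ r ∈ I ^ n
    · obtain ⟨P, hP, hP'⟩ := exists_sub_mem_pow_succ D hI hx hy
        (fun p q h => hu p q (by omega)) hn.2
      exact ⟨P, fun _ _ => ⟨hP, hP'⟩, fun h => by omega⟩
    · exact ⟨0, fun h1 h2 => absurd ⟨h1, h2⟩ hn, fun _ => rfl⟩
  choose F hF hF0 using step
  let s : ℕ → R := fun n => Nat.rec 0 (fun n s => s + F n (g - (D s - c * s))) n
  have hs0 : s 0 = 0 := rfl
  have hs : ∀ n, s (n + 1) = s n + F n (g - (D (s n) - c * s n)) := fun n => rfl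
  have hsum : ∀ n, ∑ k ∈ Finset.range n, F k (g - (D (s k) - c * s k)) = s n := by
    intro n
    induction n with
    | zero => simp [hs0]
    | succ n ih => rw [Finset.sum_range_succ, ih, hs]
  have hres : ∀ n, g - (D (s n) - c * s n) ∈ I ^ n := by
    intro n
    induction n with
    | zero => simp
    | succ n ih =>
      by_cases hn : n₀ ≤ n
      · have := neg_mem (hF n _ hn ih).2
        rw [hs, map_add]
        convert this using 1
        ring
      · have hz : ∀ m ≤ n + 1, s m = 0 := by
          intro m
          induction m with
          | zero => exact fun _ => hs0
          | succ m ihm =>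
            intro hm
            rw [hs, hF0 m _ (by omega), add_zero, ihm (by omega)]
        rw [hz _ le_rfl]
        simpa using Ideal.pow_le_pow_right (by omega) hg
  refine ⟨fun k => F k (g - (D (s k) - c * s k)), fun k => ?_, fun k hk => hF0 k _ hk, fun n => ?_⟩
  · by_cases hk : n₀ ≤ k
    · exact (hF k _ hk (hres k)).1
    · simp only [hF0 k _ (not_le.1 hk)]; exact zero_mem _
  · rw [hsum]
    have := neg_mem (hres n)
    rwa [neg_sub] at this

end Formal

section SmoothRing

variable {E : Type} [NormedAddCommGroup E] [NormedSpace ℝ E]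

/-- The ring of smooth real functions on `E`. -/
def smoothRing (E : Type) [NormedAddCommGroup E] [NormedSpace ℝ E] : Subalgebra ℝ (E → ℝ) where
  carrier := {f | ContDiff ℝ ∞ f}
  mul_mem' {f g} (hf : ContDiff ℝ ∞ f) (hg : ContDiff ℝ ∞ g) := hf.mul hg
  add_mem' {f g} (hf : ContDiff ℝ ∞ f) (hg : ContDiff ℝ ∞ g) := hf.add hg
  algebraMap_mem' r := (contDiff_const : ContDiff ℝ ∞ fun _ : E => r)

lemma smoothRing_contDiff (f : smoothRing E) : ContDiff ℝ ∞ (f : E → ℝ) := f.2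

/-- The Lie derivative along a smooth vector field. -/
noncomputable def lieDerivation (V : E → E) (hV : ContDiff ℝ ∞ V) : Derivation ℝ (smoothRing E) (smoothRing E) :=
  Derivation.mk'
    { toFun := fun f => ⟨fun x => fderiv ℝ (f : E → ℝ) x (V x),
        ((smoothRing_contDiff f).fderiv_right (m := ∞) (by simp)).clm_apply hV⟩
      map_add' := fun f g => by
        ext x
        have hf := (smoothRing_contDiff f).differentiable (by simp) x
        have hg := (smoothRing_contDiff g).differentiable (by simp) x
        simp [fderiv_add hf hg]
      map_smul' := fun r f => by
        ext x
        have hf := (smoothRing_contDiff f).differentiable (by simp) x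
        simp [fderiv_const_smul hf r] }
    fun f g => by
      ext x
      have hf := (smoothRing_contDiff f).differentiable (by simp) x
      have hg := (smoothRing_contDiff g).differentiable (by simp) x
      simp [fderiv_mul hf hg]

lemma lieDerivation_apply (V : E → E) (hV : ContDiff ℝ ∞ V) (f : smoothRing E) (x : E) :
    (lieDerivation V hV f : E → ℝ) x = fderiv ℝ (f : E → ℝ) x (V x) := rfl

lemma isUnit_smoothRing {f : smoothRing E} (hf : ∀ x, (f : E → ℝ) x ≠ 0) : IsUnit f :=
  .of_mul_eq_one (⟨fun x => ((f : E → ℝ) x)⁻¹, (smoothRing_contDiff f).inv hf⟩ : smoothRing E)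
    (by ext x; exact mul_inv_cancel₀ (hf x))

lemma jetAt_of_mem_pow {I : Ideal (smoothRing E)} {x : E}
    (hI : ∀ f ∈ I, (f : E → ℝ) x = 0) {n : ℕ} {f : smoothRing E} (hf : f ∈ I ^ n) :
    JetAt n (f : E → ℝ) x := by
  induction n generalizing f with
  | zero => exact jetAt_zero _ _
  | succ n ih =>
    rw [pow_succ] at hf
    refine Submodule.mul_induction_on (C := fun f : smoothRing E => JetAt (n + 1) (f : E → ℝ) x) hf
      (fun a ha b hb => ?_) (fun a b ha hb => ?_)
    · exact JetAt.mul (smoothRing_contDiff a) (smoothRing_contDiff b) (ih ha) (jetAt_one (hI b hb))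
    · exact JetAt.add (smoothRing_contDiff a) (smoothRing_contDiff b) ha hb

end SmoothRing

section FormalSolution

variable {Z : Type} [NormedAddCommGroup Z] [NormedSpace ℝ Z] [FiniteDimensional ℝ Z]

/-- `u` is a left eigenvector with eigenvalue `lam`, at the point `(0, 0, ζ)`, of the transversal
linear part of the vector field `ξ • F₁ + η • F₂`. -/
def EigenForm (F₁ F₂ : ℝ × ℝ × Z → ℝ × ℝ × Z) (u : Z → ℝ × ℝ) (lam : Z → ℝ) (ζ : Z) : Prop :=
  (u ζ).1 * (F₁ (0, 0, ζ)).1 + (u ζ).2 * (F₁ (0, 0, ζ)).2.1 = lam ζ * (u ζ).1 ∧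
  (u ζ).1 * (F₂ (0, 0, ζ)).1 + (u ζ).2 * (F₂ (0, 0, ζ)).2.1 = lam ζ * (u ζ).2

/-- The vector field `ξ • F₁ + η • F₂`, vanishing along the subspace `ξ = η = 0`. -/
def axisField (F₁ F₂ : ℝ × ℝ × Z → ℝ × ℝ × Z) (x : ℝ × ℝ × Z) : ℝ × ℝ × Z :=
  x.1 • F₁ x + x.2.1 • F₂ x

lemma contDiff_axisField {F₁ F₂ : ℝ × ℝ × Z → ℝ × ℝ × Z} (hF₁ : ContDiff ℝ ∞ F₁)
    (hF₂ : ContDiff ℝ ∞ F₂) : ContDiff ℝ ∞ (axisField F₁ F₂) := by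
  unfold axisField; fun_prop

/-- The coordinate `ξ`, as a smooth function. -/
def axisCoord₁ (Z : Type) [NormedAddCommGroup Z] [NormedSpace ℝ Z] : smoothRing (ℝ × ℝ × Z) :=
  ⟨fun x => x.1, (contDiff_fst : ContDiff ℝ ∞ _)⟩

/-- The coordinate `η`, as a smooth function. -/
def axisCoord₂ (Z : Type) [NormedAddCommGroup Z] [NormedSpace ℝ Z] : smoothRing (ℝ × ℝ × Z) :=
  ⟨fun x => x.2.1, (contDiff_fst.comp contDiff_snd : ContDiff ℝ ∞ _)⟩

lemma mem_of_vanishing {I : Ideal (smoothRing (ℝ × ℝ × Z))} (h₁ : axisCoord₁ Z ∈ I)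
    (h₂ : axisCoord₂ Z ∈ I) {f : smoothRing (ℝ × ℝ × Z)}
    (hf : ∀ ζ, (f : ℝ × ℝ × Z → ℝ) (0, 0, ζ) = 0) : f ∈ I := by
  obtain ⟨g, h, hg, hh, hgh⟩ := exists_eq_mul_add_mul (smoothRing_contDiff f) hf
  have : f = (⟨g, hg⟩ : smoothRing (ℝ × ℝ × Z)) * axisCoord₁ Z
      + (⟨h, hh⟩ : smoothRing (ℝ × ℝ × Z)) * axisCoord₂ Z := by
    ext x; exact hgh x
  rw [this]
  exact add_mem (Ideal.mul_mem_left _ _ h₁) (Ideal.mul_mem_left _ _ h₂)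

lemma lieDerivation_mem {I : Ideal (smoothRing (ℝ × ℝ × Z))} (h₁ : axisCoord₁ Z ∈ I)
    (h₂ : axisCoord₂ Z ∈ I) {F₁ F₂ : ℝ × ℝ × Z → ℝ × ℝ × Z}
    (hV : ContDiff ℝ ∞ (axisField F₁ F₂)) (f : smoothRing (ℝ × ℝ × Z)) :
    lieDerivation _ hV f ∈ I :=
  mem_of_vanishing h₁ h₂ fun ζ => by simp [lieDerivation_apply, axisField]

lemma lieDerivation_sub_mem {I : Ideal (smoothRing (ℝ × ℝ × Z))} (h₁ : axisCoord₁ Z ∈ I)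
    (h₂ : axisCoord₂ Z ∈ I) {F₁ F₂ : ℝ × ℝ × Z → ℝ × ℝ × Z} (hF₁ : ContDiff ℝ ∞ F₁)
    (hF₂ : ContDiff ℝ ∞ F₂) {u : Z → ℝ × ℝ} {lam : Z → ℝ}
    {U₁ U₂ K : smoothRing (ℝ × ℝ × Z)} (hU₁ : ∀ x, (U₁ : ℝ × ℝ × Z → ℝ) x = (u x.2.2).1)
    (hU₂ : ∀ x, (U₂ : ℝ × ℝ × Z → ℝ) x = (u x.2.2).2)
    (hK : ∀ x, (K : ℝ × ℝ × Z → ℝ) x = lam x.2.2) (he : ∀ ζ, EigenForm F₁ F₂ u lam ζ) :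
    lieDerivation _ (contDiff_axisField hF₁ hF₂) (U₁ * axisCoord₁ Z + U₂ * axisCoord₂ Z)
      - K * (U₁ * axisCoord₁ Z + U₂ * axisCoord₂ Z) ∈ I ^ 2 := by
  set D := lieDerivation _ (contDiff_axisField hF₁ hF₂)
  let A : smoothRing (ℝ × ℝ × Z) := ⟨fun x => (F₁ x).1, (by fun_prop : ContDiff ℝ ∞ _)⟩
  let B : smoothRing (ℝ × ℝ × Z) := ⟨fun x => (F₂ x).1, (by fun_prop : ContDiff ℝ ∞ _)⟩
  let A' : smoothRing (ℝ × ℝ × Z) := ⟨fun x => (F₁ x).2.1, (by fun_prop : ContDiff ℝ ∞ _)⟩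
  let B' : smoothRing (ℝ × ℝ × Z) := ⟨fun x => (F₂ x).2.1, (by fun_prop : ContDiff ℝ ∞ _)⟩
  have hD₁ : D (axisCoord₁ Z) = axisCoord₁ Z * A + axisCoord₂ Z * B := by
    ext x
    have : fderiv ℝ (fun x : ℝ × ℝ × Z => x.1) x = ContinuousLinearMap.fst ℝ ℝ (ℝ × Z) :=
      fderiv_fst
    show fderiv ℝ (fun x : ℝ × ℝ × Z => x.1) x (axisField F₁ F₂ x) = _
    rw [this]
    rfl
  have hD₂ : D (axisCoord₂ Z) = axisCoord₁ Z * A' + axisCoord₂ Z * B' := by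
    ext x
    have : fderiv ℝ (fun x : ℝ × ℝ × Z => x.2.1) x =
        (ContinuousLinearMap.fst ℝ ℝ Z).comp (ContinuousLinearMap.snd ℝ ℝ (ℝ × Z)) :=
      ((ContinuousLinearMap.fst ℝ ℝ Z).comp (ContinuousLinearMap.snd ℝ ℝ (ℝ × Z))).fderiv
    show fderiv ℝ (fun x : ℝ × ℝ × Z => x.2.1) x (axisField F₁ F₂ x) = _
    rw [this]
    rfl
  have h : D (U₁ * axisCoord₁ Z + U₂ * axisCoord₂ Z)
      - K * (U₁ * axisCoord₁ Z + U₂ * axisCoord₂ Z) =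
      axisCoord₁ Z * ((U₁ * A + U₂ * A' - K * U₁) + D U₁)
        + axisCoord₂ Z * ((U₁ * B + U₂ * B' - K * U₂) + D U₂) := by
    rw [map_add, Derivation.leibniz, Derivation.leibniz, hD₁, hD₂]
    simp only [smul_eq_mul]
    ring
  have hDm := lieDerivation_mem h₁ h₂ (contDiff_axisField hF₁ hF₂)
  rw [h, pow_two]
  refine add_mem (Ideal.mul_mem_mul h₁ (add_mem ?_ (hDm _)))
    (Ideal.mul_mem_mul h₂ (add_mem ?_ (hDm _)))
  · refine mem_of_vanishing h₁ h₂ fun ζ => ?_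
    have := (he ζ).1
    show (U₁ : ℝ × ℝ × Z → ℝ) (0, 0, ζ) * (F₁ (0, 0, ζ)).1
      + (U₂ : ℝ × ℝ × Z → ℝ) (0, 0, ζ) * (F₁ (0, 0, ζ)).2.1
      - (K : ℝ × ℝ × Z → ℝ) (0, 0, ζ) * (U₁ : ℝ × ℝ × Z → ℝ) (0, 0, ζ) = 0
    rw [hU₁, hU₂, hK, this, sub_self]
  · refine mem_of_vanishing h₁ h₂ fun ζ => ?_
    have := (he ζ).2
    show (U₁ : ℝ × ℝ × Z → ℝ) (0, 0, ζ) * (F₂ (0, 0, ζ)).1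
      + (U₂ : ℝ × ℝ × Z → ℝ) (0, 0, ζ) * (F₂ (0, 0, ζ)).2.1
      - (K : ℝ × ℝ × Z → ℝ) (0, 0, ζ) * (U₂ : ℝ × ℝ × Z → ℝ) (0, 0, ζ) = 0
    rw [hU₁, hU₂, hK, this, sub_self]

/-- A function solving the homological equation up to an error that is flat along the axis. -/
theorem exists_solution_mod_flat {F₁ F₂ : ℝ × ℝ × Z → ℝ × ℝ × Z} (hF₁ : ContDiff ℝ ∞ F₁)
    (hF₂ : ContDiff ℝ ∞ F₂) {u₁ u₂ : Z → ℝ × ℝ} (hu₁ : ContDiff ℝ ∞ u₁) (hu₂ : ContDiff ℝ ∞ u₂)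
    {lam₁ lam₂ : Z → ℝ} (hlam₁ : ContDiff ℝ ∞ lam₁) (hlam₂ : ContDiff ℝ ∞ lam₂)
    (hdet : ∀ ζ, (u₁ ζ).1 * (u₂ ζ).2 - (u₁ ζ).2 * (u₂ ζ).1 ≠ 0)
    (he₁ : ∀ ζ, EigenForm F₁ F₂ u₁ lam₁ ζ) (he₂ : ∀ ζ, EigenForm F₁ F₂ u₂ lam₂ ζ)
    {c : ℝ} {n₀ : ℕ} (hres : ∀ ζ, ∀ p q : ℕ, n₀ ≤ p + q → p * lam₁ ζ + q * lam₂ ζ ≠ c)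
    {g₁ g₂ : ℝ × ℝ × Z → ℝ} (hg₁ : ContDiff ℝ ∞ g₁) (hg₂ : ContDiff ℝ ∞ g₂)
    (hn₀ : n₀ ≤ 1 ∨ n₀ = 2 ∧ ∀ ζ, g₁ (0, 0, ζ) = 0 ∧ g₂ (0, 0, ζ) = 0) :
    ∃ f : ℝ × ℝ × Z → ℝ, ContDiff ℝ ∞ f ∧ (∀ x, JetAt n₀ f (axisProj Z x)) ∧
      ∀ᶠ x in 𝓝 0, ∀ n, JetAt n (fun y => fderiv ℝ f y (axisField F₁ F₂ y) - c * f y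
        - (g₁ y * y.1 + g₂ y * y.2.1)) (axisProj Z x) := by
  have hVs := contDiff_axisField hF₁ hF₂
  let U₁₁ : smoothRing (ℝ × ℝ × Z) := ⟨fun x => (u₁ x.2.2).1, (by fun_prop : ContDiff ℝ ∞ _)⟩
  let U₁₂ : smoothRing (ℝ × ℝ × Z) := ⟨fun x => (u₁ x.2.2).2, (by fun_prop : ContDiff ℝ ∞ _)⟩
  let U₂₁ : smoothRing (ℝ × ℝ × Z) := ⟨fun x => (u₂ x.2.2).1, (by fun_prop : ContDiff ℝ ∞ _)⟩
  let U₂₂ : smoothRing (ℝ × ℝ × Z) := ⟨fun x => (u₂ x.2.2).2, (by fun_prop : ContDiff ℝ ∞ _)⟩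
  let K₁ : smoothRing (ℝ × ℝ × Z) := ⟨fun x => lam₁ x.2.2, (by fun_prop : ContDiff ℝ ∞ _)⟩
  let K₂ : smoothRing (ℝ × ℝ × Z) := ⟨fun x => lam₂ x.2.2, (by fun_prop : ContDiff ℝ ∞ _)⟩
  let C : smoothRing (ℝ × ℝ × Z) := ⟨fun _ => c, (contDiff_const : ContDiff ℝ ∞ _)⟩
  let G₁ : smoothRing (ℝ × ℝ × Z) := ⟨g₁, hg₁⟩
  let G₂ : smoothRing (ℝ × ℝ × Z) := ⟨g₂, hg₂⟩
  set ℓ₁ := U₁₁ * axisCoord₁ Z + U₁₂ * axisCoord₂ Z with hℓ₁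
  set ℓ₂ := U₂₁ * axisCoord₁ Z + U₂₂ * axisCoord₂ Z with hℓ₂
  set I := Ideal.span {ℓ₁, ℓ₂} with hI
  have hℓ₁I : ℓ₁ ∈ I := Ideal.subset_span (by simp)
  have hℓ₂I : ℓ₂ ∈ I := Ideal.subset_span (by simp)
  obtain ⟨e, hedet⟩ := (isUnit_smoothRing (f := U₁₁ * U₂₂ - U₁₂ * U₂₁)
    fun x => hdet x.2.2).exists_left_inv
  have h₁ : axisCoord₁ Z ∈ I := by
    have : axisCoord₁ Z = e * U₂₂ * ℓ₁ - e * U₁₂ * ℓ₂ := by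
      rw [hℓ₁, hℓ₂]; linear_combination -axisCoord₁ Z * hedet
    rw [this]
    exact sub_mem (Ideal.mul_mem_left _ _ hℓ₁I) (Ideal.mul_mem_left _ _ hℓ₂I)
  have h₂ : axisCoord₂ Z ∈ I := by
    have : axisCoord₂ Z = e * U₁₁ * ℓ₂ - e * U₂₁ * ℓ₁ := by
      rw [hℓ₁, hℓ₂]; linear_combination -axisCoord₂ Z * hedet
    rw [this]
    exact sub_mem (Ideal.mul_mem_left _ _ hℓ₂I) (Ideal.mul_mem_left _ _ hℓ₁I)
  have hvan : ∀ x, ∀ f ∈ I, (f : ℝ × ℝ × Z → ℝ) (axisProj Z x) = 0 := by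
    intro x f hf
    obtain ⟨a, b, rfl⟩ := Ideal.mem_span_pair.1 hf
    simp [hℓ₁, hℓ₂, axisCoord₁, axisCoord₂]
  have hgI : G₁ * axisCoord₁ Z + G₂ * axisCoord₂ Z ∈ I ^ n₀ := by
    rcases hn₀ with hn₀ | ⟨rfl, hg0⟩
    · refine Ideal.pow_le_pow_right hn₀ ?_
      rw [pow_one]
      exact add_mem (Ideal.mul_mem_left _ _ h₁) (Ideal.mul_mem_left _ _ h₂)
    · rw [pow_two]
      exact add_mem (Ideal.mul_mem_mul (mem_of_vanishing h₁ h₂ fun ζ => (hg0 ζ).1) h₁)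
        (Ideal.mul_mem_mul (mem_of_vanishing h₁ h₂ fun ζ => (hg0 ζ).2) h₂)
  obtain ⟨P, hP, hP0, hPr⟩ := exists_formal_solution (lieDerivation _ hVs) (x := ℓ₁) (y := ℓ₂)
    (κ₁ := K₁) (κ₂ := K₂) (c := C) (lieDerivation_mem h₁ h₂ hVs)
    (lieDerivation_sub_mem h₁ h₂ hF₁ hF₂ (fun _ => rfl) (fun _ => rfl) (fun _ => rfl) he₁)
    (lieDerivation_sub_mem h₁ h₂ hF₁ hF₂ (fun _ => rfl) (fun _ => rfl) (fun _ => rfl) he₂)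
    (fun p q hpq => isUnit_smoothRing fun x => sub_ne_zero.2 (hres x.2.2 p q hpq)) hgI
  have hpp : ∀ x, axisProj Z (axisProj Z x) = axisProj Z x := fun x => by simp
  obtain ⟨ψ, hψ, hψc, -, hψ1, -⟩ := exists_cutoff (univ_mem : Set.univ ∈ 𝓝 (0 : ℝ × ℝ × Z))
  have hQJ : ∀ k x, JetAt k (fun y => ψ y * (P k : ℝ × ℝ × Z → ℝ) y) (axisProj Z x) := fun k x => by
    have := JetAt.mul hψ (smoothRing_contDiff (P k)) (jetAt_zero ψ (axisProj Z x))
      (jetAt_of_mem_pow (hvan x) (hP k))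
    rwa [zero_add] at this
  obtain ⟨f, hf, hfJ⟩ := exists_borel_sum hpp (fun k y => ψ y * (P k : ℝ × ℝ × Z → ℝ) y)
    (fun k => hψ.mul (smoothRing_contDiff (P k))) (fun k => hψc.mul_right) hQJ
  refine ⟨f, hf, fun x => ?_, ?_⟩
  · refine (hfJ n₀ x).congr (Eventually.of_forall fun y => ?_)
    show f y - _ = f y
    rw [Finset.sum_eq_zero, sub_zero]
    intro k hk
    rw [hP0 k (Finset.mem_range.1 hk)]
    simp
  have hp0 : Tendsto (axisProj Z) (𝓝 0) (𝓝 0) := by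
    have := (axisProj Z).continuous.tendsto 0
    rwa [map_zero] at this
  filter_upwards [hp0.eventually (eventually_eventually_nhds.2 hψ1)] with x hx n
  set S : smoothRing (ℝ × ℝ × Z) := ∑ k ∈ Finset.range (n + 1), P k with hS
  have hSJ := jetAt_of_mem_pow (hvan x) (Ideal.pow_le_pow_right (Nat.le_succ n) (hPr (n + 1)))
  have hdS : ContDiff ℝ ∞ (fun y => f y - (S : ℝ × ℝ × Z → ℝ) y) := hf.sub (smoothRing_contDiff S)
  have hd : JetAt (n + 1) (fun y => f y - (S : ℝ × ℝ × Z → ℝ) y) (axisProj Z x) := by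
    refine (hfJ (n + 1) x).congr ?_
    filter_upwards [hx] with y hy
    simp only [hy, one_mul, hS, AddSubmonoidClass.coe_finsetSum, Finset.sum_apply]
  have h1 := JetAt.add (hdS.fderiv_right (m := ∞) (by simp) |>.clm_apply hVs)
    (contDiff_const (c := -c) |>.mul hdS) (hd.fderiv_apply hdS hVs)
    (by
      have := JetAt.mul (contDiff_const (c := -c)) hdS (jetAt_zero (fun _ => -c) (axisProj Z x)) hd
      rw [zero_add] at this
      exact this.mono (Nat.le_succ n))
  have h2 := JetAt.add ((hdS.fderiv_right (m := ∞) (by simp) |>.clm_apply hVs).add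
    (contDiff_const (c := -c) |>.mul hdS)) (smoothRing_contDiff _) h1 hSJ
  refine h2.congr (Eventually.of_forall fun y => ?_)
  have hfy := hf.differentiable (by simp) y
  have hSy := (smoothRing_contDiff S).differentiable (by simp) y
  show fderiv ℝ (fun y => f y - (S : ℝ × ℝ × Z → ℝ) y) y (axisField F₁ F₂ y)
    + -c * (f y - (S : ℝ × ℝ × Z → ℝ) y)
    + (fderiv ℝ (S : ℝ × ℝ × Z → ℝ) y (axisField F₁ F₂ y) - c * (S : ℝ × ℝ × Z → ℝ) y
      - (g₁ y * y.1 + g₂ y * y.2.1)) = _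
  rw [fderiv_fun_sub hfy hSy]
  simp only [sub_apply]
  ring

end FormalSolution

section Cones

variable {E : Type} [NormedAddCommGroup E] [NormedSpace ℝ E] [FiniteDimensional ℝ E]

lemma jetAt_succ_of_fderiv_apply {n : ℕ} {f : E → ℝ} {x : E} (hf : ContDiff ℝ (n + 1 : ℕ) f)
    (h0 : f x = 0) (h : ∀ v, JetAt n (fun y => fderiv ℝ f y v) x) : JetAt (n + 1) f x := by
  intro j hj
  rcases j with _ | j
  · exact jetAt_one h0 0 one_pos
  · ext m
    have hd : ContDiff ℝ n (fderiv ℝ f) := hf.fderiv_right (by norm_cast)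
    rw [iteratedFDeriv_succ_apply_right, ← iteratedFDeriv_clm_apply_const_apply hd
      (by exact_mod_cast (by omega : j ≤ n)), h (m (Fin.last j)) j (by omega)]
    rfl

/-- A compactly supported smooth function that is flat along the range of `π`. -/
structure FlatAlong (π : E →L[ℝ] E) (F : E → ℝ) : Prop where
  contDiff : ContDiff ℝ ∞ F
  hasCompactSupport : HasCompactSupport F
  jetAt : ∀ n x, JetAt n F (π x)

namespace FlatAlong

variable {π : E →L[ℝ] E} {F : E → ℝ}

lemma mul_left (hF : FlatAlong π F) {g : E → ℝ} (hg : ContDiff ℝ ∞ g) :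
    FlatAlong π (fun x => g x * F x) where
  contDiff := hg.mul hF.contDiff
  hasCompactSupport := hF.hasCompactSupport.mul_left
  jetAt n x := by
    have := JetAt.mul hg hF.contDiff (jetAt_zero g (π x)) (hF.jetAt n x)
    rwa [zero_add] at this

lemma fderiv_apply (hF : FlatAlong π F) (v : E) : FlatAlong π (fun x => fderiv ℝ F x v) where
  contDiff := (hF.contDiff.fderiv_right (m := ∞) (by simp)).clm_apply contDiff_const
  hasCompactSupport := hF.hasCompactSupport.fderiv_apply (𝕜 := ℝ) v
  jetAt n x := (hF.jetAt (n + 1) x).fderiv_apply hF.contDiff contDiff_const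

lemma eq_zero (hF : FlatAlong π F) (x : E) : F (π x) = 0 := by
  simpa [iteratedFDeriv_zero_eq_comp] using
    congrArg (fun m => m 0) (hF.jetAt 1 x 0 one_pos)

end FlatAlong

/-- The model of a function cut off to a cone around the range of `π`. -/
noncomputable def conicTerm (p q : E →L[ℝ] ℝ) (σ : ℝ → ℝ) (N : ℕ) (F : E → ℝ) (x : E) : ℝ :=
  σ (p x ^ 2 / (p x ^ 2 + q x ^ 2)) * F x / (p x ^ 2 + q x ^ 2) ^ N

variable {π : E →L[ℝ] E} {p q : E →L[ℝ] ℝ} {C₀ : ℝ}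

lemma exists_abs_conicTerm_le (hπ : ∀ x, π (π x) = π x)
    (hC₀ : ∀ x, ‖x - π x‖ ^ 2 ≤ C₀ * (p x ^ 2 + q x ^ 2))
    {σ : ℝ → ℝ} (hσ : ContDiff ℝ ∞ σ) (N : ℕ) {F : E → ℝ}
    (hF : FlatAlong π F) : ∃ C, 0 ≤ C ∧ ∀ x, |conicTerm p q σ N F x| ≤ C * ‖x - π x‖ ^ 2 := by
  obtain ⟨B, hB⟩ := (isCompact_Icc (a := (0 : ℝ)) (b := 1)).exists_bound_of_continuousOn
    hσ.continuous.continuousOn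
  have hB0 : 0 ≤ B := (norm_nonneg _).trans (hB 0 (by simp))
  obtain ⟨C, hC0, hC⟩ := exists_norm_iteratedFDeriv_le hπ hF.contDiff hF.hasCompactSupport
    (2 * N + 2) 0 (fun x => hF.jetAt _ x)
  refine ⟨B * (C * |C₀| ^ N), by positivity, fun x => ?_⟩
  have hr0 : 0 ≤ p x ^ 2 + q x ^ 2 := by positivity
  have ht : |σ (p x ^ 2 / (p x ^ 2 + q x ^ 2))| ≤ B := by
    refine hB _ ⟨by positivity, div_le_one_of_le₀ ?_ hr0⟩
    nlinarith [sq_nonneg (q x)]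
  have hFx := hC x
  rw [norm_iteratedFDeriv_zero, Real.norm_eq_abs] at hFx
  have h1 : |F x| ≤ C * |C₀| ^ N * ‖x - π x‖ ^ 2 * (p x ^ 2 + q x ^ 2) ^ N := by
    refine hFx.trans ?_
    rw [pow_add, pow_mul]
    have : (‖x - π x‖ ^ 2) ^ N ≤ (|C₀| * (p x ^ 2 + q x ^ 2)) ^ N := by
      refine pow_le_pow_left₀ (by positivity) ((hC₀ x).trans ?_) N
      exact mul_le_mul_of_nonneg_right (le_abs_self _) hr0
    rw [mul_pow] at this
    calc _ ≤ C * ((|C₀| ^ N * (p x ^ 2 + q x ^ 2) ^ N) * ‖x - π x‖ ^ 2) := by gcongr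
      _ = _ := by ring
  rw [conicTerm, abs_div, abs_mul, abs_of_nonneg (pow_nonneg hr0 N)]
  refine div_le_of_le_mul₀ (by positivity) (by positivity) ?_
  calc _ ≤ B * (C * |C₀| ^ N * ‖x - π x‖ ^ 2 * (p x ^ 2 + q x ^ 2) ^ N) := by gcongr
    _ = _ := by ring

lemma eq_proj_of_sq_add_sq_eq_zero (hC₀ : ∀ x, ‖x - π x‖ ^ 2 ≤ C₀ * (p x ^ 2 + q x ^ 2))
    {x : E} (h : p x ^ 2 + q x ^ 2 = 0) : x = π x := by
  have := hC₀ x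
  rw [h, mul_zero] at this
  have h2 : ‖x - π x‖ = 0 := by nlinarith [norm_nonneg (x - π x)]
  exact sub_eq_zero.1 (norm_eq_zero.1 h2)

lemma hasFDerivAt_conicTerm_proj (hπ : ∀ x, π (π x) = π x)
    (hC₀ : ∀ x, ‖x - π x‖ ^ 2 ≤ C₀ * (p x ^ 2 + q x ^ 2))
    {σ : ℝ → ℝ} (hσ : ContDiff ℝ ∞ σ) (N : ℕ) {F : E → ℝ}
    (hF : FlatAlong π F) (x : E) : HasFDerivAt (conicTerm p q σ N F) (0 : E →L[ℝ] ℝ) (π x) := by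
  obtain ⟨C, hC0, hC⟩ := exists_abs_conicTerm_le hπ hC₀ hσ N hF
  refine HasFDerivAt.of_isLittleO ?_
  have h0 : conicTerm p q σ N F (π x) = 0 := by simp [conicTerm, hF.eq_zero]
  have hz : ∀ y, conicTerm p q σ N F y - conicTerm p q σ N F (π x)
      - (0 : E →L[ℝ] ℝ) (y - π x) = conicTerm p q σ N F y := fun y => by simp [h0]
  simp only [hz]
  have hO : (fun y => conicTerm p q σ N F y) =O[𝓝 (π x)] fun y => ‖y - π x‖ ^ 2 := by
    refine Asymptotics.IsBigO.of_bound (C * (1 + ‖π‖) ^ 2) (Eventually.of_forall fun y => ?_)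
    have h1 : ‖y - π y‖ ≤ (1 + ‖π‖) * ‖y - π x‖ := by
      have : y - π y = (y - π x) - π (y - π x) := by rw [map_sub, hπ]; abel
      rw [this, add_mul, one_mul]
      exact (norm_sub_le _ _).trans (add_le_add le_rfl (π.le_opNorm _))
    calc ‖conicTerm p q σ N F y‖ ≤ C * ‖y - π y‖ ^ 2 := hC y
      _ ≤ C * ((1 + ‖π‖) * ‖y - π x‖) ^ 2 := by gcongr
      _ = C * (1 + ‖π‖) ^ 2 * ‖‖y - π x‖ ^ 2‖ := by
        rw [Real.norm_of_nonneg (by positivity)]; ring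
  refine hO.trans_isLittleO ?_
  have := Asymptotics.isLittleO_pow_sub_sub (E' := E) (π x) (one_lt_two)
  simpa using this

lemma hasLineDerivAt_conicTerm {σ : ℝ → ℝ} (hσ : ContDiff ℝ ∞ σ) (N : ℕ) {F : E → ℝ}
    (hF : ContDiff ℝ ∞ F) {x : E} (hx : p x ^ 2 + q x ^ 2 ≠ 0) (v : E) :
    HasLineDerivAt ℝ (conicTerm p q σ N F)
      (conicTerm p q (deriv σ) (N + 2) (fun y => (2 * p y * p v * (p y ^ 2 + q y ^ 2)
          - p y ^ 2 * (2 * p y * p v + 2 * q y * q v)) * F y) x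
        + conicTerm p q σ N (fun y => fderiv ℝ F y v) x
        + conicTerm p q σ (N + 1) (fun y => (-N * (2 * p y * p v + 2 * q y * q v)) * F y) x) x v := by
  have hlin : ∀ f : E →L[ℝ] ℝ, HasDerivAt (fun s : ℝ => f (x + s • v)) (f v) 0 := fun f =>
    f.hasFDerivAt.hasLineDerivAt v
  have hP := (hlin p).pow 2
  have hr := hP.add ((hlin q).pow 2)
  have hFl : HasDerivAt (fun s : ℝ => F (x + s • v)) (fderiv ℝ F x v) 0 :=
    (hF.differentiable (by simp) x).hasFDerivAt.hasLineDerivAt v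
  have hx' : p (x + (0 : ℝ) • v) ^ 2 + q (x + (0 : ℝ) • v) ^ 2 ≠ 0 := by simpa using hx
  have hσl := (hσ.differentiable (by simp) _).hasDerivAt.comp 0 (hP.div hr hx')
  have h := (hσl.mul hFl).div (hr.pow N) (pow_ne_zero N hx')
  refine HasDerivAt.congr_deriv (f := fun s : ℝ => conicTerm p q σ N F (x + s • v)) h ?_
  simp only [conicTerm, Pi.div_apply, Pi.pow_apply, Pi.add_apply, Pi.mul_apply, Function.comp,
    zero_smul, add_zero]
  rcases N with _ | N
  · field_simp
    simp
    ring
  · simp only [Nat.add_sub_cancel]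
    field_simp
    push_cast
    ring

lemma differentiable_conicTerm (hπ : ∀ x, π (π x) = π x)
    (hC₀ : ∀ x, ‖x - π x‖ ^ 2 ≤ C₀ * (p x ^ 2 + q x ^ 2))
    {σ : ℝ → ℝ} (hσ : ContDiff ℝ ∞ σ) (N : ℕ) {F : E → ℝ}
    (hF : FlatAlong π F) : Differentiable ℝ (conicTerm p q σ N F) := by
  intro x
  by_cases hx : p x ^ 2 + q x ^ 2 = 0
  · rw [eq_proj_of_sq_add_sq_eq_zero hC₀ hx]
    exact (hasFDerivAt_conicTerm_proj hπ hC₀ hσ N hF x).differentiableAt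
  · have h1 := hσ.differentiable (by simp)
    have h2 := hF.contDiff.differentiable (by simp)
    unfold conicTerm
    have hN := pow_ne_zero N hx
    fun_prop (disch := assumption)

lemma fderiv_conicTerm_apply (hπ : ∀ x, π (π x) = π x)
    (hC₀ : ∀ x, ‖x - π x‖ ^ 2 ≤ C₀ * (p x ^ 2 + q x ^ 2))
    {σ : ℝ → ℝ} (hσ : ContDiff ℝ ∞ σ) (N : ℕ) {F : E → ℝ}
    (hF : FlatAlong π F) (v x : E) : fderiv ℝ (conicTerm p q σ N F) x v =
      conicTerm p q (deriv σ) (N + 2) (fun y => (2 * p y * p v * (p y ^ 2 + q y ^ 2)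
          - p y ^ 2 * (2 * p y * p v + 2 * q y * q v)) * F y) x
        + conicTerm p q σ N (fun y => fderiv ℝ F y v) x
        + conicTerm p q σ (N + 1) (fun y => (-N * (2 * p y * p v + 2 * q y * q v)) * F y) x := by
  by_cases hx : p x ^ 2 + q x ^ 2 = 0
  · have h0 := hF.eq_zero x
    have h1 := (hF.fderiv_apply v).eq_zero x
    rw [eq_proj_of_sq_add_sq_eq_zero hC₀ hx, (hasFDerivAt_conicTerm_proj hπ hC₀ hσ N hF x).fderiv]
    simp only [conicTerm, h0, h1]
    simp
  · exact (differentiable_conicTerm hπ hC₀ hσ N hF x).hasFDerivAt.hasLineDerivAt v |>.unique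
      (hasLineDerivAt_conicTerm hσ N hF.contDiff hx v)

lemma contDiff_nat_conicTerm (hπ : ∀ x, π (π x) = π x)
    (hC₀ : ∀ x, ‖x - π x‖ ^ 2 ≤ C₀ * (p x ^ 2 + q x ^ 2))
    (n : ℕ) : ∀ {σ : ℝ → ℝ} (_ : ContDiff ℝ ∞ σ) (N : ℕ) {F : E → ℝ}
    (_ : FlatAlong π F), ContDiff ℝ n (conicTerm p q σ N F) := by
  induction n with
  | zero =>
    intro σ hσ N F hF
    exact contDiff_zero.2 (differentiable_conicTerm hπ hC₀ hσ N hF).continuous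
  | succ n ih =>
    intro σ hσ N F hF
    have hσ' : ContDiff ℝ ∞ (deriv σ) := hσ.deriv' 
    push_cast
    refine contDiff_succ_iff_fderiv_apply.2 ⟨differentiable_conicTerm hπ hC₀ hσ N hF,
      fun h => absurd h (by simp), fun v => ?_⟩
    simp only [fderiv_conicTerm_apply hπ hC₀ hσ N hF v]
    exact ((ih hσ' _ (hF.mul_left (by fun_prop))).add (ih hσ _ (hF.fderiv_apply v))).add
      (ih hσ _ (hF.mul_left (by fun_prop)))

lemma contDiff_conicTerm (hπ : ∀ x, π (π x) = π x)
    (hC₀ : ∀ x, ‖x - π x‖ ^ 2 ≤ C₀ * (p x ^ 2 + q x ^ 2))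
    {σ : ℝ → ℝ} (hσ : ContDiff ℝ ∞ σ) (N : ℕ) {F : E → ℝ}
    (hF : FlatAlong π F) : ContDiff ℝ ∞ (conicTerm p q σ N F) :=
  contDiff_infty.2 fun n => contDiff_nat_conicTerm hπ hC₀ n hσ N hF

lemma jetAt_conicTerm (hπ : ∀ x, π (π x) = π x)
    (hC₀ : ∀ x, ‖x - π x‖ ^ 2 ≤ C₀ * (p x ^ 2 + q x ^ 2))
    (n : ℕ) : ∀ {σ : ℝ → ℝ} (_ : ContDiff ℝ ∞ σ) (N : ℕ) {F : E → ℝ}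
    (_ : FlatAlong π F) (x : E), JetAt n (conicTerm p q σ N F) (π x) := by
  induction n with
  | zero => exact fun _ _ _ _ _ => jetAt_zero _ _
  | succ n ih =>
    intro σ hσ N F hF x
    have hσ' : ContDiff ℝ ∞ (deriv σ) := hσ.deriv'
    refine jetAt_succ_of_fderiv_apply (contDiff_nat_conicTerm hπ hC₀ _ hσ N hF)
      (by simp [conicTerm, hF.eq_zero]) fun v => ?_
    simp only [fderiv_conicTerm_apply hπ hC₀ hσ N hF v]
    have h1 := hF.mul_left (g := fun y => 2 * p y * p v * (p y ^ 2 + q y ^ 2)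
      - p y ^ 2 * (2 * p y * p v + 2 * q y * q v)) (by fun_prop)
    have h2 := hF.fderiv_apply v
    have h3 := hF.mul_left (g := fun y => -N * (2 * p y * p v + 2 * q y * q v)) (by fun_prop)
    have c1 := contDiff_conicTerm hπ hC₀ hσ' (N + 2) h1
    have c2 := contDiff_conicTerm hπ hC₀ hσ N h2
    exact JetAt.add (c1.add c2) (contDiff_conicTerm hπ hC₀ hσ (N + 1) h3)
      (JetAt.add c1 c2 (ih hσ' _ h1 x) (ih hσ _ h2 x)) (ih hσ _ h3 x)

/-- A flat function localized to a cone around the axis remains flat. -/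
lemma flatAlong_conicTerm (hπ : ∀ x, π (π x) = π x)
    (hC₀ : ∀ x, ‖x - π x‖ ^ 2 ≤ C₀ * (p x ^ 2 + q x ^ 2))
    {σ : ℝ → ℝ} (hσ : ContDiff ℝ ∞ σ) {F : E → ℝ} (hF : FlatAlong π F) :
    FlatAlong π (conicTerm p q σ 0 F) where
  contDiff := contDiff_conicTerm hπ hC₀ hσ 0 hF
  hasCompactSupport := by
    refine hF.hasCompactSupport.mono fun x hx => ?_
    rw [Function.mem_support] at hx ⊢
    contrapose! hx
    simp [conicTerm, hx]
  jetAt n x := jetAt_conicTerm hπ hC₀ n hσ 0 hF x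

/-- A flat function vanishing near the set where `W` fails to control the distance to the axis is
dominated by all powers of `W`. -/
lemma dominated_of_flatAlong (hπ : ∀ x, π (π x) = π x) {F W : E → ℝ} (hF : FlatAlong π F) {C₁ : ℝ}
    (hC₁ : 0 ≤ C₁) (h : ∀ x, ‖x - π x‖ ^ 2 ≤ C₁ * W x ∨ F =ᶠ[𝓝 x] 0) : Dominated W F := by
  intro j M
  have hb := fun i => exists_norm_iteratedFDeriv_le hπ hF.contDiff hF.hasCompactSupport
    (2 * M) i (fun x => hF.jetAt _ x)
  choose C hC0 hC using hb
  refine ⟨(∑ i ∈ Finset.range (j + 1), C i) * C₁ ^ M,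
    mul_nonneg (Finset.sum_nonneg fun i _ => hC0 i) (by positivity), fun i hi x => ?_⟩
  have hCi : C i ≤ ∑ i ∈ Finset.range (j + 1), C i :=
    Finset.single_le_sum (fun i _ => hC0 i) (Finset.mem_range.2 (by omega))
  have hmax : 0 ≤ max (W x) 0 := le_max_right _ _
  rcases h x with h | h
  · calc _ ≤ C i * ‖x - π x‖ ^ (2 * M) := hC i x
      _ = C i * (‖x - π x‖ ^ 2) ^ M := by rw [pow_mul]
      _ ≤ C i * (C₁ * max (W x) 0) ^ M := by
        have := h.trans (mul_le_mul_of_nonneg_left (le_max_left (W x) 0) hC₁)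
        gcongr
        exact hC0 i
      _ ≤ (∑ i ∈ Finset.range (j + 1), C i) * (C₁ * max (W x) 0) ^ M := by gcongr
      _ = _ := by rw [mul_pow, mul_assoc]
  · rw [(h.iteratedFDeriv ℝ i).self_of_nhds]
    have : iteratedFDeriv ℝ i (0 : E → ℝ) x = 0 := by
      simp [show (0 : E → ℝ) = fun _ => 0 from rfl]
    rw [this, norm_zero]
    have := (hC0 i).trans hCi
    positivity

end Cones

section FlatSolution

variable {E : Type} [NormedAddCommGroup E] [NormedSpace ℝ E] [FiniteDimensional ℝ E]
  {π : E →L[ℝ] E} {p q : E →L[ℝ] ℝ} {C₀ : ℝ}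

/-- The homological equation with flat right-hand side, given a quadratic Lyapunov function
controlling the right-hand side. -/
lemma exists_flat_solution_of_quadratic (hπ : ∀ x, π (π x) = π x) (hpπ : ∀ x, p (π x) = 0)
    (hqπ : ∀ x, q (π x) = 0) {X : E → E} (hX : ContDiff ℝ ∞ X) {A : E →L[ℝ] E} {R : ℝ}
    (hR : ∀ x, R ≤ ‖x‖ → X x = A x) {τ : ℝ} (hτ : τ ^ 2 = 1) {s t lam : ℝ} (hlam : 0 < lam)
    (hW : ∀ x, τ * (2 * s * (p x * p (X x)) + 2 * t * (q x * q (X x))) ≤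
      -lam * (s * p x ^ 2 + t * q x ^ 2))
    (c : ℝ) {F : E → ℝ} (hF : FlatAlong π F) {C₁ : ℝ} (hC₁ : 0 ≤ C₁)
    (h : ∀ x, ‖x - π x‖ ^ 2 ≤ C₁ * (s * p x ^ 2 + t * q x ^ 2) ∨ F =ᶠ[𝓝 x] 0) :
    ∃ f : E → ℝ, ContDiff ℝ ∞ f ∧ (∀ n x, JetAt n f (π x)) ∧
      ∀ᶠ x in 𝓝 0, fderiv ℝ f x (X x) - c * f x = F x := by
  have hdW : ∀ x v, fderiv ℝ (fun x => s * p x ^ 2 + t * q x ^ 2) x v =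
      2 * s * (p x * p v) + 2 * t * (q x * q v) := by
    intro x v
    have h1 := (((p.hasFDerivAt (x := x)).pow 2).const_mul s).add
      (((q.hasFDerivAt (x := x)).pow 2).const_mul t)
    have h2 : HasFDerivAt (fun x => s * p x ^ 2 + t * q x ^ 2) _ x := h1
    rw [h2.fderiv]
    simp
    ring
  obtain ⟨f, hf, hf0, hfX⟩ := exists_solution_of_lyapunov (X := fun x => τ • X x)
    (contDiff_const.smul hX) (τ • A) R (fun x hx => by rw [hR x hx]; rfl)
    (W := fun x => s * p x ^ 2 + t * q x ^ 2) (by fun_prop) hlam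
    (fun x => by rw [map_smul, hdW, smul_eq_mul]; exact hW x) (τ * c)
    (G := fun x => τ * F x) (contDiff_const.mul hF.contDiff)
    (dominated_of_flatAlong hπ (hF.mul_left contDiff_const) hC₁ fun x => (h x).imp_right
      fun hx => by filter_upwards [hx] with y hy; simp [hy])
  refine ⟨f, hf, fun n x j _ => hf0 _ (by simp [hpπ, hqπ]) j, ?_⟩
  filter_upwards [hfX] with x hx
  rw [map_smul, smul_eq_mul] at hx
  have : τ * (fderiv ℝ f x (X x) - c * f x - F x) = 0 := by linear_combination hx
  have hτ0 : τ ≠ 0 := by rintro rfl; norm_num at hτ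
  have := (mul_eq_zero.1 this).resolve_left hτ0
  linarith

lemma contDiff_smoothTransition_affine :
    ContDiff ℝ ∞ (fun t : ℝ => Real.smoothTransition (3 * t - 1)) :=
  Real.smoothTransition.contDiff.comp (by fun_prop)

/-- The homological equation with flat right-hand side near a normally hyperbolic axis. -/
theorem exists_flat_solution (hπ : ∀ x, π (π x) = π x) (hpπ : ∀ x, p (π x) = 0)
    (hqπ : ∀ x, q (π x) = 0) (hC₀ : ∀ x, ‖x - π x‖ ^ 2 ≤ C₀ * (p x ^ 2 + q x ^ 2)) (hC₀' : 0 ≤ C₀)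
    {X : E → E} (hX : ContDiff ℝ ∞ X) {A : E →L[ℝ] E} {R : ℝ}
    (hR : ∀ x, R ≤ ‖x‖ → X x = A x) {lam₁ lam₂ m ε : ℝ} (hm : 0 < m) (hm₁ : m ≤ |lam₁|)
    (hm₂ : m ≤ |lam₂|) (hε : 13 * ε ≤ m)
    (hp : ∀ x, |p (X x) - lam₁ * p x| ≤ ε * (|p x| + |q x|))
    (hq : ∀ x, |q (X x) - lam₂ * q x| ≤ ε * (|p x| + |q x|)) (c : ℝ) {F : E → ℝ}
    (hF : FlatAlong π F) :
    ∃ f : E → ℝ, ContDiff ℝ ∞ f ∧ (∀ n x, JetAt n f (π x)) ∧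
      ∀ᶠ x in 𝓝 0, fderiv ℝ f x (X x) - c * f x = F x := by
  have hpe : ∀ x, |p x * p (X x) - lam₁ * p x ^ 2| ≤ m / 26 * (3 * p x ^ 2 + q x ^ 2) := by
    intro x
    have h1 : p x * p (X x) - lam₁ * p x ^ 2 = p x * (p (X x) - lam₁ * p x) := by ring
    rw [h1, abs_mul, ← sq_abs (p x), ← sq_abs (q x)]
    have h2 : |p (X x) - lam₁ * p x| ≤ m / 13 * (|p x| + |q x|) :=
      (hp x).trans (mul_le_mul_of_nonneg_right (by linarith) (by positivity))
    have h3 := mul_le_mul_of_nonneg_left h2 (abs_nonneg (p x))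
    nlinarith [mul_nonneg hm.le (sq_nonneg (|p x| - |q x|))]
  have hqe : ∀ x, |q x * q (X x) - lam₂ * q x ^ 2| ≤ m / 26 * (3 * q x ^ 2 + p x ^ 2) := by
    intro x
    have h1 : q x * q (X x) - lam₂ * q x ^ 2 = q x * (q (X x) - lam₂ * q x) := by ring
    rw [h1, abs_mul, ← sq_abs (p x), ← sq_abs (q x)]
    have h2 : |q (X x) - lam₂ * q x| ≤ m / 13 * (|p x| + |q x|) :=
      (hq x).trans (mul_le_mul_of_nonneg_right (by linarith) (by positivity))
    have h3 := mul_le_mul_of_nonneg_left h2 (abs_nonneg (q x))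
    nlinarith [mul_nonneg hm.le (sq_nonneg (|p x| - |q x|))]
  have node : ∀ τ : ℝ, τ = 1 ∨ τ = -1 → τ * lam₁ ≤ -m → τ * lam₂ ≤ -m →
      ∃ f : E → ℝ, ContDiff ℝ ∞ f ∧ (∀ n x, JetAt n f (π x)) ∧
        ∀ᶠ x in 𝓝 0, fderiv ℝ f x (X x) - c * f x = F x := by
    intro τ hτ h₁ h₂
    refine exists_flat_solution_of_quadratic hπ hpπ hqπ hX hR (τ := τ)
      (by rcases hτ with rfl | rfl <;> norm_num) (s := 1) (t := 1) hm (fun x => ?_) c hF hC₀'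
      (fun x => Or.inl (by simpa using hC₀ x))
    have e1 := abs_le.1 (hpe x)
    have e2 := abs_le.1 (hqe x)
    have f1 := mul_le_mul_of_nonneg_right h₁ (sq_nonneg (p x))
    have f2 := mul_le_mul_of_nonneg_right h₂ (sq_nonneg (q x))
    have g1 := mul_nonneg hm.le (sq_nonneg (p x))
    have g2 := mul_nonneg hm.le (sq_nonneg (q x))
    rcases hτ with rfl | rfl <;> linarith [e1.1, e1.2, e2.1, e2.2]
  have saddle : ∀ τ : ℝ, τ = 1 ∨ τ = -1 → τ * lam₁ ≤ -m → m ≤ τ * lam₂ →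
      ∃ f : E → ℝ, ContDiff ℝ ∞ f ∧ (∀ n x, JetAt n f (π x)) ∧
        ∀ᶠ x in 𝓝 0, fderiv ℝ f x (X x) - c * f x = F x := by
    intro τ hτ h₁ h₂
    have hσ := contDiff_smoothTransition_affine
    have hσ' : ContDiff ℝ ∞ (fun t : ℝ => 1 - Real.smoothTransition (3 * t - 1)) :=
      contDiff_const.sub hσ
    have hτ2 : τ ^ 2 = 1 := by rcases hτ with rfl | rfl <;> norm_num
    obtain ⟨f, hf, hfJ, hfX⟩ := exists_flat_solution_of_quadratic hπ hpπ hqπ hX hR (τ := τ)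
      hτ2 (s := 4) (t := -1) hm (fun x => by
        have e1 := abs_le.1 (hpe x)
        have e2 := abs_le.1 (hqe x)
        have f1 := mul_le_mul_of_nonneg_right h₁ (sq_nonneg (p x))
        have f2 := mul_le_mul_of_nonneg_right h₂ (sq_nonneg (q x))
        have g1 := mul_nonneg hm.le (sq_nonneg (p x))
        have g2 := mul_nonneg hm.le (sq_nonneg (q x))
        rcases hτ with rfl | rfl <;> linarith [e1.1, e1.2, e2.1, e2.2])
      c (flatAlong_conicTerm hπ hC₀ hσ hF) (C₁ := C₀ * 4) (by positivity) (fun x => by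
        by_cases hx : q x ^ 2 ≤ 2 * p x ^ 2
        · left
          refine (hC₀ x).trans ?_
          rw [mul_assoc]
          refine mul_le_mul_of_nonneg_left ?_ hC₀'
          nlinarith [sq_nonneg (p x)]
        · right
          have : ∀ᶠ y in 𝓝 x, 2 * p y ^ 2 < q y ^ 2 :=
            (isOpen_lt (by fun_prop) (by fun_prop)).mem_nhds (not_le.1 hx)
          filter_upwards [this] with y hy
          have h0 : Real.smoothTransition (3 * (p y ^ 2 / (p y ^ 2 + q y ^ 2)) - 1) = 0 := by
            refine Real.smoothTransition.zero_of_nonpos ?_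
            have : p y ^ 2 / (p y ^ 2 + q y ^ 2) ≤ 1 / 3 := by
              rw [div_le_iff₀ (by nlinarith [sq_nonneg (p y)])]; linarith
            linarith
          simp [conicTerm, h0])
    obtain ⟨f', hf', hfJ', hfX'⟩ := exists_flat_solution_of_quadratic hπ hpπ hqπ hX hR (τ := -τ)
      (by simpa using hτ2) (s := -1) (t := 4) hm (fun x => by
        have e1 := abs_le.1 (hpe x)
        have e2 := abs_le.1 (hqe x)
        have f1 := mul_le_mul_of_nonneg_right h₁ (sq_nonneg (p x))
        have f2 := mul_le_mul_of_nonneg_right h₂ (sq_nonneg (q x))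
        have g1 := mul_nonneg hm.le (sq_nonneg (p x))
        have g2 := mul_nonneg hm.le (sq_nonneg (q x))
        rcases hτ with rfl | rfl <;> linarith [e1.1, e1.2, e2.1, e2.2])
      c (flatAlong_conicTerm hπ hC₀ hσ' hF) (C₁ := C₀ * 4) (by positivity) (fun x => by
        by_cases hx : p x ^ 2 ≤ 2 * q x ^ 2
        · left
          refine (hC₀ x).trans ?_
          rw [mul_assoc]
          refine mul_le_mul_of_nonneg_left ?_ hC₀'
          nlinarith [sq_nonneg (q x)]
        · right
          have : ∀ᶠ y in 𝓝 x, 2 * q y ^ 2 < p y ^ 2 :=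
            (isOpen_lt (by fun_prop) (by fun_prop)).mem_nhds (not_le.1 hx)
          filter_upwards [this] with y hy
          have h0 : Real.smoothTransition (3 * (p y ^ 2 / (p y ^ 2 + q y ^ 2)) - 1) = 1 := by
            refine Real.smoothTransition.one_of_one_le ?_
            have : 2 / 3 ≤ p y ^ 2 / (p y ^ 2 + q y ^ 2) := by
              rw [le_div_iff₀ (by nlinarith [sq_nonneg (q y)])]; linarith
            linarith
          simp [conicTerm, h0])
    refine ⟨fun x => f x + f' x, hf.add hf', fun n x => JetAt.add hf hf' (hfJ n x) (hfJ' n x), ?_⟩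
    filter_upwards [hfX, hfX'] with x h1 h2
    rw [fderiv_fun_add (hf.differentiable (by simp) x) (hf'.differentiable (by simp) x)]
    simp only [add_apply, conicTerm, pow_zero, div_one] at h1 h2 ⊢
    linear_combination h1 + h2
  rcases le_total 0 lam₁ with s₁ | s₁ <;> rcases le_total 0 lam₂ with s₂ | s₂ <;>
    simp only [abs_of_nonneg, abs_of_nonpos, s₁, s₂] at hm₁ hm₂
  · exact node (-1) (Or.inr rfl) (by linarith) (by linarith)
  · exact saddle (-1) (Or.inr rfl) (by linarith) (by linarith)
  · exact saddle 1 (Or.inl rfl) (by linarith) (by linarith)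
  · exact node 1 (Or.inl rfl) (by linarith) (by linarith)

end FlatSolution

section LocalSolution

variable {Z : Type} [NormedAddCommGroup Z] [NormedSpace ℝ Z] [FiniteDimensional ℝ Z]

lemma exists_cutoff_smul {E : Type} [NormedAddCommGroup E] [NormedSpace ℝ E]
    [FiniteDimensional ℝ E] {δ : ℝ} (hδ : 0 < δ) :
    ∃ χ : E → ℝ, ContDiff ℝ ∞ χ ∧ (∀ᶠ x in 𝓝 0, χ x = 1) ∧ (∀ x, δ ≤ ‖x‖ → χ x = 0) ∧
      ∀ x, ‖χ x • x‖ < δ := by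
  obtain ⟨χ, hχ, -, hχs, hχ1, hχI⟩ := exists_cutoff (Metric.ball_mem_nhds (0 : E) hδ)
  have h0 : ∀ x, δ ≤ ‖x‖ → χ x = 0 := fun x hx => by
    refine image_eq_zero_of_notMem_tsupport fun h => ?_
    have := hχs h
    rw [mem_ball_zero_iff] at this
    linarith
  refine ⟨χ, hχ, hχ1, h0, fun x => ?_⟩
  rcases le_or_gt δ ‖x‖ with hx | hx
  · simpa [h0 x hx] using hδ
  · rw [norm_smul, Real.norm_of_nonneg (hχI x).1]
    nlinarith [(hχI x).1, (hχI x).2, norm_nonneg x]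

lemma exists_ball_of_eventually {E : Type} [NormedAddCommGroup E] {P : E → Prop}
    (h : ∀ᶠ x in 𝓝 0, P x) : ∃ δ > 0, ∀ x, ‖x‖ < δ → P x := by
  obtain ⟨δ, hδ, h⟩ := Metric.eventually_nhds_iff.1 h
  exact ⟨δ, hδ, fun x hx => h (by simpa using hx)⟩

/-- The linear form `(ξ, η, ζ) ↦ a ξ + b η`. -/
noncomputable def axisForm (Z : Type) [NormedAddCommGroup Z] [NormedSpace ℝ Z] (u : ℝ × ℝ) :
    (ℝ × ℝ × Z) →L[ℝ] ℝ :=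
  u.1 • ContinuousLinearMap.fst ℝ ℝ (ℝ × Z)
    + u.2 • (ContinuousLinearMap.fst ℝ ℝ Z).comp (ContinuousLinearMap.snd ℝ ℝ (ℝ × Z))

lemma axisForm_apply (u : ℝ × ℝ) (x : ℝ × ℝ × Z) :
    axisForm Z u x = u.1 * x.1 + u.2 * x.2.1 := by
  simp [axisForm]

lemma abs_axisForm_le (u : ℝ × ℝ) (x : ℝ × ℝ × Z) :
    |axisForm Z u x| ≤ (|u.1| + |u.2|) * ‖x‖ := by
  rw [axisForm_apply, add_mul]
  refine (abs_add_le _ _).trans (add_le_add ?_ ?_) <;> rw [abs_mul] <;> gcongr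
  · exact norm_fst_le x
  · exact (norm_fst_le x.2).trans (norm_snd_le x)

lemma exists_abs_add_abs_le {u₁ u₂ : ℝ × ℝ} (hdet : u₁.1 * u₂.2 - u₁.2 * u₂.1 ≠ 0) :
    ∃ K, 0 < K ∧ ∀ x : ℝ × ℝ × Z,
      |x.1| + |x.2.1| ≤ K * (|axisForm Z u₁ x| + |axisForm Z u₂ x|) := by
  set d := u₁.1 * u₂.2 - u₁.2 * u₂.1 with hd
  set S := |u₁.1| + |u₁.2| + |u₂.1| + |u₂.2| with hS
  have hd0 : 0 < |d| := abs_pos.2 hdet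
  refine ⟨(1 + S) / |d|, by positivity, fun x => ?_⟩
  rw [div_mul_eq_mul_div, le_div_iff₀ hd0, add_mul, ← abs_mul, ← abs_mul]
  have h1 : x.1 * d = u₂.2 * axisForm Z u₁ x - u₁.2 * axisForm Z u₂ x := by
    rw [axisForm_apply, axisForm_apply, hd]; ring
  have h2 : x.2.1 * d = u₁.1 * axisForm Z u₂ x - u₂.1 * axisForm Z u₁ x := by
    rw [axisForm_apply, axisForm_apply, hd]; ring
  have h3 := abs_sub (u₂.2 * axisForm Z u₁ x) (u₁.2 * axisForm Z u₂ x)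
  have h4 := abs_sub (u₁.1 * axisForm Z u₂ x) (u₂.1 * axisForm Z u₁ x)
  rw [h1, h2]
  rw [abs_mul, abs_mul] at h3 h4
  have a1 := abs_nonneg (axisForm Z u₁ x)
  have a2 := abs_nonneg (axisForm Z u₂ x)
  have b1 := mul_nonneg (abs_nonneg u₁.1) a1
  have b2 := mul_nonneg (abs_nonneg u₁.2) a1
  have b3 := mul_nonneg (abs_nonneg u₂.1) a2
  have b4 := mul_nonneg (abs_nonneg u₂.2) a2
  rw [hS]
  linarith

lemma abs_axisForm_axisField_sub_le {F₁ F₂ : ℝ × ℝ × Z → ℝ × ℝ × Z} {u : Z → ℝ × ℝ} {lam : Z → ℝ}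
    (he : EigenForm F₁ F₂ u lam 0) {ε : ℝ} {x : ℝ × ℝ × Z} (h₁ : ‖F₁ x - F₁ 0‖ ≤ ε)
    (h₂ : ‖F₂ x - F₂ 0‖ ≤ ε) :
    |axisForm Z (u 0) (axisField F₁ F₂ x) - lam 0 * axisForm Z (u 0) x| ≤
      (|(u 0).1| + |(u 0).2|) * ε * (|x.1| + |x.2.1|) := by
  have h : axisForm Z (u 0) (axisField F₁ F₂ x) - lam 0 * axisForm Z (u 0) x =
      x.1 * axisForm Z (u 0) (F₁ x - F₁ 0) + x.2.1 * axisForm Z (u 0) (F₂ x - F₂ 0) := by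
    have e1 := he.1
    have e2 := he.2
    change (u 0).1 * (F₁ 0).1 + (u 0).2 * (F₁ 0).2.1 = _ at e1
    change (u 0).1 * (F₂ 0).1 + (u 0).2 * (F₂ 0).2.1 = _ at e2
    simp only [axisForm_apply, axisField, Prod.fst_add, Prod.snd_add, Prod.smul_fst, Prod.smul_snd,
      smul_eq_mul, Prod.fst_sub, Prod.snd_sub]
    linear_combination x.1 * e1 + x.2.1 * e2
  rw [h]
  have e1 := (abs_axisForm_le (u 0) (F₁ x - F₁ 0)).trans
    (mul_le_mul_of_nonneg_left h₁ (by positivity))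
  have e2 := (abs_axisForm_le (u 0) (F₂ x - F₂ 0)).trans
    (mul_le_mul_of_nonneg_left h₂ (by positivity))
  refine (abs_add_le _ _).trans ?_
  rw [abs_mul, abs_mul]
  have := mul_le_mul_of_nonneg_left e1 (abs_nonneg x.1)
  have := mul_le_mul_of_nonneg_left e2 (abs_nonneg x.2.1)
  linarith

lemma norm_sub_axisProj_sq_le {p q : (ℝ × ℝ × Z) →L[ℝ] ℝ} {K : ℝ}
    (h : ∀ x : ℝ × ℝ × Z, |x.1| + |x.2.1| ≤ K * (|p x| + |q x|)) (x : ℝ × ℝ × Z) :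
    ‖x - axisProj Z x‖ ^ 2 ≤ 2 * K ^ 2 * (p x ^ 2 + q x ^ 2) := by
  rw [norm_sub_axisProj]
  have h1 : max |x.1| |x.2.1| ≤ K * (|p x| + |q x|) :=
    (max_le (le_add_of_nonneg_right (abs_nonneg _)) (le_add_of_nonneg_left (abs_nonneg _))).trans
      (h x)
  have h2 : (max |x.1| |x.2.1|) ^ 2 ≤ (K * (|p x| + |q x|)) ^ 2 :=
    pow_le_pow_left₀ (le_max_of_le_left (abs_nonneg _)) h1 2
  refine h2.trans ?_
  rw [mul_pow, ← sq_abs (p x), ← sq_abs (q x)]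
  nlinarith [mul_nonneg (sq_nonneg K) (sq_nonneg (|p x| - |q x|))]

/-- The solution of the homological equation for a vector field that is globally a small
perturbation of a linear one. -/
lemma exists_solution_of_global {F₁ F₂ : ℝ × ℝ × Z → ℝ × ℝ × Z} (hF₁ : ContDiff ℝ ∞ F₁)
    (hF₂ : ContDiff ℝ ∞ F₂) {u₁ u₂ : Z → ℝ × ℝ} (hu₁ : ContDiff ℝ ∞ u₁) (hu₂ : ContDiff ℝ ∞ u₂)
    {lam₁ lam₂ : Z → ℝ} (hlam₁ : ContDiff ℝ ∞ lam₁) (hlam₂ : ContDiff ℝ ∞ lam₂)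
    (hdet : ∀ ζ, (u₁ ζ).1 * (u₂ ζ).2 - (u₁ ζ).2 * (u₂ ζ).1 ≠ 0)
    (he₁ : ∀ ζ, EigenForm F₁ F₂ u₁ lam₁ ζ) (he₂ : ∀ ζ, EigenForm F₁ F₂ u₂ lam₂ ζ)
    {c : ℝ} {n₀ : ℕ} (hres : ∀ ζ, ∀ p q : ℕ, n₀ ≤ p + q → p * lam₁ ζ + q * lam₂ ζ ≠ c)
    {g₁ g₂ : ℝ × ℝ × Z → ℝ} (hg₁ : ContDiff ℝ ∞ g₁) (hg₂ : ContDiff ℝ ∞ g₂)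
    (hn₀ : n₀ ≤ 1 ∨ n₀ = 2 ∧ ∀ ζ, g₁ (0, 0, ζ) = 0 ∧ g₂ (0, 0, ζ) = 0)
    {R : ℝ} (hR : ∀ x, R ≤ ‖x‖ → F₁ x = F₁ 0 ∧ F₂ x = F₂ 0) {K m ε : ℝ} (hK : 0 < K)
    (hKu : ∀ x : ℝ × ℝ × Z,
      |x.1| + |x.2.1| ≤ K * (|axisForm Z (u₁ 0) x| + |axisForm Z (u₂ 0) x|))
    (hm : 0 < m) (hm₁ : m ≤ |lam₁ 0|) (hm₂ : m ≤ |lam₂ 0|) (hε : 0 ≤ ε)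
    (hεm : 13 * ((|(u₁ 0).1| + |(u₁ 0).2| + |(u₂ 0).1| + |(u₂ 0).2|) * ε * K) ≤ m)
    (hFε : ∀ x, ‖F₁ x - F₁ 0‖ ≤ ε ∧ ‖F₂ x - F₂ 0‖ ≤ ε) :
    ∃ f : ℝ × ℝ × Z → ℝ, ContDiff ℝ ∞ f ∧ (∀ x, JetAt n₀ f (axisProj Z x)) ∧
      ∀ᶠ x in 𝓝 0, fderiv ℝ f x (axisField F₁ F₂ x) - c * f x = g₁ x * x.1 + g₂ x * x.2.1 := by
  obtain ⟨f, hf, hfJ, hfr⟩ := exists_solution_mod_flat hF₁ hF₂ hu₁ hu₂ hlam₁ hlam₂ hdet he₁ he₂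
    hres hg₁ hg₂ hn₀
  set r : ℝ × ℝ × Z → ℝ := fun y => fderiv ℝ f y (axisField F₁ F₂ y) - c * f y
    - (g₁ y * y.1 + g₂ y * y.2.1) with hr
  have hrs : ContDiff ℝ ∞ r := by
    have h1 := (hf.fderiv_right (m := ∞) (by simp)).clm_apply (contDiff_axisField hF₁ hF₂)
    exact (h1.sub (contDiff_const.mul hf)).sub (by fun_prop)
  obtain ⟨ψ, hψ, hψc, hψs, hψ1, -⟩ := exists_cutoff hfr
  have hpp : ∀ x, axisProj Z (axisProj Z x) = axisProj Z x := fun x => by simp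
  have hflat : FlatAlong (axisProj Z) (fun x => -ψ x * r x) := by
    refine ⟨hψ.neg.mul hrs, (hψc.neg).mul_right, fun n x => ?_⟩
    by_cases hx : axisProj Z x ∈ tsupport ψ
    · have := hψs hx n
      rw [hpp] at this
      have := JetAt.mul hψ.neg hrs (jetAt_zero (fun x => -ψ x) _) this
      rwa [zero_add] at this
    · have h0 : (fun _ => (0 : ℝ)) =ᶠ[𝓝 (axisProj Z x)] fun x => -ψ x * r x := by
        filter_upwards [(isClosed_tsupport ψ).isOpen_compl.mem_nhds hx] with y hy
        rw [image_eq_zero_of_notMem_tsupport hy]; simp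
      exact JetAt.congr (fun j _ => by simp) h0
  have hbound : ∀ U V : ℝ, 0 ≤ U → 0 ≤ V → U + V =
      |(u₁ 0).1| + |(u₁ 0).2| + |(u₂ 0).1| + |(u₂ 0).2| → ∀ x : ℝ × ℝ × Z,
      U * ε * (|x.1| + |x.2.1|) ≤
        (|(u₁ 0).1| + |(u₁ 0).2| + |(u₂ 0).1| + |(u₂ 0).2|) * ε * K
          * (|axisForm Z (u₁ 0) x| + |axisForm Z (u₂ 0) x|) := by
    intro U V hU hV hUV x
    rw [← hUV, mul_assoc _ K]
    have := hKu x
    gcongr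
    linarith
  obtain ⟨f', hf', hfJ', hfX'⟩ := exists_flat_solution hpp (p := axisForm Z (u₁ 0))
    (q := axisForm Z (u₂ 0)) (fun x => by simp [axisForm_apply]) (fun x => by simp [axisForm_apply])
    (norm_sub_axisProj_sq_le hKu) (by positivity) (contDiff_axisField hF₁ hF₂)
    (A := (ContinuousLinearMap.fst ℝ ℝ (ℝ × Z)).smulRight (F₁ 0)
      + ((ContinuousLinearMap.fst ℝ ℝ Z).comp
        (ContinuousLinearMap.snd ℝ ℝ (ℝ × Z))).smulRight (F₂ 0))
    (R := R) (fun x hx => by simp [axisField, hR x hx]) hm hm₁ hm₂ hεm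
    (fun x => (abs_axisForm_axisField_sub_le (he₁ 0) (hFε x).1 (hFε x).2).trans
      (hbound _ (|(u₂ 0).1| + |(u₂ 0).2|) (by positivity) (by positivity) (by ring) x))
    (fun x => (abs_axisForm_axisField_sub_le (he₂ 0) (hFε x).1 (hFε x).2).trans
      (hbound _ (|(u₁ 0).1| + |(u₁ 0).2|) (by positivity) (by positivity) (by ring) x)) c hflat
  refine ⟨fun x => f x + f' x, hf.add hf', fun x => JetAt.add hf hf' (hfJ x) (hfJ' n₀ x), ?_⟩
  filter_upwards [hfX', hψ1] with x hx hψx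
  rw [fderiv_fun_add (hf.differentiable (by simp) x) (hf'.differentiable (by simp) x)]
  simp only [add_apply, hψx, hr] at hx ⊢
  linear_combination hx

/-- The local homological equation: if no resonance `p λ₁ + q λ₂ = c` with `p + q ≥ n₀` occurs,
then it has a solution vanishing to order `n₀` along the axis. -/
theorem exists_local_solution {F₁ F₂ : ℝ × ℝ × Z → ℝ × ℝ × Z}
    (hF₁ : ∀ᶠ x in 𝓝 0, ContDiffAt ℝ ∞ F₁ x) (hF₂ : ∀ᶠ x in 𝓝 0, ContDiffAt ℝ ∞ F₂ x)
    {u₁ u₂ : Z → ℝ × ℝ} (hu₁ : ∀ᶠ ζ in 𝓝 0, ContDiffAt ℝ ∞ u₁ ζ)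
    (hu₂ : ∀ᶠ ζ in 𝓝 0, ContDiffAt ℝ ∞ u₂ ζ)
    {lam₁ lam₂ : Z → ℝ} (hlam₁ : ∀ᶠ ζ in 𝓝 0, ContDiffAt ℝ ∞ lam₁ ζ)
    (hlam₂ : ∀ᶠ ζ in 𝓝 0, ContDiffAt ℝ ∞ lam₂ ζ)
    (hdet : (u₁ 0).1 * (u₂ 0).2 - (u₁ 0).2 * (u₂ 0).1 ≠ 0)
    (hlam₁0 : lam₁ 0 ≠ 0) (hlam₂0 : lam₂ 0 ≠ 0)
    (he₁ : ∀ᶠ ζ in 𝓝 0, EigenForm F₁ F₂ u₁ lam₁ ζ) (he₂ : ∀ᶠ ζ in 𝓝 0, EigenForm F₁ F₂ u₂ lam₂ ζ)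
    {c : ℝ} {n₀ : ℕ}
    (hres : ∀ᶠ ζ in 𝓝 0, ∀ p q : ℕ, n₀ ≤ p + q → p * lam₁ ζ + q * lam₂ ζ ≠ c)
    {g₁ g₂ : ℝ × ℝ × Z → ℝ} (hg₁ : ∀ᶠ x in 𝓝 0, ContDiffAt ℝ ∞ g₁ x)
    (hg₂ : ∀ᶠ x in 𝓝 0, ContDiffAt ℝ ∞ g₂ x)
    (hn₀ : n₀ ≤ 1 ∨ n₀ = 2 ∧ ∀ᶠ ζ in 𝓝 (0 : Z), g₁ (0, 0, ζ) = 0 ∧ g₂ (0, 0, ζ) = 0) :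
    ∃ f : ℝ × ℝ × Z → ℝ, ContDiff ℝ ∞ f ∧ (∀ x, JetAt n₀ f (axisProj Z x)) ∧
      ∀ᶠ x in 𝓝 0, fderiv ℝ f x (axisField F₁ F₂ x) - c * f x = g₁ x * x.1 + g₂ x * x.2.1 := by
  obtain ⟨K, hK, hKu⟩ := exists_abs_add_abs_le (Z := Z) hdet
  set m := min |lam₁ 0| |lam₂ 0| with hm
  have hm0 : 0 < m := lt_min (abs_pos.2 hlam₁0) (abs_pos.2 hlam₂0)
  set S := |(u₁ 0).1| + |(u₁ 0).2| + |(u₂ 0).1| + |(u₂ 0).2| with hS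
  obtain ⟨ε, hε, hεm⟩ : ∃ ε > 0, 13 * (S * ε * K) ≤ m := by
    refine ⟨m / (13 * (S + 1) * K), by positivity, ?_⟩
    have : 13 * (S * (m / (13 * (S + 1) * K)) * K) = m * (S / (S + 1)) := by field_simp
    rw [this]
    exact mul_le_of_le_one_right hm0.le (div_le_one_of_le₀ (by linarith) (by positivity))
  have hc₁ : ∀ᶠ x in 𝓝 0, ‖F₁ x - F₁ 0‖ ≤ ε :=
    (hF₁.self_of_nhds.continuousAt.sub (continuousAt_const (y := F₁ 0))).norm.eventually
      (eventually_le_nhds (by simpa using hε))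
  have hc₂ : ∀ᶠ x in 𝓝 0, ‖F₂ x - F₂ 0‖ ≤ ε :=
    (hF₂.self_of_nhds.continuousAt.sub (continuousAt_const (y := F₂ 0))).norm.eventually
      (eventually_le_nhds (by simpa using hε))
  have hdet' : ∀ᶠ ζ in 𝓝 0, (u₁ ζ).1 * (u₂ ζ).2 - (u₁ ζ).2 * (u₂ ζ).1 ≠ 0 := by
    have c₁ := hu₁.self_of_nhds.continuousAt
    have c₂ := hu₂.self_of_nhds.continuousAt
    exact ((c₁.fst.mul c₂.snd).sub (c₁.snd.mul c₂.fst)).eventually_ne hdet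
  have hn₀' : ∀ᶠ ζ in 𝓝 (0 : Z), n₀ ≤ 1 ∨ n₀ = 2 ∧ g₁ (0, 0, ζ) = 0 ∧ g₂ (0, 0, ζ) = 0 := by
    rcases hn₀ with h | ⟨h, hg⟩
    · exact Eventually.of_forall fun _ => Or.inl h
    · exact hg.mono fun ζ hζ => Or.inr ⟨h, hζ⟩
  obtain ⟨δ₁, hδ₁, hE⟩ := exists_ball_of_eventually
    (hF₁.and (hF₂.and (hg₁.and (hg₂.and (hc₁.and hc₂)))))
  obtain ⟨δ₂, hδ₂, hZ⟩ := exists_ball_of_eventually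
    (hu₁.and (hu₂.and (hlam₁.and (hlam₂.and (hdet'.and (he₁.and (he₂.and (hres.and hn₀'))))))))
  obtain ⟨χ, hχ, hχ1, hχ0, hχb⟩ := exists_cutoff_smul (E := ℝ × ℝ × Z) (lt_min hδ₁ hδ₂)
  let ρ : ℝ × ℝ × Z → ℝ × ℝ × Z := fun x => χ x • x
  let θ : Z → Z := fun ζ => χ (0, 0, ζ) • ζ
  have hρ : ContDiff ℝ ∞ ρ := hχ.smul contDiff_id
  have hθ : ContDiff ℝ ∞ θ := by
    refine ContDiff.smul (hχ.comp ?_) contDiff_id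
    fun_prop
  have hρθ : ∀ ζ, ρ (0, 0, ζ) = (0, 0, θ ζ) := fun ζ => by simp [ρ, θ]
  have hρb : ∀ x, ‖ρ x‖ < δ₁ := fun x => (hχb x).trans_le (min_le_left _ _)
  have hθb : ∀ ζ, ‖θ ζ‖ < δ₂ := fun ζ => by
    have h1 : ‖ρ (0, 0, ζ)‖ < δ₂ := (hχb _).trans_le (min_le_right _ _)
    rw [hρθ] at h1
    exact ((norm_snd_le (0, θ ζ)).trans (norm_snd_le ((0 : ℝ), ((0 : ℝ), θ ζ)))).trans_lt h1
  have hρ0 : ρ 0 = 0 := smul_zero _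
  have hθ0 : θ 0 = 0 := smul_zero _
  have hcompE : ∀ {W : Type} [NormedAddCommGroup W] [NormedSpace ℝ W] {f : ℝ × ℝ × Z → W},
      (∀ x, ‖x‖ < δ₁ → ContDiffAt ℝ ∞ f x) → ContDiff ℝ ∞ (fun x => f (ρ x)) := fun h =>
    contDiff_iff_contDiffAt.2 fun x => (h (ρ x) (hρb x)).comp x hρ.contDiffAt
  have hcompZ : ∀ {W : Type} [NormedAddCommGroup W] [NormedSpace ℝ W] {f : Z → W},
      (∀ x, ‖x‖ < δ₂ → ContDiffAt ℝ ∞ f x) → ContDiff ℝ ∞ (fun x => f (θ x)) := fun h =>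
    contDiff_iff_contDiffAt.2 fun x => (h (θ x) (hθb x)).comp x hθ.contDiffAt
  have heig : ∀ {u : Z → ℝ × ℝ} {lam : Z → ℝ} (ζ : Z), EigenForm F₁ F₂ u lam (θ ζ) →
      EigenForm (fun x => F₁ (ρ x)) (fun x => F₂ (ρ x)) (fun ζ => u (θ ζ))
        (fun ζ => lam (θ ζ)) ζ := by
    intro u lam ζ h
    simpa only [EigenForm, hρθ] using h
  obtain ⟨f, hf, hfJ, hfX⟩ := exists_solution_of_global (F₁ := fun x => F₁ (ρ x))
    (F₂ := fun x => F₂ (ρ x)) (u₁ := fun ζ => u₁ (θ ζ)) (u₂ := fun ζ => u₂ (θ ζ))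
    (lam₁ := fun ζ => lam₁ (θ ζ)) (lam₂ := fun ζ => lam₂ (θ ζ)) (g₁ := fun x => g₁ (ρ x))
    (g₂ := fun x => g₂ (ρ x)) (c := c) (n₀ := n₀) (K := K) (m := m) (ε := ε)
    (hcompE fun x hx => (hE x hx).1) (hcompE fun x hx => (hE x hx).2.1)
    (hcompZ fun x hx => (hZ x hx).1) (hcompZ fun x hx => (hZ x hx).2.1)
    (hcompZ fun x hx => (hZ x hx).2.2.1) (hcompZ fun x hx => (hZ x hx).2.2.2.1)
    (fun ζ => (hZ _ (hθb ζ)).2.2.2.2.1) (fun ζ => heig ζ (hZ _ (hθb ζ)).2.2.2.2.2.1)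
    (fun ζ => heig ζ (hZ _ (hθb ζ)).2.2.2.2.2.2.1) (fun ζ => (hZ _ (hθb ζ)).2.2.2.2.2.2.2.1)
    (hcompE fun x hx => (hE x hx).2.2.1) (hcompE fun x hx => (hE x hx).2.2.2.1)
    (by
      have h : ∀ ζ, n₀ ≤ 1 ∨ n₀ = 2 ∧ g₁ (ρ (0, 0, ζ)) = 0 ∧ g₂ (ρ (0, 0, ζ)) = 0 := fun ζ => by
        rw [hρθ]; exact (hZ _ (hθb ζ)).2.2.2.2.2.2.2.2
      by_cases hn : n₀ ≤ 1
      · exact Or.inl hn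
      · exact Or.inr ⟨((h 0).resolve_left hn).1, fun ζ => ((h ζ).resolve_left hn).2⟩)
    (R := min δ₁ δ₂) (fun x hx => by
      have : ρ x = ρ 0 := by simp [ρ, hχ0 x hx]
      simp only [this, and_self])
    hK (by simpa only [hθ0] using hKu) hm0 (by simpa only [hθ0] using min_le_left _ _)
    (by simpa only [hθ0] using min_le_right _ _) hε.le (by simpa only [hθ0] using hεm)
    (fun x => by simpa only [hρ0] using (hE _ (hρb x)).2.2.2.2)
  refine ⟨f, hf, hfJ, ?_⟩
  filter_upwards [hfX, hχ1] with x hx hχx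
  have : ρ x = x := by simp [ρ, hχx]
  simpa only [axisField, this] using hx

end LocalSolution

section Eigenvalues

variable {Z : Type} [NormedAddCommGroup Z] [NormedSpace ℝ Z]

/-- Simple real eigenvalues of a smooth family of `2 × 2` matrices depend smoothly on
parameters. -/
lemma exists_smooth_eigenvalues {t D : Z → ℝ} (ht : ContDiff ℝ ∞ t) (hD : ContDiff ℝ ∞ D)
    {r₁ r₂ : ℝ} (hr : r₁ ≠ r₂) (hsum : r₁ + r₂ = t 0) (hmul : r₁ * r₂ = D 0) :
    ∃ lam₁ lam₂ : Z → ℝ, (∀ᶠ ζ in 𝓝 0, ContDiffAt ℝ ∞ lam₁ ζ) ∧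
      (∀ᶠ ζ in 𝓝 0, ContDiffAt ℝ ∞ lam₂ ζ) ∧ lam₁ 0 = r₁ ∧ lam₂ 0 = r₂ ∧
      ∀ᶠ ζ in 𝓝 0, lam₁ ζ + lam₂ ζ = t ζ ∧ lam₁ ζ * lam₂ ζ = D ζ := by
  have hr' : r₁ - r₂ ≠ 0 := sub_ne_zero.2 hr
  set Q : Z → ℝ := fun ζ => (t ζ ^ 2 - 4 * D ζ) / (r₁ - r₂) ^ 2 with hQ
  have hQs : ContDiff ℝ ∞ Q := by fun_prop
  have hQ0 : Q 0 = 1 := by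
    rw [hQ]
    simp only [← hsum, ← hmul]
    field_simp
    ring
  have hQpos : ∀ᶠ ζ in 𝓝 0, 0 < Q ζ :=
    hQs.continuous.continuousAt.eventually (lt_mem_nhds (by rw [hQ0]; exact one_pos))
  have hs : ∀ᶠ ζ in 𝓝 0, ContDiffAt ℝ ∞ (fun ζ => (r₁ - r₂) * √(Q ζ)) ζ :=
    hQpos.mono fun ζ hζ => contDiffAt_const.mul (hQs.contDiffAt.sqrt hζ.ne')
  refine ⟨fun ζ => (t ζ + (r₁ - r₂) * √(Q ζ)) / 2, fun ζ => (t ζ - (r₁ - r₂) * √(Q ζ)) / 2,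
    hs.mono fun ζ hζ => (ht.contDiffAt.add hζ).div_const 2,
    hs.mono fun ζ hζ => (ht.contDiffAt.sub hζ).div_const 2, ?_, ?_, ?_⟩
  · simp only [hQ0, Real.sqrt_one, ← hsum]; ring
  · simp only [hQ0, Real.sqrt_one, ← hsum]; ring
  · filter_upwards [hQpos] with ζ hζ
    refine ⟨by ring, ?_⟩
    have h1 := Real.sq_sqrt hζ.le
    have h2 : (r₁ - r₂) ^ 2 * Q ζ = t ζ ^ 2 - 4 * D ζ := by rw [hQ]; field_simp
    linear_combination (-(r₁ - r₂) ^ 2 / 4) * h1 - h2 / 4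

lemma exists_smooth_eigenForm {F₁ F₂ : ℝ × ℝ × Z → ℝ × ℝ × Z}
    (hF₁ : ∀ᶠ x in 𝓝 0, ContDiffAt ℝ ∞ F₁ x) (hF₂ : ∀ᶠ x in 𝓝 0, ContDiffAt ℝ ∞ F₂ x)
    {lam₁ lam₂ : Z → ℝ} (hlam₂ : ∀ᶠ ζ in 𝓝 0, ContDiffAt ℝ ∞ lam₂ ζ) (hne : lam₁ 0 ≠ lam₂ 0)
    (hchar : ∀ᶠ ζ in 𝓝 0,
      lam₁ ζ + lam₂ ζ = (F₁ (0, 0, ζ)).1 + (F₂ (0, 0, ζ)).2.1 ∧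
      lam₁ ζ * lam₂ ζ = (F₁ (0, 0, ζ)).1 * (F₂ (0, 0, ζ)).2.1
        - (F₂ (0, 0, ζ)).1 * (F₁ (0, 0, ζ)).2.1) :
    ∃ u : Z → ℝ × ℝ, (∀ᶠ ζ in 𝓝 0, ContDiffAt ℝ ∞ u ζ) ∧ u 0 ≠ 0 ∧
      ∀ᶠ ζ in 𝓝 0, EigenForm F₁ F₂ u lam₁ ζ := by
  have hι : ContDiff ℝ ∞ fun ζ : Z => ((0 : ℝ), (0 : ℝ), ζ) := by fun_prop
  have hι0 : Tendsto (fun ζ : Z => ((0 : ℝ), (0 : ℝ), ζ)) (𝓝 0) (𝓝 0) :=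
    hι.continuous.tendsto' 0 0 rfl
  have hs₁ : ∀ᶠ ζ in 𝓝 0, ContDiffAt ℝ ∞ (fun ζ : Z => F₁ (0, 0, ζ)) ζ :=
    (hι0.eventually hF₁).mono fun ζ h => h.comp ζ hι.contDiffAt
  have hs₂ : ∀ᶠ ζ in 𝓝 0, ContDiffAt ℝ ∞ (fun ζ : Z => F₂ (0, 0, ζ)) ζ :=
    (hι0.eventually hF₂).mono fun ζ h => h.comp ζ hι.contDiffAt
  by_cases h : ((F₁ 0).1 - lam₂ 0, (F₂ 0).1) = (0 : ℝ × ℝ)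
  · refine ⟨fun ζ => ((F₁ (0, 0, ζ)).2.1, (F₂ (0, 0, ζ)).2.1 - lam₂ ζ), ?_, fun h' => hne ?_, ?_⟩
    · filter_upwards [hs₁, hs₂, hlam₂] with ζ h1 h2 h3
      exact h1.snd.fst.prodMk (h2.snd.fst.sub h3)
    · have h1 := (Prod.ext_iff.1 h).1
      have h2 := (Prod.ext_iff.1 h').2
      have h3 := hchar.self_of_nhds.1
      simp only [Prod.fst_zero, Prod.snd_zero, Prod.mk_zero_zero] at h1 h2 h3
      linarith
    · filter_upwards [hchar] with ζ hζ
      constructor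
      · linear_combination (F₁ (0, 0, ζ)).2.1 * (-hζ.1)
      · linear_combination hζ.2 - (F₂ (0, 0, ζ)).2.1 * hζ.1
  · refine ⟨fun ζ => ((F₁ (0, 0, ζ)).1 - lam₂ ζ, (F₂ (0, 0, ζ)).1), ?_, h, ?_⟩
    · filter_upwards [hs₁, hs₂, hlam₂] with ζ h1 h2 h3
      exact (h1.fst.sub h3).prodMk h2.fst
    · filter_upwards [hchar] with ζ hζ
      constructor
      · linear_combination hζ.2 - (F₁ (0, 0, ζ)).1 * hζ.1
      · linear_combination (F₂ (0, 0, ζ)).1 * (-hζ.1)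

lemma EigenForm.det_ne_zero {F₁ F₂ : ℝ × ℝ × Z → ℝ × ℝ × Z} {u₁ u₂ : Z → ℝ × ℝ}
    {lam₁ lam₂ : Z → ℝ} {ζ : Z} (h₁ : EigenForm F₁ F₂ u₁ lam₁ ζ) (h₂ : EigenForm F₁ F₂ u₂ lam₂ ζ)
    (hne : lam₁ ζ ≠ lam₂ ζ) (hu₁ : u₁ ζ ≠ 0) (hu₂ : u₂ ζ ≠ 0) :
    (u₁ ζ).1 * (u₂ ζ).2 - (u₁ ζ).2 * (u₂ ζ).1 ≠ 0 := by
  intro hd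
  obtain ⟨s, hs⟩ : ∃ s : ℝ, u₂ ζ = s • u₁ ζ := by
    by_cases h : (u₁ ζ).1 = 0
    · have h' : (u₁ ζ).2 ≠ 0 := fun h' => hu₁ (Prod.ext h h')
      refine ⟨(u₂ ζ).2 / (u₁ ζ).2, Prod.ext ?_ ?_⟩
      · have : (u₂ ζ).1 = 0 := by
          rw [h] at hd
          simpa [h'] using hd
        simp [this, h]
      · simp [h']
    · refine ⟨(u₂ ζ).1 / (u₁ ζ).1, Prod.ext ?_ ?_⟩
      · simp [h]
      · simp only [Prod.smul_snd, smul_eq_mul]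
        field_simp
        linear_combination hd
  have e1 : (u₂ ζ).1 = s * (u₁ ζ).1 := by rw [hs]; rfl
  have e2 : (u₂ ζ).2 = s * (u₁ ζ).2 := by rw [hs]; rfl
  have k1 : (lam₁ ζ - lam₂ ζ) * (u₂ ζ).1 = 0 := by
    have a := h₁.1
    have b := h₂.1
    rw [e1, e2] at b
    rw [e1]
    linear_combination b - s * a
  have k2 : (lam₁ ζ - lam₂ ζ) * (u₂ ζ).2 = 0 := by
    have a := h₁.2
    have b := h₂.2
    rw [e1, e2] at b
    rw [e2]
    linear_combination b - s * a
  have hl := sub_ne_zero.2 hne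
  exact hu₂ (Prod.ext ((mul_eq_zero.1 k1).resolve_left hl) ((mul_eq_zero.1 k2).resolve_left hl))

end Eigenvalues

section LocalInverse

variable {E : Type} [NormedAddCommGroup E] [NormedSpace ℝ E] [FiniteDimensional ℝ E]

/-- A map that is smooth near `0` with injective derivative at `0` is a diffeomorphism between
small neighborhoods. -/
lemma exists_smooth_localInverse {Φ : E → E} (hΦ : ∀ᶠ x in 𝓝 0, ContDiffAt ℝ ∞ Φ x)
    (hinj : ∀ y, fderiv ℝ Φ 0 y = 0 → y = 0) {P : E → Prop} (hP : ∀ᶠ x in 𝓝 0, P x) :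
    ∃ (U U' : Set E) (Ψ : E → E), IsOpen U ∧ IsOpen U' ∧ 0 ∈ U ∧ Φ 0 ∈ U' ∧
      ContDiffOn ℝ ∞ Φ U ∧ ContDiffOn ℝ ∞ Ψ U' ∧ Set.MapsTo Φ U U' ∧ Set.MapsTo Ψ U' U ∧
      (∀ x ∈ U, Ψ (Φ x) = x) ∧ (∀ y ∈ U', Φ (Ψ y) = y) ∧ ∀ x ∈ U, P x := by
  have : CompleteSpace E := FiniteDimensional.complete ℝ E
  have hΦ0 := hΦ.self_of_nhds
  let L : E ≃L[ℝ] E := (LinearEquiv.ofInjectiveEndo (fderiv ℝ Φ 0 : E →ₗ[ℝ] E)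
    ((injective_iff_map_eq_zero _).2 hinj)).toContinuousLinearEquiv
  have hL : (L : E →L[ℝ] E) = fderiv ℝ Φ 0 := by ext y; rfl
  have hd0 : HasFDerivAt Φ (L : E →L[ℝ] E) 0 := by
    rw [hL]
    exact (hΦ0.differentiableAt (by simp)).hasFDerivAt
  let e := hΦ0.toOpenPartialHomeomorph Φ hd0 (by simp)
  have he : (e : E → E) = Φ := hΦ0.toOpenPartialHomeomorph_coe hd0 (by simp)
  have he0 : (0 : E) ∈ e.source := hΦ0.mem_toOpenPartialHomeomorph_source hd0 (by simp)
  have hequiv : ∀ᶠ x in 𝓝 0, fderiv ℝ Φ x ∈ Set.range ((↑) : (E ≃L[ℝ] E) → E →L[ℝ] E) :=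
    (hΦ0.fderiv_right (m := 0) (by simp)).continuousAt.eventually
      (by rw [← hL]; exact L.nhds)
  obtain ⟨W, hW, hWo, hW0⟩ := eventually_nhds_iff.1 (hΦ.and (hequiv.and hP))
  let e' := e.restrOpen W hWo
  have hs : ∀ x ∈ e'.source, x ∈ W := fun x hx => hx.2
  have he' : ∀ x, e' x = Φ x := fun x => congrFun he x
  have h0 : (0 : E) ∈ e'.source := ⟨he0, hW0⟩
  refine ⟨e'.source, e'.target, e'.symm, e'.open_source, e'.open_target, h0, ?_,
    fun x hx => (hW x (hs x hx)).1.contDiffWithinAt, fun y hy => ?_, fun x hx => ?_,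
    fun y hy => e'.map_target hy, fun x hx => ?_, fun y hy => ?_, fun x hx => (hW x (hs x hx)).2.2⟩
  · rw [← he']; exact e'.map_source h0
  · have hx := hW _ (hs _ (e'.map_target hy))
    obtain ⟨M, hM⟩ := hx.2.1
    have he'Φ : (e' : E → E) = Φ := he
    refine (e'.contDiffAt_symm (f₀' := M) hy ?_ ?_).contDiffWithinAt
    · rw [he'Φ, hM]; exact (hx.1.differentiableAt (by simp)).hasFDerivAt
    · rw [he'Φ]; exact hx.1
  · rw [← he']; exact e'.map_source hx
  · rw [← he']; exact e'.left_inv hx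
  · rw [← he']; exact e'.right_inv hy

end LocalInverse

lemma JetAt.eq_zero {E : Type} [NormedAddCommGroup E] [NormedSpace ℝ E] {n : ℕ} {f : E → ℝ}
    {x : E} (h : JetAt n f x) (hn : 0 < n) : f x = 0 := by
  simpa [h 0 hn] using (norm_iteratedFDeriv_zero (𝕜 := ℝ) (f := f) (x := x)).symm

lemma JetAt.fderiv_eq_zero {E : Type} [NormedAddCommGroup E] [NormedSpace ℝ E] {n : ℕ} {f : E → ℝ}
    {x : E} (h : JetAt n f x) (hn : 1 < n) : fderiv ℝ f x = 0 := by
  simpa [h 1 hn] using (norm_iteratedFDeriv_one (𝕜 := ℝ) f (x := x)).symm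

section Coordinates

variable {Z : Type} [NormedAddCommGroup Z] [NormedSpace ℝ Z] [FiniteDimensional ℝ Z]

lemma hasFDerivAt_axisForm {u : Z → ℝ × ℝ} {x : ℝ × ℝ × Z} (hu : DifferentiableAt ℝ u x.2.2) :
    HasFDerivAt (fun x : ℝ × ℝ × Z => axisForm Z (u x.2.2) x)
      (axisForm Z (u x.2.2) + x.1 • ((ContinuousLinearMap.fst ℝ ℝ ℝ).comp
          ((fderiv ℝ u x.2.2).comp ((ContinuousLinearMap.snd ℝ ℝ Z).comp
            (ContinuousLinearMap.snd ℝ ℝ (ℝ × Z)))))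
        + x.2.1 • ((ContinuousLinearMap.snd ℝ ℝ ℝ).comp
          ((fderiv ℝ u x.2.2).comp ((ContinuousLinearMap.snd ℝ ℝ Z).comp
            (ContinuousLinearMap.snd ℝ ℝ (ℝ × Z)))))) x := by
  have h1 : HasFDerivAt (fun x : ℝ × ℝ × Z => x.1) (ContinuousLinearMap.fst ℝ ℝ (ℝ × Z)) x :=
    hasFDerivAt_fst
  have h2 : HasFDerivAt (fun x : ℝ × ℝ × Z => x.2.1)
      ((ContinuousLinearMap.fst ℝ ℝ Z).comp (ContinuousLinearMap.snd ℝ ℝ (ℝ × Z))) x :=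
    hasFDerivAt_snd.fst
  have h3 : HasFDerivAt (fun x : ℝ × ℝ × Z => u x.2.2)
      ((fderiv ℝ u x.2.2).comp ((ContinuousLinearMap.snd ℝ ℝ Z).comp
            (ContinuousLinearMap.snd ℝ ℝ (ℝ × Z)))) x :=
    hu.hasFDerivAt.comp x hasFDerivAt_snd.snd
  simp only [axisForm_apply]
  refine ((h3.fst.mul h1).add (h3.snd.mul h2)).congr_fderiv ?_
  rw [axisForm]
  abel

/-- A linear eigenform extends to an eigenfunction of the vector field. -/
lemma exists_eigenfunction {F₁ F₂ : ℝ × ℝ × Z → ℝ × ℝ × Z}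
    (hF₁ : ∀ᶠ x in 𝓝 0, ContDiffAt ℝ ∞ F₁ x) (hF₂ : ∀ᶠ x in 𝓝 0, ContDiffAt ℝ ∞ F₂ x)
    {u₁ u₂ : Z → ℝ × ℝ} (hu₁ : ∀ᶠ ζ in 𝓝 0, ContDiffAt ℝ ∞ u₁ ζ)
    (hu₂ : ∀ᶠ ζ in 𝓝 0, ContDiffAt ℝ ∞ u₂ ζ)
    {lam₁ lam₂ : Z → ℝ} (hlam₁ : ∀ᶠ ζ in 𝓝 0, ContDiffAt ℝ ∞ lam₁ ζ)
    (hlam₂ : ∀ᶠ ζ in 𝓝 0, ContDiffAt ℝ ∞ lam₂ ζ)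
    (hdet : (u₁ 0).1 * (u₂ 0).2 - (u₁ 0).2 * (u₂ 0).1 ≠ 0)
    (hlam₁0 : lam₁ 0 ≠ 0) (hlam₂0 : lam₂ 0 ≠ 0)
    (he₁ : ∀ᶠ ζ in 𝓝 0, EigenForm F₁ F₂ u₁ lam₁ ζ) (he₂ : ∀ᶠ ζ in 𝓝 0, EigenForm F₁ F₂ u₂ lam₂ ζ)
    (hres : ∀ᶠ ζ in 𝓝 0, ∀ p q : ℕ, 2 ≤ p + q → p * lam₁ ζ + q * lam₂ ζ ≠ lam₁ ζ)
    {Θ : ℝ × ℝ × Z → Z} (hΘ : ContDiff ℝ ∞ Θ) (hΘS : ∀ ζ, Θ (0, 0, ζ) = ζ) :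
    ∃ X : ℝ × ℝ × Z → ℝ, (∀ᶠ x in 𝓝 0, ContDiffAt ℝ ∞ X x) ∧ X 0 = 0 ∧
      HasFDerivAt X (axisForm Z (u₁ 0)) 0 ∧
      ∀ᶠ x in 𝓝 0, fderiv ℝ X x (axisField F₁ F₂ x) = lam₁ (Θ x) * X x := by
  have hι0 : Tendsto (fun ζ : Z => ((0 : ℝ), (0 : ℝ), ζ)) (𝓝 0) (𝓝 0) :=
    Continuous.tendsto' (by fun_prop) 0 0 rfl
  have hπ : ContDiff ℝ ∞ fun x : ℝ × ℝ × Z => x.2.2 := by fun_prop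
  have hπ0 : Tendsto (fun x : ℝ × ℝ × Z => x.2.2) (𝓝 0) (𝓝 0) := hπ.continuous.tendsto' 0 0 rfl
  have hΘ0 : Tendsto Θ (𝓝 0) (𝓝 0) := hΘ.continuous.tendsto' 0 0 (hΘS 0)
  have hlamne : ∀ᶠ ζ in 𝓝 0, lam₁ ζ ≠ 0 := hlam₁.self_of_nhds.continuousAt.eventually_ne hlam₁0
  let k : ℝ × ℝ × Z → ℝ := fun x => (lam₁ (Θ x))⁻¹
  have hk : ∀ᶠ x in 𝓝 0, ContDiffAt ℝ ∞ k x := by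
    filter_upwards [hΘ0.eventually hlam₁, hΘ0.eventually hlamne] with x h1 h2
    exact (h1.comp x hΘ.contDiffAt).inv h2
  have hkS : ∀ ζ, k (0, 0, ζ) = (lam₁ ζ)⁻¹ := fun ζ => by simp only [k, hΘS]
  let G₁ : ℝ × ℝ × Z → ℝ × ℝ × Z := fun x => k x • F₁ x
  let G₂ : ℝ × ℝ × Z → ℝ × ℝ × Z := fun x => k x • F₂ x
  have hG₁ : ∀ᶠ x in 𝓝 0, ContDiffAt ℝ ∞ G₁ x := by
    filter_upwards [hk, hF₁] with x h1 h2 using h1.smul h2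
  have hG₂ : ∀ᶠ x in 𝓝 0, ContDiffAt ℝ ∞ G₂ x := by
    filter_upwards [hk, hF₂] with x h1 h2 using h1.smul h2
  have heig : ∀ {u : Z → ℝ × ℝ} {lam : Z → ℝ}, (∀ᶠ ζ in 𝓝 0, EigenForm F₁ F₂ u lam ζ) →
      ∀ᶠ ζ in 𝓝 0, EigenForm G₁ G₂ u (fun ζ => lam ζ / lam₁ ζ) ζ := by
    intro u lam h
    filter_upwards [h] with ζ h
    simp only [EigenForm, G₁, G₂, hkS, Prod.smul_fst, Prod.smul_snd, smul_eq_mul, div_eq_mul_inv]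
    exact ⟨by linear_combination (lam₁ ζ)⁻¹ * h.1, by linear_combination (lam₁ ζ)⁻¹ * h.2⟩
  let ℓ : ℝ × ℝ × Z → ℝ := fun x => axisForm Z (u₁ x.2.2) x
  have hu : ∀ᶠ x : ℝ × ℝ × Z in 𝓝 0, ContDiffAt ℝ ∞ u₁ x.2.2 := hπ0.eventually hu₁
  have hℓ : ∀ᶠ x in 𝓝 0, ContDiffAt ℝ ∞ ℓ x := by
    filter_upwards [hu] with x hx
    have h : ContDiffAt ℝ ∞ (fun x : ℝ × ℝ × Z => u₁ x.2.2) x := hx.comp x hπ.contDiffAt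
    simp only [ℓ, axisForm_apply]
    exact (h.fst.mul contDiffAt_fst).add (h.snd.mul (by fun_prop))
  have hℓS : ∀ ζ, ContDiffAt ℝ ∞ u₁ ζ → fderiv ℝ ℓ (0, 0, ζ) = axisForm Z (u₁ ζ) := by
    intro ζ hζ
    have := (hasFDerivAt_axisForm (u := u₁) (x := ((0 : ℝ), (0 : ℝ), ζ))
      (hζ.differentiableAt (by simp))).fderiv
    simpa using this
  have hℓ' : ∀ {G : ℝ × ℝ × Z → ℝ × ℝ × Z}, (∀ᶠ x in 𝓝 0, ContDiffAt ℝ ∞ G x) →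
      ∀ᶠ x in 𝓝 0, ContDiffAt ℝ ∞ (fun x => fderiv ℝ ℓ x (G x)) x := by
    intro G hG
    filter_upwards [hG, hℓ] with x h1 h2
    exact (h2.fderiv_right (m := ∞) (by simp)).clm_apply h1
  obtain ⟨f, hf, hfJ, hfX⟩ := exists_local_solution hG₁ hG₂ hu₁ hu₂
    (lam₁ := fun ζ => lam₁ ζ / lam₁ ζ) (lam₂ := fun ζ => lam₂ ζ / lam₁ ζ)
    (by filter_upwards [hlam₁, hlamne] with ζ h1 h2 using h1.div h1 h2)
    (by filter_upwards [hlam₁, hlam₂, hlamne] with ζ h1 h2 h3 using h2.div h1 h3) hdet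
    (div_ne_zero hlam₁0 hlam₁0) (div_ne_zero hlam₂0 hlam₁0) (heig he₁) (heig he₂) (c := 1)
    (n₀ := 2)
    (by
      filter_upwards [hres, hlamne] with ζ h1 h2 p q hpq h
      refine h1 p q hpq ?_
      field_simp at h
      linear_combination h)
    (g₁ := fun x => (u₁ x.2.2).1 - fderiv ℝ ℓ x (G₁ x))
    (g₂ := fun x => (u₁ x.2.2).2 - fderiv ℝ ℓ x (G₂ x))
    (by
      filter_upwards [hu, hℓ' hG₁] with x h1 h2
      exact (h1.comp x hπ.contDiffAt).fst.sub h2)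
    (by
      filter_upwards [hu, hℓ' hG₂] with x h1 h2
      exact (h1.comp x hπ.contDiffAt).snd.sub h2)
    (Or.inr ⟨rfl, by
      filter_upwards [hu₁, heig he₁, hlamne] with ζ h1 h2 h3
      rw [hℓS ζ h1, axisForm_apply, axisForm_apply, h2.1, h2.2]
      simp [h3]⟩)
  have hf0 : JetAt 2 f 0 := hfJ 0
  refine ⟨fun x => ℓ x + f x, ?_, ?_, ?_, ?_⟩
  · filter_upwards [hℓ] with x hx using hx.add hf.contDiffAt
  · simp [hf0.eq_zero, ℓ]
  · have h1 := (hℓ.self_of_nhds.differentiableAt (by simp)).hasFDerivAt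
    have h2 := (hf.differentiable (by simp) 0).hasFDerivAt
    rw [hf0.fderiv_eq_zero (by norm_num)] at h2
    have h3 := hℓS 0 hu₁.self_of_nhds
    rw [Prod.mk_zero_zero, Prod.mk_zero_zero] at h3
    rw [h3] at h1
    have h4 := h1.add h2
    rw [add_zero] at h4
    exact h4
  · filter_upwards [hfX, hℓ, hΘ0.eventually hlamne] with x hx h1 h2
    rw [fderiv_fun_add (h1.differentiableAt (by simp)) (hf.differentiable (by simp) x)]
    have hG : axisField G₁ G₂ x = k x • axisField F₁ F₂ x := by
      simp only [axisField, G₁, G₂, smul_add, smul_comm (k x)]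
    have hℓG : fderiv ℝ ℓ x (k x • axisField F₁ F₂ x)
        = x.1 * fderiv ℝ ℓ x (G₁ x) + x.2.1 * fderiv ℝ ℓ x (G₂ x) := by
      rw [← hG]
      simp [axisField]
    have hℓx : ℓ x = (u₁ x.2.2).1 * x.1 + (u₁ x.2.2).2 * x.2.1 := axisForm_apply _ _
    rw [hG] at hx
    have hsum : k x * (fderiv ℝ ℓ x (axisField F₁ F₂ x) + fderiv ℝ f x (axisField F₁ F₂ x))
        = ℓ x + f x := by
      rw [map_smul, smul_eq_mul] at hx hℓG
      linear_combination hx + hℓG - hℓx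
    rw [add_apply, ← hsum, ← mul_assoc, mul_inv_cancel₀ h2, one_mul]

end Coordinates

section NormalForm

variable {l : ℕ}

/-- The transversal parameters extend to first integrals of the vector field. -/
lemma exists_first_integrals {F₁ F₂ : ℝ × ℝ × (Fin l → ℝ) → ℝ × ℝ × (Fin l → ℝ)}
    (hF₁ : ∀ᶠ x in 𝓝 0, ContDiffAt ℝ ∞ F₁ x) (hF₂ : ∀ᶠ x in 𝓝 0, ContDiffAt ℝ ∞ F₂ x)
    {u₁ u₂ : (Fin l → ℝ) → ℝ × ℝ} (hu₁ : ∀ᶠ ζ in 𝓝 0, ContDiffAt ℝ ∞ u₁ ζ)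
    (hu₂ : ∀ᶠ ζ in 𝓝 0, ContDiffAt ℝ ∞ u₂ ζ)
    {lam₁ lam₂ : (Fin l → ℝ) → ℝ} (hlam₁ : ∀ᶠ ζ in 𝓝 0, ContDiffAt ℝ ∞ lam₁ ζ)
    (hlam₂ : ∀ᶠ ζ in 𝓝 0, ContDiffAt ℝ ∞ lam₂ ζ)
    (hdet : (u₁ 0).1 * (u₂ 0).2 - (u₁ 0).2 * (u₂ 0).1 ≠ 0)
    (hlam₁0 : lam₁ 0 ≠ 0) (hlam₂0 : lam₂ 0 ≠ 0)
    (he₁ : ∀ᶠ ζ in 𝓝 0, EigenForm F₁ F₂ u₁ lam₁ ζ) (he₂ : ∀ᶠ ζ in 𝓝 0, EigenForm F₁ F₂ u₂ lam₂ ζ)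
    (hres : ∀ᶠ ζ in 𝓝 0, ∀ p q : ℕ, 1 ≤ p + q → p * lam₁ ζ + q * lam₂ ζ ≠ 0) :
    ∃ Θ : ℝ × ℝ × (Fin l → ℝ) → (Fin l → ℝ), ContDiff ℝ ∞ Θ ∧ (∀ ζ, Θ (0, 0, ζ) = ζ) ∧
      ∀ᶠ x in 𝓝 0, fderiv ℝ Θ x (axisField F₁ F₂ x) = 0 := by
  have key : ∀ i : Fin l, ∃ f : ℝ × ℝ × (Fin l → ℝ) → ℝ, ContDiff ℝ ∞ f ∧
      (∀ ζ, f (0, 0, ζ) = 0) ∧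
      ∀ᶠ x in 𝓝 0, fderiv ℝ f x (axisField F₁ F₂ x) = -(axisField F₁ F₂ x).2.2 i := by
    intro i
    have hcomp : ∀ {F : ℝ × ℝ × (Fin l → ℝ) → ℝ × ℝ × (Fin l → ℝ)},
        (∀ᶠ x in 𝓝 0, ContDiffAt ℝ ∞ F x) →
        ∀ᶠ x in 𝓝 0, ContDiffAt ℝ ∞ (fun x => -(F x).2.2 i) x := fun h =>
      h.mono fun x hx => ((contDiffAt_pi.1 hx.snd.snd) i).neg
    obtain ⟨f, hf, hfJ, hfX⟩ := exists_local_solution hF₁ hF₂ hu₁ hu₂ hlam₁ hlam₂ hdet hlam₁0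
      hlam₂0 he₁ he₂ hres (hcomp hF₁) (hcomp hF₂) (Or.inl le_rfl)
    refine ⟨f, hf, fun ζ => (hfJ (0, 0, ζ)).eq_zero one_pos, ?_⟩
    filter_upwards [hfX] with x hx
    rw [zero_mul, sub_zero] at hx
    rw [hx]
    simp only [axisField, Prod.snd_add, Prod.smul_snd, Pi.add_apply, Pi.smul_apply, smul_eq_mul]
    ring
  choose f hf hfS hfX using key
  refine ⟨fun x i => x.2.2 i + f i x, contDiff_pi.2 fun i => ?_, fun ζ => ?_, ?_⟩
  · exact ContDiff.add (by fun_prop) (hf i)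
  · ext i; simp [hfS]
  · filter_upwards [eventually_all.2 hfX] with x hx
    have hd : ∀ i, HasFDerivAt (fun x : ℝ × ℝ × (Fin l → ℝ) => x.2.2 i + f i x)
        ((ContinuousLinearMap.proj i).comp ((ContinuousLinearMap.snd ℝ ℝ (Fin l → ℝ)).comp
          (ContinuousLinearMap.snd ℝ ℝ (ℝ × (Fin l → ℝ)))) + fderiv ℝ (f i) x) x := fun i =>
      HasFDerivAt.add (((ContinuousLinearMap.proj (R := ℝ) (φ := fun _ : Fin l => ℝ) i).comp
        ((ContinuousLinearMap.snd ℝ ℝ (Fin l → ℝ)).comp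
          (ContinuousLinearMap.snd ℝ ℝ (ℝ × (Fin l → ℝ))))).hasFDerivAt)
        ((hf i).differentiable (by simp) x).hasFDerivAt
    rw [(hasFDerivAt_pi.2 hd).fderiv]
    ext i
    simp [hx i]

end NormalForm

section Conjugation

variable {l : ℕ}

/-- Coordinates in which the vector field becomes linear along each transversal leaf. -/
lemma exists_linearization {F₁ F₂ : ℝ × ℝ × (Fin l → ℝ) → ℝ × ℝ × (Fin l → ℝ)}
    (hF₁ : ∀ᶠ x in 𝓝 0, ContDiffAt ℝ ∞ F₁ x) (hF₂ : ∀ᶠ x in 𝓝 0, ContDiffAt ℝ ∞ F₂ x)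
    {u₁ u₂ : (Fin l → ℝ) → ℝ × ℝ} (hu₁ : ∀ᶠ ζ in 𝓝 0, ContDiffAt ℝ ∞ u₁ ζ)
    (hu₂ : ∀ᶠ ζ in 𝓝 0, ContDiffAt ℝ ∞ u₂ ζ)
    {lam₁ lam₂ : (Fin l → ℝ) → ℝ} (hlam₁ : ∀ᶠ ζ in 𝓝 0, ContDiffAt ℝ ∞ lam₁ ζ)
    (hlam₂ : ∀ᶠ ζ in 𝓝 0, ContDiffAt ℝ ∞ lam₂ ζ)
    (hdet : (u₁ 0).1 * (u₂ 0).2 - (u₁ 0).2 * (u₂ 0).1 ≠ 0)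
    (hlam₁0 : lam₁ 0 ≠ 0) (hlam₂0 : lam₂ 0 ≠ 0)
    (he₁ : ∀ᶠ ζ in 𝓝 0, EigenForm F₁ F₂ u₁ lam₁ ζ) (he₂ : ∀ᶠ ζ in 𝓝 0, EigenForm F₁ F₂ u₂ lam₂ ζ)
    (hres₁ : ∀ᶠ ζ in 𝓝 0, ∀ p q : ℕ, 1 ≤ p + q → p * lam₁ ζ + q * lam₂ ζ ≠ 0)
    (hres₂ : ∀ᶠ ζ in 𝓝 0, ∀ p q : ℕ, 2 ≤ p + q →
      p * lam₁ ζ + q * lam₂ ζ ≠ lam₁ ζ ∧ p * lam₁ ζ + q * lam₂ ζ ≠ lam₂ ζ) :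
    ∃ Φ : ℝ × ℝ × (Fin l → ℝ) → ℝ × ℝ × (Fin l → ℝ), (∀ᶠ x in 𝓝 0, ContDiffAt ℝ ∞ Φ x) ∧
      Φ 0 = 0 ∧ (∀ y, fderiv ℝ Φ 0 y = 0 → y = 0) ∧
      ∀ᶠ x in 𝓝 0, fderiv ℝ Φ x (axisField F₁ F₂ x)
        = (lam₁ (Φ x).2.2 * (Φ x).1, lam₂ (Φ x).2.2 * (Φ x).2.1, 0) := by
  obtain ⟨Θ, hΘ, hΘS, hΘF⟩ := exists_first_integrals hF₁ hF₂ hu₁ hu₂ hlam₁ hlam₂ hdet hlam₁0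
    hlam₂0 he₁ he₂ hres₁
  obtain ⟨X, hX, hX0, hX', hXF⟩ := exists_eigenfunction hF₁ hF₂ hu₁ hu₂ hlam₁ hlam₂ hdet hlam₁0
    hlam₂0 he₁ he₂ (hres₂.mono fun ζ h p q hpq => (h p q hpq).1) hΘ hΘS
  obtain ⟨Y, hY, hY0, hY', hYF⟩ := exists_eigenfunction hF₁ hF₂ hu₂ hu₁ hlam₂ hlam₁
    (fun h => hdet (by linear_combination -h)) hlam₂0 hlam₁0 he₂ he₁
    (hres₂.mono fun ζ h p q hpq => by
      rw [add_comm (_ * _)]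
      exact (h q p (by omega)).2) hΘ hΘS
  have hΘ' : ∀ x, HasFDerivAt Θ (fderiv ℝ Θ x) x := fun x =>
    (hΘ.differentiable (by simp) x).hasFDerivAt
  refine ⟨fun x => (X x, Y x, Θ x), ?_, ?_, fun y hy => ?_, ?_⟩
  · filter_upwards [hX, hY] with x h1 h2 using h1.prodMk (h2.prodMk hΘ.contDiffAt)
  · have : Θ 0 = 0 := hΘS 0
    simp [hX0, hY0, this]
  · rw [(hX'.prodMk (hY'.prodMk (hΘ' 0))).fderiv] at hy
    simp only [ContinuousLinearMap.prod_apply, Prod.mk_eq_zero, axisForm_apply] at hy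
    obtain ⟨h1, h2, h3⟩ := hy
    have hy1 : y.1 = 0 := by
      refine (mul_eq_zero.1 (?_ : _ * y.1 = 0)).resolve_left hdet
      linear_combination (u₂ 0).2 * h1 - (u₁ 0).2 * h2
    have hy2 : y.2.1 = 0 := by
      refine (mul_eq_zero.1 (?_ : _ * y.2.1 = 0)).resolve_left hdet
      linear_combination (u₁ 0).1 * h2 - (u₂ 0).1 * h1
    have hι : HasFDerivAt (fun ζ : Fin l → ℝ => ((0 : ℝ), (0 : ℝ), ζ))
        ((0 : (Fin l → ℝ) →L[ℝ] ℝ).prod ((0 : (Fin l → ℝ) →L[ℝ] ℝ).prod (.id ℝ _))) 0 :=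
      (hasFDerivAt_const _ _).prodMk ((hasFDerivAt_const _ _).prodMk (hasFDerivAt_id _))
    have hid : HasFDerivAt (fun ζ : Fin l → ℝ => Θ (0, 0, ζ)) (.id ℝ _) 0 := by
      simp only [hΘS]
      exact hasFDerivAt_id _
    have h4 := congrArg (fun L => L y.2.2) ((HasFDerivAt.comp (f := fun ζ : Fin l → ℝ =>
      ((0 : ℝ), (0 : ℝ), ζ)) (g := Θ) 0 (hΘ' (0, 0, 0)) hι).unique hid)
    have hy' : y = (0, 0, y.2.2) := Prod.ext hy1 (Prod.ext hy2 rfl)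
    have hy3 : y.2.2 = 0 := by
      rw [hy'] at h3
      exact h4.symm.trans h3
    rw [hy', hy3]
    rfl
  · filter_upwards [hX, hY, hXF, hYF, hΘF] with x h1 h2 h3 h4 h5
    rw [((h1.differentiableAt (by simp)).hasFDerivAt.prodMk
      ((h2.differentiableAt (by simp)).hasFDerivAt.prodMk (hΘ' x))).fderiv]
    simp [h3, h4, h5]

end Conjugation

section Hadamard

variable {Z : Type} [NormedAddCommGroup Z] [NormedSpace ℝ Z] [FiniteDimensional ℝ Z]

/-- Local form of Hadamard's lemma. -/
lemma exists_eventually_eq_mul_add_mul {U : Set (ℝ × ℝ × Z)} (hU : IsOpen U) (h0 : 0 ∈ U)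
    {f : ℝ × ℝ × Z → ℝ} (hf : ContDiffOn ℝ ∞ f U) (hfS : ∀ ζ : Z, (0, 0, ζ) ∈ U → f (0, 0, ζ) = 0) :
    ∃ g h : ℝ × ℝ × Z → ℝ, ContDiff ℝ ∞ g ∧ ContDiff ℝ ∞ h ∧
      ∀ᶠ x in 𝓝 0, f x = g x * x.1 + h x * x.2.1 := by
  obtain ⟨ψ, hψ, -, hψs, hψ1, -⟩ := exists_cutoff (hU.mem_nhds h0)
  have hs : ContDiff ℝ ∞ fun x => ψ x * f x := contDiff_iff_contDiffAt.2 fun x => by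
    by_cases hx : x ∈ tsupport ψ
    · exact hψ.contDiffAt.mul (hf.contDiffAt (hU.mem_nhds (hψs hx)))
    · refine (contDiffAt_const (c := (0 : ℝ))).congr_of_eventuallyEq ?_
      filter_upwards [(isClosed_tsupport ψ).isOpen_compl.mem_nhds hx] with y hy
      rw [image_eq_zero_of_notMem_tsupport hy, zero_mul]
  obtain ⟨g, h, hg, hh, hgh⟩ := exists_eq_mul_add_mul hs fun ζ => by
    by_cases hζ : ((0 : ℝ), (0 : ℝ), ζ) ∈ U
    · rw [hfS ζ hζ, mul_zero]
    · rw [image_eq_zero_of_notMem_tsupport fun h => hζ (hψs h), zero_mul]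
  refine ⟨g, h, hg, hh, ?_⟩
  filter_upwards [hψ1] with x hx
  rw [← hgh, hx, one_mul]

lemma fderiv_mul_add_mul {f g h : ℝ × ℝ × Z → ℝ} (hg : ContDiff ℝ ∞ g) (hh : ContDiff ℝ ∞ h)
    {ζ : Z} (hf : ∀ᶠ x in 𝓝 (0, 0, ζ), f x = g x * x.1 + h x * x.2.1) (y : ℝ × ℝ × Z) :
    fderiv ℝ f (0, 0, ζ) y = g (0, 0, ζ) * y.1 + h (0, 0, ζ) * y.2.1 := by
  have h1 : HasFDerivAt (fun x : ℝ × ℝ × Z => x.1) (ContinuousLinearMap.fst ℝ ℝ (ℝ × Z))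
      (0, 0, ζ) := hasFDerivAt_fst
  have h2 : HasFDerivAt (fun x : ℝ × ℝ × Z => x.2.1)
      ((ContinuousLinearMap.fst ℝ ℝ Z).comp (ContinuousLinearMap.snd ℝ ℝ (ℝ × Z))) (0, 0, ζ) :=
    hasFDerivAt_snd.fst
  have h3 := (((hg.differentiable (by simp) _).hasFDerivAt.mul h1).add
    ((hh.differentiable (by simp) _).hasFDerivAt.mul h2)).congr_of_eventuallyEq hf
  rw [h3.fderiv]
  simp

end Hadamard

lemma eq_and_eq_or_of_add_eq_of_mul_eq {a b r s : ℂ} (hadd : a + b = r + s)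
    (hmul : a * b = r * s) : a = r ∧ b = s ∨ a = s ∧ b = r := by
  have h : (a - r) * (a - s) = 0 := by linear_combination a * hadd - hmul
  rcases mul_eq_zero.1 h with h | h
  · exact Or.inl ⟨sub_eq_zero.1 h, by linear_combination hadd - h⟩
  · exact Or.inr ⟨sub_eq_zero.1 h, by linear_combination hadd - h⟩

end OrbitalLinearization

open OrbitalLinearization

/-- If `λ₁(0), λ₂(0)` are real, nonzero and distinct and there are no resonances of first
or second type of any order for `ζ` near `0`, the germ of `V` at `0` is `C^∞`-smoothly
orbitally equivalent to `ξ̇ = μ(ζ)·ξ, η̇ = η, ζ̇ᵢ = 0` with `μ(0) = λ₁(0)/λ₂(0)`. -/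
theorem stmt9 (l : ℕ)
    (U₀ : Set (ℝ × ℝ × (Fin l → ℝ))) (hU₀ : IsOpen U₀) (h0 : (0 : ℝ × ℝ × (Fin l → ℝ)) ∈ U₀)
    (v w : (ℝ × ℝ × (Fin l → ℝ)) → ℝ) (α β : Fin l → (ℝ × ℝ × (Fin l → ℝ)) → ℝ)
    (hv : ContDiffOn ℝ (⊤ : ℕ∞) v U₀) (hw : ContDiffOn ℝ (⊤ : ℕ∞) w U₀)
    (hα : ∀ i, ContDiffOn ℝ (⊤ : ℕ∞) (α i) U₀) (hβ : ∀ i, ContDiffOn ℝ (⊤ : ℕ∞) (β i) U₀)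
    (hvanish : ∀ ζ : Fin l → ℝ, ((0 : ℝ), (0 : ℝ), ζ) ∈ U₀ →
      v ((0 : ℝ), (0 : ℝ), ζ) = 0 ∧ w ((0 : ℝ), (0 : ℝ), ζ) = 0)
    (V : (ℝ × ℝ × (Fin l → ℝ)) → (ℝ × ℝ × (Fin l → ℝ)))
    (hV : V = fun x => (v x, w x, fun i => α i x * v x + β i x * w x))
    (Z : Set (Fin l → ℝ)) (hZ : IsOpen Z) (hZ0 : (0 : Fin l → ℝ) ∈ Z)
    (lam₁ lam₂ : (Fin l → ℝ) → ℂ)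
    (hlam : ∀ ζ ∈ Z,
      lam₁ ζ + lam₂ ζ =
        ((fderiv ℝ v ((0 : ℝ), (0 : ℝ), ζ) ((1 : ℝ), (0 : ℝ), (0 : Fin l → ℝ)) +
          fderiv ℝ w ((0 : ℝ), (0 : ℝ), ζ) ((0 : ℝ), (1 : ℝ), (0 : Fin l → ℝ)) : ℝ) : ℂ) ∧
      lam₁ ζ * lam₂ ζ =
        ((fderiv ℝ v ((0 : ℝ), (0 : ℝ), ζ) ((1 : ℝ), (0 : ℝ), (0 : Fin l → ℝ)) *
          fderiv ℝ w ((0 : ℝ), (0 : ℝ), ζ) ((0 : ℝ), (1 : ℝ), (0 : Fin l → ℝ)) -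
          fderiv ℝ v ((0 : ℝ), (0 : ℝ), ζ) ((0 : ℝ), (1 : ℝ), (0 : Fin l → ℝ)) *
          fderiv ℝ w ((0 : ℝ), (0 : ℝ), ζ) ((1 : ℝ), (0 : ℝ), (0 : Fin l → ℝ)) : ℝ) : ℂ))
    -- λ₁(0), λ₂(0) real, nonzero, distinct
    (him1 : (lam₁ 0).im = 0) (him2 : (lam₂ 0).im = 0)
    (hne1 : lam₁ 0 ≠ 0) (hne2 : lam₂ 0 ≠ 0) (hne12 : lam₁ 0 ≠ lam₂ 0)
    -- no resonances of first type of any order near 0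
    (hres1 : ∀ ζ ∈ Z, ∀ p₁ p₂ : ℕ, 1 ≤ p₁ + p₂ →
      (p₁ : ℂ) * lam₁ ζ + (p₂ : ℂ) * lam₂ ζ ≠ 0)
    -- no resonances of second type of any order near 0
    (hres2 : ∀ ζ ∈ Z, ∀ p₁ p₂ : ℕ, 2 ≤ p₁ + p₂ →
      (p₁ : ℂ) * lam₁ ζ + (p₂ : ℂ) * lam₂ ζ ≠ lam₁ ζ ∧
      (p₁ : ℂ) * lam₁ ζ + (p₂ : ℂ) * lam₂ ζ ≠ lam₂ ζ) :
    ∃ μ : (Fin l → ℝ) → ℝ,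
      (∃ Z' : Set (Fin l → ℝ), IsOpen Z' ∧ (0 : Fin l → ℝ) ∈ Z' ∧
        ContDiffOn ℝ (⊤ : ℕ∞) μ Z') ∧
      μ 0 = (lam₁ 0).re / (lam₂ 0).re ∧
      OrbEquiv Set.univ V
        (fun y : ℝ × ℝ × (Fin l → ℝ) => (μ y.2.2 * y.1, y.2.1, (0 : Fin l → ℝ))) 0 0 := by
  have hres : ∀ ζ ∈ Z, ∀ r₁ r₂ : ℝ, lam₁ ζ + lam₂ ζ = (r₁ : ℂ) + r₂ →
      lam₁ ζ * lam₂ ζ = (r₁ : ℂ) * r₂ →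
      (∀ p q : ℕ, 1 ≤ p + q → p * r₁ + q * r₂ ≠ 0) ∧
      ∀ p q : ℕ, 2 ≤ p + q → p * r₁ + q * r₂ ≠ r₁ ∧ p * r₁ + q * r₂ ≠ r₂ := by
    intro ζ hζ r₁ r₂ hadd hmul
    have cast : ∀ {p q : ℕ} {r : ℝ}, p * r₁ + q * r₂ = r → (p : ℂ) * r₁ + q * r₂ = r := by
      intro p q r h
      exact_mod_cast h
    rcases eq_and_eq_or_of_add_eq_of_mul_eq hadd hmul with ⟨e₁, e₂⟩ | ⟨e₁, e₂⟩
    · refine ⟨fun p q hpq h => hres1 ζ hζ p q hpq ?_, fun p q hpq =>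
        ⟨fun h => (hres2 ζ hζ p q hpq).1 ?_, fun h => (hres2 ζ hζ p q hpq).2 ?_⟩⟩
      all_goals simpa only [e₁, e₂, Complex.ofReal_zero] using cast h
    · refine ⟨fun p q hpq h => hres1 ζ hζ q p (by omega) ?_, fun p q hpq =>
        ⟨fun h => (hres2 ζ hζ q p (by omega)).2 ?_, fun h => (hres2 ζ hζ q p (by omega)).1 ?_⟩⟩
      all_goals
        rw [add_comm]
        simpa only [e₁, e₂, Complex.ofReal_zero] using cast h
  obtain ⟨a, b, ha, hb, hab⟩ := exists_eventually_eq_mul_add_mul hU₀ h0 hv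
    fun ζ hζ => (hvanish ζ hζ).1
  obtain ⟨e, d, he, hd, hed⟩ := exists_eventually_eq_mul_add_mul hU₀ h0 hw
    fun ζ hζ => (hvanish ζ hζ).2
  have hU₀' : ∀ᶠ x in 𝓝 (0 : ℝ × ℝ × (Fin l → ℝ)), x ∈ U₀ := hU₀.mem_nhds h0
  have hF : ∀ {s t : ℝ × ℝ × (Fin l → ℝ) → ℝ}, ContDiff ℝ (⊤ : ℕ∞) s → ContDiff ℝ (⊤ : ℕ∞) t →
      ∀ᶠ x in 𝓝 0, ContDiffAt ℝ (⊤ : ℕ∞)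
        (fun x => (s x, t x, fun i => α i x * s x + β i x * t x)) x := by
    intro s t hs ht
    filter_upwards [hU₀'] with x hx
    have hx' := hU₀.mem_nhds hx
    exact hs.contDiffAt.prodMk (ht.contDiffAt.prodMk (contDiffAt_pi.2 fun i =>
      (((hα i).contDiffAt hx').mul hs.contDiffAt).add (((hβ i).contDiffAt hx').mul ht.contDiffAt)))
  set F₁ : ℝ × ℝ × (Fin l → ℝ) → ℝ × ℝ × (Fin l → ℝ) :=
    fun x => (a x, e x, fun i => α i x * a x + β i x * e x) with hF₁def
  set F₂ : ℝ × ℝ × (Fin l → ℝ) → ℝ × ℝ × (Fin l → ℝ) :=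
    fun x => (b x, d x, fun i => α i x * b x + β i x * d x) with hF₂def
  have hF₁ : ∀ᶠ x in 𝓝 0, ContDiffAt ℝ (⊤ : ℕ∞) F₁ x := hF ha he
  have hF₂ : ∀ᶠ x in 𝓝 0, ContDiffAt ℝ (⊤ : ℕ∞) F₂ x := hF hb hd
  have hVF : ∀ᶠ x in 𝓝 0, V x = axisField F₁ F₂ x := by
    filter_upwards [hab, hed] with x h1 h2
    simp only [hV, axisField, hF₁def, hF₂def, h1, h2]
    refine Prod.ext ?_ (Prod.ext ?_ (funext fun i => ?_)) <;> simp <;> ring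
  have hι : ContDiff ℝ (⊤ : ℕ∞) fun ζ : Fin l → ℝ => ((0 : ℝ), (0 : ℝ), ζ) := by fun_prop
  have hι0 : Tendsto (fun ζ : Fin l → ℝ => ((0 : ℝ), (0 : ℝ), ζ)) (𝓝 0) (𝓝 0) :=
    hι.continuous.tendsto' 0 0 rfl
  have hlam' : ∀ᶠ ζ : Fin l → ℝ in 𝓝 0, ζ ∈ Z ∧
      lam₁ ζ + lam₂ ζ = ((a (0, 0, ζ) + d (0, 0, ζ) : ℝ) : ℂ) ∧
      lam₁ ζ * lam₂ ζ = ((a (0, 0, ζ) * d (0, 0, ζ) - b (0, 0, ζ) * e (0, 0, ζ) : ℝ) : ℂ) := by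
    filter_upwards [hZ.mem_nhds hZ0, hι0.eventually (eventually_eventually_nhds.2 hab),
      hι0.eventually (eventually_eventually_nhds.2 hed)] with ζ hζ h1 h2
    have h3 := hlam ζ hζ
    simp only [fderiv_mul_add_mul ha hb h1, fderiv_mul_add_mul he hd h2, mul_one, mul_zero,
      add_zero, zero_add] at h3
    exact ⟨hζ, h3⟩
  have hre₁ : lam₁ 0 = ((lam₁ 0).re : ℂ) := Complex.ext rfl him1
  have hre₂ : lam₂ 0 = ((lam₂ 0).re : ℂ) := Complex.ext rfl him2
  obtain ⟨-, hadd0, hmul0⟩ := hlam'.self_of_nhds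
  rw [hre₁, hre₂] at hadd0 hmul0
  obtain ⟨r₁, r₂, hr₁, hr₂, hr₁0, hr₂0, hchar⟩ := exists_smooth_eigenvalues
    (t := fun ζ => a (0, 0, ζ) + d (0, 0, ζ))
    (D := fun ζ => a (0, 0, ζ) * d (0, 0, ζ) - b (0, 0, ζ) * e (0, 0, ζ))
    ((ha.comp hι).add (hd.comp hι))
    (((ha.comp hι).mul (hd.comp hι)).sub ((hb.comp hι).mul (he.comp hι)))
    (r₁ := (lam₁ 0).re) (r₂ := (lam₂ 0).re)
    (fun h => hne12 (by rw [hre₁, hre₂, h])) (by exact_mod_cast hadd0) (by exact_mod_cast hmul0)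
  have hr₁ne : r₁ 0 ≠ 0 := fun h => hne1 (by rw [hre₁, ← hr₁0, h, Complex.ofReal_zero])
  have hr₂ne : r₂ 0 ≠ 0 := fun h => hne2 (by rw [hre₂, ← hr₂0, h, Complex.ofReal_zero])
  have hrne : r₁ 0 ≠ r₂ 0 := fun h => hne12 (by rw [hre₁, hre₂, ← hr₁0, ← hr₂0, h])
  have hres' : ∀ᶠ ζ in 𝓝 0, (∀ p q : ℕ, 1 ≤ p + q → p * r₁ ζ + q * r₂ ζ ≠ 0) ∧
      ∀ p q : ℕ, 2 ≤ p + q → p * r₁ ζ + q * r₂ ζ ≠ r₁ ζ ∧ p * r₁ ζ + q * r₂ ζ ≠ r₂ ζ := by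
    filter_upwards [hlam', hchar] with ζ h1 h2
    refine hres ζ h1.1 _ _ ?_ ?_
    · rw [h1.2.1, ← h2.1, Complex.ofReal_add]
    · rw [h1.2.2, ← h2.2, Complex.ofReal_mul]
  obtain ⟨u₁, hu₁, hu₁0, he₁⟩ := exists_smooth_eigenForm hF₁ hF₂ hr₂ hrne hchar
  obtain ⟨u₂, hu₂, hu₂0, he₂⟩ := exists_smooth_eigenForm hF₁ hF₂ hr₁ hrne.symm
    (hchar.mono fun ζ h => ⟨(add_comm _ _).trans h.1, (mul_comm _ _).trans h.2⟩)
  obtain ⟨Φ, hΦ, hΦ0, hΦinj, hΦF⟩ := exists_linearization hF₁ hF₂ hu₁ hu₂ hr₁ hr₂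
    (he₁.self_of_nhds.det_ne_zero he₂.self_of_nhds hrne hu₁0 hu₂0) hr₁ne hr₂ne he₁ he₂
    (hres'.mono fun _ h => h.1) (hres'.mono fun _ h => h.2)
  have hr₂ne' : ∀ᶠ ζ in 𝓝 0, r₂ ζ ≠ 0 := hr₂.self_of_nhds.continuousAt.eventually_ne hr₂ne
  have hΦ22 : Tendsto (fun x => (Φ x).2.2) (𝓝 0) (𝓝 0) := by
    have := hΦ.self_of_nhds.continuousAt.snd.snd.tendsto
    rwa [hΦ0] at this
  have hprop : ∀ᶠ x in 𝓝 0, ContDiffAt ℝ (⊤ : ℕ∞) (fun x => r₂ (Φ x).2.2) x ∧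
      r₂ (Φ x).2.2 ≠ 0 ∧ fderiv ℝ Φ x (V x)
        = r₂ (Φ x).2.2 • (r₁ (Φ x).2.2 / r₂ (Φ x).2.2 * (Φ x).1, (Φ x).2.1, (0 : Fin l → ℝ)) := by
    filter_upwards [hΦ, hΦ22.eventually hr₂, hΦ22.eventually hr₂ne', hΦF, hVF] with x h1 h2 h3 h4 h5
    refine ⟨h2.comp x h1.snd.snd, h3, ?_⟩
    rw [h5, h4, Prod.smul_mk, Prod.smul_mk, smul_zero, smul_eq_mul, smul_eq_mul, ← mul_assoc,
      mul_div_cancel₀ _ h3]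
  obtain ⟨U, U', Ψ, hU, hU', h0U, h0U', hΦU, hΨU', hmaps, hmaps', hleft, hright, hP⟩ :=
    exists_smooth_localInverse hΦ hΦinj hprop
  obtain ⟨Z', hZ', hZ'o, hZ'0⟩ := eventually_nhds_iff.1 (hr₁.and (hr₂.and hr₂ne'))
  refine ⟨fun ζ => r₁ ζ / r₂ ζ, ⟨Z', hZ'o, hZ'0, fun ζ hζ =>
    ((hZ' ζ hζ).1.div (hZ' ζ hζ).2.1 (hZ' ζ hζ).2.2).contDiffWithinAt⟩, by simp only [hr₁0, hr₂0],
    U, U', Φ, Ψ, fun x => r₂ (Φ x).2.2, hU, hU', h0U, hΦ0 ▸ h0U', Set.subset_univ _, hΦU, hΨU',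
    hΦ0, hmaps, hmaps', hleft, hright, fun x hx => (hP x hx).1.contDiffWithinAt,
    fun x hx => (hP x hx).2.1, fun x hx => (hP x hx).2.2⟩
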